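/- arXiv:1110.0174 — 6 statements merged into one kernel-verified Lean document; each statement's English description precedes it below -/
import Mathlib

section
/- Let Γ be a finite simplicial graph and let G be a limit group over 𝔾(Γ). Then the abelian subgroups of G are free abelian of uniformly bounded rank: there exists N ∈ ℕ such that every abelian subgroup A of G is isomorphic, as a group, to a free abelian group ℤ^k for some k ≤ N. -/
/-- The set of commutation relators of a simplicial graph: one commutator
`[u,v]` for each pair of adjacent vertices. -/
def raagRels {V : Type*} (Γ : SimpleGraph V) : Set (FreeGroup V) :=
  {r | ∃ u v : V, Γ.Adj u v ∧
    r = FreeGroup.of u * FreeGroup.of v * (FreeGroup.of u)⁻¹ * (FreeGroup.of v)⁻¹}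

/-- The partially commutative group (right-angled Artin group) of a simplicial graph. -/
abbrev Raag {V : Type*} (Γ : SimpleGraph V) := PresentedGroup (raagRels Γ)

/-- `G` is residually `H`. -/
def Residually (H : Type*) [Group H] (G : Type*) [Group G] : Prop :=
  ∀ g : G, g ≠ 1 → ∃ φ : G →* H, φ g ≠ 1

/-- `G` is fully residually `H`. -/
def FullyResidually (H : Type*) [Group H] (G : Type*) [Group G] : Prop :=
  ∀ s : Finset G, (∀ g ∈ s, g ≠ 1) → ∃ φ : G →* H, ∀ g ∈ s, φ g ≠ 1

/-- A limit group over `H`: finitely generated and fully residually `H`. -/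
def IsLimitGroupOver (H : Type*) [Group H] (G : Type*) [Group G] : Prop :=
  Group.FG G ∧ FullyResidually H G

/-! ## Part 1: an algebraically closed valued field -/

theorem exists_valued_field : ∃ (F : Type) (_ : Field F) (_ : IsAlgClosed F) (_ : CharZero F)
    (Γ₀ : Type) (_ : LinearOrderedCommGroupWithZero Γ₀) (v : Valuation F Γ₀) (t : F),
    1 < v t ∧ ∀ q : ℚ, q ≠ 0 → v (q : F) = 1 := by
  let F := AlgebraicClosure (LaurentSeries ℚ)
  let f : PowerSeries ℚ →+* F :=
    (algebraMap (LaurentSeries ℚ) F).comp (algebraMap (PowerSeries ℚ) (LaurentSeries ℚ))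
  have hf : Function.Injective f :=
    (algebraMap (LaurentSeries ℚ) F).injective.comp (IsFractionRing.injective _ _)
  have : CharZero F := charZero_of_injective_ringHom (f := f.comp (algebraMap ℚ (PowerSeries ℚ)))
    (RingHom.injective _)
  obtain ⟨A, h, hl⟩ := IsLocalRing.exists_factor_valuationRing f
  have hunit : ∀ x : PowerSeries ℚ, IsUnit x → A.valuation (f x) = 1 := by
    intro x hx
    have := hx.map (f.codRestrict A.toSubring h)
    exact (A.valuation_eq_one_iff (⟨f x, h x⟩ : A)).1 this
  refine ⟨F, inferInstance, inferInstance, inferInstance, A.ValueGroup, inferInstance,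
    A.valuation, (f PowerSeries.X)⁻¹, ?_, ?_⟩
  · have h1 : A.valuation (f PowerSeries.X) < 1 := by
      have h2 : A.valuation (f PowerSeries.X) ≤ 1 := (A.valuation_le_one_iff _).2 (h _)
      refine lt_of_le_of_ne h2 fun h3 => ?_
      have h4 : IsUnit (⟨f PowerSeries.X, h _⟩ : A) := (A.valuation_eq_one_iff _).2 h3
      have h5 : IsUnit (PowerSeries.X : PowerSeries ℚ) := hl.map_nonunit _ h4
      exact PowerSeries.X_prime.not_isUnit h5
    have h0 : f PowerSeries.X ≠ 0 := by
      rw [Ne, map_eq_zero_iff f hf]; exact PowerSeries.X_ne_zero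
    rw [map_inv₀]
    refine (one_lt_inv₀ ?_).2 h1
    exact zero_lt_iff.2 ((Valuation.ne_zero_iff _).2 h0)
  · intro q hq
    have h1 : IsUnit (algebraMap ℚ (PowerSeries ℚ) q) := (IsUnit.mk0 q hq).map _
    have h2 := hunit _ h1
    have h3 : f (algebraMap ℚ (PowerSeries ℚ) q) = (q : F) := by
      have : (f.comp (algebraMap ℚ (PowerSeries ℚ))) q = q := eq_ratCast _ q
      exact this
    rwa [h3] at h2

/-! ## Part 2: words, locks and cyclically reduced words -/

section Words
variable {V : Type} (Γ : SimpleGraph V)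

/-- The group element of a letter. -/
def letterG (x : V × Bool) : Raag Γ :=
  if x.2 then PresentedGroup.of x.1 else (PresentedGroup.of x.1)⁻¹

/-- The group element of a word. -/
def wordG (w : List (V × Bool)) : Raag Γ := (w.map (letterG Γ)).prod

theorem wordG_append (w w' : List (V × Bool)) : wordG Γ (w ++ w') = wordG Γ w * wordG Γ w' := by
  simp [wordG]

theorem wordG_cons (x : V × Bool) (w : List (V × Bool)) :
    wordG Γ (x :: w) = letterG Γ x * wordG Γ w := by
  simp [wordG]

theorem wordG_nil : wordG Γ [] = 1 := by
  simp [wordG]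

theorem of_comm {u v : V} (h : Γ.Adj u v) :
    Commute (PresentedGroup.of u : Raag Γ) (PresentedGroup.of v) := by
  have h1 : (PresentedGroup.mk (raagRels Γ)) (FreeGroup.of u * FreeGroup.of v *
      (FreeGroup.of u)⁻¹ * (FreeGroup.of v)⁻¹) = 1 :=
    PresentedGroup.one_of_mem ⟨u, v, h, rfl⟩
  have h2 : (PresentedGroup.of u : Raag Γ) * PresentedGroup.of v * (PresentedGroup.of u)⁻¹ *
      (PresentedGroup.of v)⁻¹ = 1 := by
    simp only [map_mul, map_inv] at h1
    exact h1
  have h3 := mul_inv_eq_one.1 h2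
  exact mul_inv_eq_iff_eq_mul.1 h3

theorem letterG_comm {x y : V × Bool} (h : Γ.Adj x.1 y.1) :
    Commute (letterG Γ x) (letterG Γ y) := by
  have := of_comm Γ h
  unfold letterG
  split_ifs <;> simp [this]

theorem letterG_inv (u : V) (e : Bool) : letterG Γ (u, !e) * letterG Γ (u, e) = 1 := by
  cases e <;> simp [letterG]

theorem wordG_comm (b : List (V × Bool)) (y : V × Bool) (h : ∀ x ∈ b, Γ.Adj x.1 y.1) :
    Commute (wordG Γ b) (letterG Γ y) := by
  induction b with
  | nil => rw [wordG_nil]; exact Commute.one_left _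
  | cons x b ih =>
    rw [wordG_cons]
    exact (letterG_comm Γ (h x (by simp))).mul_left (ih fun z hz => h z (by simp [hz]))

theorem exists_word (g : Raag Γ) : ∃ w, wordG Γ w = g := by
  induction g using PresentedGroup.induction_on with
  | _ z =>
  induction z using FreeGroup.induction_on with
  | C1 => exact ⟨[], by simp [wordG]⟩
  | of x => exact ⟨[(x, true)], by simp [wordG, letterG]; rfl⟩
  | inv_of x _ => exact ⟨[(x, false)], by simp [wordG, letterG]; rfl⟩
  | mul x y hx hy =>
    obtain ⟨w, hw⟩ := hx
    obtain ⟨w', hw'⟩ := hy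
    exact ⟨w ++ w', by rw [wordG_append, hw, hw', map_mul]⟩

open Classical in
/-- The lock state after reading a word from right to left. -/
noncomputable def lockS (s : V → Option Bool) : List (V × Bool) → V → Option Bool
  | [], u => s u
  | x :: w, u => if u = x.1 then some x.2 else if Γ.Adj x.1 u then lockS s w u else none

/-- No letter is read while locked in the opposite direction. -/
def AllowedW (s : V → Option Bool) : List (V × Bool) → Prop
  | [] => True
  | x :: w => AllowedW s w ∧ lockS Γ s w x.1 ≠ some (!x.2)

theorem lockS_append (s : V → Option Bool) (w p : List (V × Bool)) :
    lockS Γ s (w ++ p) = lockS Γ (lockS Γ s p) w := by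
  funext u
  induction w with
  | nil => rfl
  | cons x w ih => simp only [List.cons_append, lockS, ih]

theorem allowed_append (s : V → Option Bool) (w p : List (V × Bool)) :
    AllowedW Γ s (w ++ p) ↔ AllowedW Γ s p ∧ AllowedW Γ (lockS Γ s p) w := by
  induction w with
  | nil => simp [AllowedW]
  | cons x w ih => simp only [List.cons_append, AllowedW, ih, lockS_append, and_assoc]

theorem lockS_dich (w : List (V × Bool)) (u : V) :
    (∀ s, lockS Γ s w u = lockS Γ (fun _ => none) w u) ∨ (∀ s, lockS Γ s w u = s u) := by
  induction w with
  | nil => right; intro s; rfl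
  | cons x w ih =>
    simp only [lockS]
    split_ifs
    · left; simp
    · exact ih
    · left; simp

theorem lockS_idem (w : List (V × Bool)) :
    lockS Γ (lockS Γ (fun _ => none) w) w = lockS Γ (fun _ => none) w := by
  funext u
  rcases lockS_dich Γ w u with h | h
  · exact h _
  · exact h _

theorem lockS_eq_some (w : List (V × Bool)) (u : V) (e : Bool)
    (h : lockS Γ (fun _ => none) w u = some e) :
    ∃ b a, w = b ++ (u, e) :: a ∧ ∀ x ∈ b, Γ.Adj x.1 u := by
  induction w with
  | nil => simp [lockS] at h
  | cons x w ih =>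
    simp only [lockS] at h
    split_ifs at h with h1 h2
    · refine ⟨[], w, ?_, by simp⟩
      simp only [Option.some.injEq] at h
      subst h1 h
      rfl
    · obtain ⟨b, a, hw, hb⟩ := ih h
      refine ⟨x :: b, a, by simp [hw], ?_⟩
      intro y hy
      rcases List.mem_cons.1 hy with rfl | hy
      · exact h2
      · exact hb y hy

theorem not_allowed (p : List (V × Bool)) (h : ¬ AllowedW Γ (fun _ => none) p) :
    ∃ q b a u e, p = q ++ (u, e) :: (b ++ (u, !e) :: a) ∧ ∀ x ∈ b, Γ.Adj x.1 u := by
  induction p with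
  | nil => simp [AllowedW] at h
  | cons x p ih =>
    by_cases hp : AllowedW Γ (fun _ => none) p
    · simp only [AllowedW, hp, true_and, not_not] at h
      obtain ⟨b, a, hw, hb⟩ := lockS_eq_some Γ p _ _ h
      exact ⟨[], b, a, x.1, x.2, by simp [hw], hb⟩
    · obtain ⟨q, b, a, u, e, hw, hb⟩ := ih hp
      exact ⟨x :: q, b, a, u, e, by simp [hw], hb⟩

/-- Minimal length in the conjugacy class. -/
def ConjMin (w : List (V × Bool)) : Prop :=
  ∀ w', IsConj (wordG Γ w) (wordG Γ w') → w.length ≤ w'.length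

theorem cancel_eq (q b a : List (V × Bool)) (u : V) (e : Bool) (hb : ∀ x ∈ b, Γ.Adj x.1 u) :
    wordG Γ (q ++ (u, e) :: (b ++ (u, !e) :: a)) = wordG Γ (q ++ (b ++ a)) := by
  have h1 := (wordG_comm Γ b (u, e) hb).eq
  have h2 : letterG Γ (u, e) * letterG Γ (u, !e) = 1 := by
    have := letterG_inv Γ u (!e); simpa using this
  simp only [wordG_append, wordG_cons]
  congr 1
  calc letterG Γ (u, e) * (wordG Γ b * (letterG Γ (u, !e) * wordG Γ a))
      = (letterG Γ (u, e) * wordG Γ b) * (letterG Γ (u, !e) * wordG Γ a) := by group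
    _ = (wordG Γ b * letterG Γ (u, e)) * (letterG Γ (u, !e) * wordG Γ a) := by rw [h1]
    _ = wordG Γ b * (letterG Γ (u, e) * letterG Γ (u, !e)) * wordG Γ a := by group
    _ = _ := by rw [h2]; group

theorem min_no_cancel {w : List (V × Bool)} (hw : ConjMin Γ w) (q b a : List (V × Bool))
    (u : V) (e : Bool) (hb : ∀ x ∈ b, Γ.Adj x.1 u) :
    w ≠ q ++ (u, e) :: (b ++ (u, !e) :: a) := by
  intro h
  have h1 := hw (q ++ (b ++ a)) (by rw [h, cancel_eq Γ q b a u e hb])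
  rw [h] at h1
  simp at h1

theorem isConj_rot (a b : List (V × Bool)) : IsConj (wordG Γ (a ++ b)) (wordG Γ (b ++ a)) := by
  rw [wordG_append, wordG_append, isConj_iff]
  exact ⟨(wordG Γ a)⁻¹, by group⟩

/-- Cyclic version of `min_no_cancel`. -/
theorem min_no_cancel' {w : List (V × Bool)} (hw : ConjMin Γ w) (m r m' : List (V × Bool))
    (u : V) (e : Bool) (hm : ∀ x ∈ m, Γ.Adj x.1 u) (hm' : ∀ x ∈ m', Γ.Adj x.1 u) :
    w ≠ m ++ (u, !e) :: (r ++ (u, e) :: m') := by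
  intro h
  have h0 : IsConj (wordG Γ w) (wordG Γ ((r ++ (u, e) :: m') ++ (m ++ [(u, !e)]))) := by
    have : w = (m ++ [(u, !e)]) ++ (r ++ (u, e) :: m') := by simp [h]
    rw [this]
    exact isConj_rot Γ _ _
  have h2 : ((r ++ (u, e) :: m') ++ (m ++ [(u, !e)])) = r ++ (u, e) :: ((m' ++ m) ++ (u, !e) :: []) := by
    simp
  rw [h2, cancel_eq Γ] at h0
  · have h1 := hw _ h0
    rw [h] at h1
    simp at h1
    omega
  · intro x hx
    rcases List.mem_append.1 hx with hx | hx
    · exact hm' x hx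
    · exact hm x hx

theorem allowed_double {w : List (V × Bool)} (hw : ConjMin Γ w) :
    AllowedW Γ (fun _ => none) (w ++ w) := by
  by_contra hna
  obtain ⟨q, b, a, u, e, hp, hb⟩ := not_allowed Γ _ hna
  have hne : ∀ (c : List (V × Bool)) (d : List (V × Bool)), (u, e) :: c ≠ (u, !e) :: d := by
    intro c d h
    cases e <;> simp at h
  have hp' : w ++ w = (q ++ (u, e) :: b) ++ (u, !e) :: a := by simp [hp]
  rcases List.append_eq_append_iff.1 hp' with ⟨m, h1, h2⟩ | ⟨m, h1, h2⟩
  · rcases List.append_eq_append_iff.1 h1 with ⟨m', h3, h4⟩ | ⟨m', h3, h4⟩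
    · rcases m' with _ | ⟨z, m'⟩
      · simp only [List.nil_append] at h4
        exact min_no_cancel Γ hw [] b a u e hb (by rw [h2, ← h4]; simp)
      · simp only [List.cons_append, List.cons.injEq] at h4
        obtain ⟨rfl, h4⟩ := h4
        have hm : ∀ x ∈ m, Γ.Adj x.1 u := fun x hx => hb x (by rw [h4]; simp [hx])
        have hm' : ∀ x ∈ m', Γ.Adj x.1 u := fun x hx => hb x (by rw [h4]; simp [hx])
        have h5 : m ++ (u, !e) :: a = q ++ (u, e) :: m' := by rw [← h2, ← h3]
        rcases List.append_eq_append_iff.1 h5 with ⟨r, h6, h7⟩ | ⟨r, h6, h7⟩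
        · rcases r with _ | ⟨z, r⟩
          · exact hne _ _ h7.symm
          · simp only [List.cons_append, List.cons.injEq] at h7
            obtain ⟨rfl, h7⟩ := h7
            exact min_no_cancel' Γ hw m r m' u e hm hm' (by rw [h2, h7])
        · rcases r with _ | ⟨z, r⟩
          · exact hne _ _ h7
          · simp only [List.cons_append, List.cons.injEq] at h7
            obtain ⟨rfl, h7⟩ := h7
            exact Γ.irrefl (hm (u, e) (by rw [h6]; simp))
    · exact min_no_cancel Γ hw m' b a u e hb (by rw [h2, h4]; simp)
  · rcases m with _ | ⟨z, m⟩
    · simp only [List.nil_append, List.append_nil] at h1 h2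
      rcases q with _ | ⟨z, q⟩
      · exact hne _ _ (by rw [h2, h1]; rfl)
      · have h3 : (u, !e) = z ∧ a = q ++ (u, e) :: b := by
          have := h2.trans h1
          simpa using this
        obtain ⟨rfl, h3⟩ := h3
        exact min_no_cancel' Γ hw [] q b u e (by simp) hb (by rw [h1]; simp)
    · simp only [List.cons_append, List.cons.injEq] at h2
      obtain ⟨rfl, h2⟩ := h2
      exact min_no_cancel Γ hw q b m u e hb (by rw [h1]; simp)

/-- Powers of a word. -/
def wpow (w : List (V × Bool)) : ℕ → List (V × Bool)
  | 0 => []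
  | n + 1 => w ++ wpow w n

theorem wpow_length (w : List (V × Bool)) (n : ℕ) : (wpow w n).length = n * w.length := by
  induction n with
  | zero => simp [wpow]
  | succ n ih => simp [wpow, ih]; ring

theorem wordG_wpow (w : List (V × Bool)) (n : ℕ) : wordG Γ (wpow w n) = wordG Γ w ^ n := by
  induction n with
  | zero => simp [wpow, wordG_nil]
  | succ n ih => rw [wpow, wordG_append, ih, pow_succ']

theorem allowed_wpow {w : List (V × Bool)} (hw : ConjMin Γ w) (n : ℕ) :
    AllowedW Γ (fun _ => none) (wpow w n) := by
  have h2 := (allowed_append Γ _ w w).1 (allowed_double Γ hw)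
  have key : ∀ n, AllowedW Γ (fun _ => none) (wpow w (n + 1)) ∧
      lockS Γ (fun _ => none) (wpow w (n + 1)) = lockS Γ (fun _ => none) w := by
    intro n
    induction n with
    | zero => exact ⟨by simpa [wpow] using h2.1, by simp [wpow]⟩
    | succ n ih =>
      rw [wpow, allowed_append, lockS_append, ih.2, lockS_idem]
      exact ⟨⟨ih.1, h2.2⟩, rfl⟩
  rcases n with _ | n
  · trivial
  · exact (key n).1

theorem exists_conjMin (g : Raag Γ) : ∃ w, ConjMin Γ w ∧ IsConj g (wordG Γ w) := by
  classical
  have hex : ∃ n, ∃ w : List (V × Bool), w.length = n ∧ IsConj g (wordG Γ w) := by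
    obtain ⟨w, hw⟩ := exists_word Γ g
    exact ⟨_, w, rfl, by rw [hw]⟩
  obtain ⟨w, hw, hc⟩ := Nat.find_spec hex
  refine ⟨w, ?_, hc⟩
  intro w' h
  rw [hw]
  exact Nat.find_min' hex ⟨w', rfl, hc.trans h⟩

end Words

/-! ## Part 3: the representation -/

section Rep
variable {V : Type} [Fintype V] [DecidableEq V] (Γ : SimpleGraph V) [DecidableRel Γ.Adj]
variable {F : Type} [Field F] (t : F)

/-- The pairing between letters. -/
def pairF (z x : V × Bool) : F :=
  if z.1 = x.1 then (if z.2 = x.2 then 1 else 0) else if Γ.Adj x.1 z.1 then 0 else 1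

/-- The rank one idempotent of a letter. -/
def idemM (x : V × Bool) : Matrix (V × Bool) (V × Bool) F :=
  Matrix.of fun z y => if y = x then pairF Γ z x else 0

/-- The opposite letter. -/
def opp (x : V × Bool) : V × Bool := (x.1, !x.2)

theorem opp_opp (x : V × Bool) : opp (opp x) = x := by simp [opp]

theorem idem_mul (x y : V × Bool) :
    (idemM Γ x : Matrix _ _ F) * idemM Γ y =
      Matrix.of fun z w => if w = y then pairF Γ z x * pairF Γ x y else 0 := by
  ext z w
  simp [Matrix.mul_apply, idemM]

theorem idem_mul_zero {x y : V × Bool} (h : pairF Γ x y = (0 : F)) :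
    (idemM Γ x : Matrix _ _ F) * idemM Γ y = 0 := by
  rw [idem_mul]; ext z w; simp [h]

theorem idem_mul_self (x : V × Bool) :
    (idemM Γ x : Matrix _ _ F) * idemM Γ x = idemM Γ x := by
  rw [idem_mul]; ext z w; simp [idemM, pairF]

theorem idem_mul_opp (x : V × Bool) :
    (idemM Γ x : Matrix _ _ F) * idemM Γ (opp x) = 0 := by
  apply idem_mul_zero; simp [pairF, opp]

theorem idem_opp_mul (x : V × Bool) :
    (idemM Γ (opp x) : Matrix _ _ F) * idemM Γ x = 0 := by
  apply idem_mul_zero; simp [pairF, opp]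

theorem idem_mul_adj {x y : V × Bool} (h : Γ.Adj x.1 y.1) :
    (idemM Γ x : Matrix _ _ F) * idemM Γ y = 0 := by
  apply idem_mul_zero; simp [pairF, h.ne, h.symm]

/-- The matrix of a letter. -/
def letM (x : V × Bool) : Matrix (V × Bool) (V × Bool) F :=
  1 + (t - 1) • idemM Γ x + (t⁻¹ - 1) • idemM Γ (opp x)

theorem letM_mul_opp (ht : t ≠ 0) (x : V × Bool) : letM Γ t x * letM Γ t (opp x) = 1 := by
  have h1 := idem_mul_self (F := F) Γ x
  have h2 := idem_mul_self (F := F) Γ (opp x)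
  have h3 := idem_mul_opp (F := F) Γ x
  have h4 := idem_opp_mul (F := F) Γ x
  simp only [letM, opp_opp, add_mul, mul_add, one_mul, mul_one, Matrix.smul_mul, Matrix.mul_smul,
    h1, h2, h3, h4, smul_zero, add_zero]
  have h5 : (t - 1) * (t⁻¹ - 1) = - (t - 1) - (t⁻¹ - 1) := by field_simp; ring
  have h5' : (t⁻¹ - 1) * (t - 1) = - (t - 1) - (t⁻¹ - 1) := by rw [mul_comm, h5]
  simp only [smul_smul, h5, h5']
  module

theorem letM_comm {x y : V × Bool} (h : Γ.Adj x.1 y.1) :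
    letM Γ t x * letM Γ t y = letM Γ t y * letM Γ t x := by
  have h1 := idem_mul_adj (F := F) Γ h
  have h2 := idem_mul_adj (F := F) (x := opp x) (y := y) Γ h
  have h3 := idem_mul_adj (F := F) (x := x) (y := opp y) Γ h
  have h4 := idem_mul_adj (F := F) (x := opp x) (y := opp y) Γ h
  have h1' := idem_mul_adj (F := F) Γ h.symm
  have h2' := idem_mul_adj (F := F) (x := opp y) (y := x) Γ h.symm
  have h3' := idem_mul_adj (F := F) (x := y) (y := opp x) Γ h.symm
  have h4' := idem_mul_adj (F := F) (x := opp y) (y := opp x) Γ h.symm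
  simp only [letM, add_mul, mul_add, one_mul, mul_one, Matrix.smul_mul, Matrix.mul_smul,
    h1, h2, h3, h4, h1', h2', h3', h4', smul_zero, add_zero]
  abel

/-- The invertible matrix of a vertex. -/
def vertU (ht : t ≠ 0) (u : V) : (Matrix (V × Bool) (V × Bool) F)ˣ where
  val := letM Γ t (u, true)
  inv := letM Γ t (u, false)
  val_inv := letM_mul_opp Γ t ht (u, true)
  inv_val := letM_mul_opp Γ t ht (u, false)

/-- The representation. -/
def rhoU (ht : t ≠ 0) : Raag Γ →* (Matrix (V × Bool) (V × Bool) F)ˣ :=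
  PresentedGroup.toGroup (f := vertU Γ t ht) (by
    rintro r ⟨u, v, h, rfl⟩
    simp only [map_mul, map_inv, FreeGroup.lift_apply_of]
    rw [mul_inv_eq_one, mul_inv_eq_iff_eq_mul]
    ext1
    exact letM_comm Γ t h)

theorem rhoU_letter (ht : t ≠ 0) (x : V × Bool) :
    ((rhoU Γ t ht (letterG Γ x) : (Matrix (V × Bool) (V × Bool) F)ˣ) : Matrix _ _ F)
      = letM Γ t x := by
  obtain ⟨u, e⟩ := x
  cases e
  · have : rhoU Γ t ht (letterG Γ (u, false)) = (vertU Γ t ht u)⁻¹ := by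
      simp [letterG, rhoU, PresentedGroup.toGroup.of]
    rw [this]; rfl
  · have : rhoU Γ t ht (letterG Γ (u, true)) = (vertU Γ t ht u) := by
      simp [letterG, rhoU, PresentedGroup.toGroup.of]
    rw [this]; rfl

/-- The representation with values in matrices. -/
def rhoM (ht : t ≠ 0) : Raag Γ →* Matrix (V × Bool) (V × Bool) F :=
  (Units.coeHom _).comp (rhoU Γ t ht)

theorem rhoM_letter (ht : t ≠ 0) (x : V × Bool) : rhoM Γ t ht (letterG Γ x) = letM Γ t x :=
  rhoU_letter Γ t ht x

theorem idem_mulVec (x : V × Bool) (f : V × Bool → F) (z : V × Bool) :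
    ((idemM Γ x : Matrix _ _ F).mulVec f) z = pairF Γ z x * f x := by
  simp [Matrix.mulVec, dotProduct, idemM]

theorem letM_mulVec (x : V × Bool) (f : V × Bool → F) (z : V × Bool) :
    ((letM Γ t x).mulVec f) z =
      f z + (t - 1) * (pairF Γ z x * f x) + (t⁻¹ - 1) * (pairF Γ z (opp x) * f (opp x)) := by
  simp [letM, Matrix.add_mulVec, Matrix.smul_mulVec, idem_mulVec]

theorem letM_mulVec_self (x : V × Bool) (f : V × Bool → F) :
    ((letM Γ t x).mulVec f) x = t * f x := by
  rw [letM_mulVec]; simp [pairF, opp]; ring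

theorem letM_mulVec_opp (x : V × Bool) (f : V × Bool → F) :
    ((letM Γ t x).mulVec f) (opp x) = t⁻¹ * f (opp x) := by
  rw [letM_mulVec]; simp [pairF, opp]; ring

theorem letM_mulVec_adj (x z : V × Bool) (h : Γ.Adj x.1 z.1) (f : V × Bool → F) :
    ((letM Γ t x).mulVec f) z = f z := by
  rw [letM_mulVec]; simp [pairF, opp, h, h.ne.symm]

theorem letM_mulVec_other (x z : V × Bool) (h : ¬ Γ.Adj x.1 z.1) (h' : z.1 ≠ x.1)
    (f : V × Bool → F) :
    ((letM Γ t x).mulVec f) z = f z + ((t - 1) * f x + (t⁻¹ - 1) * f (opp x)) := by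
  rw [letM_mulVec]; simp [pairF, opp, h, h']; ring

end Rep

/-! ## Part 4: growth of the representation -/

section Lead
variable {F : Type} [Field F] {Γ₀ : Type} [LinearOrderedCommGroupWithZero Γ₀]
variable (v : Valuation F Γ₀) (t : F)

/-- `x` has degree `d` with positive integral leading coefficient. -/
def HasLead (x : F) (d : ℤ) : Prop := ∃ c : ℕ, 0 < c ∧ v (x * t ^ (-d) - c) < 1

theorem t_ne_zero {v : Valuation F Γ₀} {t : F} (ht : 1 < v t) : t ≠ 0 := by
  rintro rfl
  rw [map_zero] at ht
  exact absurd ht (not_lt.2 zero_le_one)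

variable {v t}

theorem v_nat (hq : ∀ q : ℚ, q ≠ 0 → v (q : F) = 1)
    {c : ℕ} (hc : 0 < c) : v (c : F) = 1 := by
  have := hq c (by exact_mod_cast hc.ne')
  simpa using this

theorem HasLead.val (ht : 1 < v t) (hq : ∀ q : ℚ, q ≠ 0 → v (q : F) = 1)
    {x : F} {d : ℤ} (h : HasLead v t x d) : v x = v t ^ d := by
  obtain ⟨c, hc, h⟩ := h
  have h0 := t_ne_zero ht
  have h1 : v (x * t ^ (-d)) = 1 := by
    have : x * t ^ (-d) = (x * t ^ (-d) - c) + c := by ring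
    rw [this, Valuation.map_add_eq_of_lt_right, v_nat hq hc]
    rwa [v_nat hq hc]
  have h2 : v t ≠ 0 := (Valuation.ne_zero_iff _).2 h0
  rw [map_mul, map_zpow₀, zpow_neg] at h1
  exact (mul_inv_eq_one₀ (zpow_ne_zero _ h2)).1 h1

theorem hasLead_one : HasLead v t 1 0 := ⟨1, one_pos, by simp⟩

theorem HasLead.mul_t (ht : 1 < v t)
    {x : F} {d : ℤ} (h : HasLead v t x d) : HasLead v t (t * x) (d + 1) := by
  obtain ⟨c, hc, h⟩ := h
  refine ⟨c, hc, ?_⟩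
  have h0 := t_ne_zero ht
  have : t * x * t ^ (-(d + 1)) = x * t ^ (-d) := by
    rw [neg_add, zpow_add₀ h0]; field_simp
  rwa [this]

theorem HasLead.mul_t_inv (ht : 1 < v t)
    {x : F} {d : ℤ} (h : HasLead v t x d) :
    HasLead v t (t⁻¹ * x) (d - 1) := by
  obtain ⟨c, hc, h⟩ := h
  refine ⟨c, hc, ?_⟩
  have h0 := t_ne_zero ht
  have : t⁻¹ * x * t ^ (-(d - 1)) = x * t ^ (-d) := by
    rw [neg_sub, sub_eq_add_neg, zpow_add₀ h0]; field_simp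
  rwa [this]

theorem HasLead.add_small (ht : 1 < v t)
    {x y : F} {d : ℤ} (h : HasLead v t x d) (hy : v y < v t ^ d) :
    HasLead v t (x + y) d := by
  obtain ⟨c, hc, h⟩ := h
  refine ⟨c, hc, ?_⟩
  have h0 := t_ne_zero ht
  have h2 : 0 < v t ^ d := zpow_pos (lt_trans zero_lt_one ht) _
  have : (x + y) * t ^ (-d) - c = (x * t ^ (-d) - c) + y * t ^ (-d) := by ring
  rw [this]
  refine Valuation.map_add_lt _ h ?_
  rw [map_mul, map_zpow₀, zpow_neg]
  rwa [← div_eq_mul_inv, div_lt_one₀ h2]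

theorem HasLead.add_same {x y : F} {d : ℤ} (h : HasLead v t x d) (h' : HasLead v t y d) :
    HasLead v t (x + y) d := by
  obtain ⟨c, hc, h⟩ := h
  obtain ⟨c', hc', h'⟩ := h'
  refine ⟨c + c', by omega, ?_⟩
  have : (x + y) * t ^ (-d) - ((c + c' : ℕ) : F) = (x * t ^ (-d) - c) + (y * t ^ (-d) - c') := by
    push_cast; ring
  rw [this]
  exact Valuation.map_add_lt _ h h'

theorem HasLead.add (ht : 1 < v t) (hq : ∀ q : ℚ, q ≠ 0 → v (q : F) = 1)
    {x y : F} {d e : ℤ} (h : HasLead v t x d) (h' : HasLead v t y e) :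
    HasLead v t (x + y) (max d e) := by
  rcases lt_trichotomy d e with hd | hd | hd
  · rw [max_eq_right hd.le, add_comm]
    refine h'.add_small ht ?_
    rw [h.val ht hq]
    exact zpow_lt_zpow_right₀ ht hd
  · subst hd
    rw [max_self]
    exact h.add_same h'
  · rw [max_eq_left hd.le]
    refine h.add_small ht ?_
    rw [h'.val ht hq]
    exact zpow_lt_zpow_right₀ ht hd

theorem HasLead.step (ht : 1 < v t) (hq : ∀ q : ℚ, q ≠ 0 → v (q : F) = 1)
    {x y : F} {d e : ℤ} (h : HasLead v t x d) (h' : HasLead v t y e)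
    (hle : e ≤ d) : HasLead v t ((t - 1) * x + (t⁻¹ - 1) * y) (d + 1) := by
  have h1 : (t - 1) * x + (t⁻¹ - 1) * y = t * x + (-x + (t⁻¹ - 1) * y) := by ring
  rw [h1]
  refine (h.mul_t ht).add_small ht ?_
  have hlt : v t ^ d < v t ^ (d + 1) := zpow_lt_zpow_right₀ ht (by omega)
  refine Valuation.map_add_lt _ ?_ ?_
  · rw [Valuation.map_neg, h.val ht hq]; exact hlt
  · have h2 : v (t⁻¹ - 1) ≤ 1 := by
      refine Valuation.map_sub_le _ ?_ (le_of_eq (map_one v))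
      rw [map_inv₀]
      exact inv_le_one_of_one_le₀ ht.le
    rw [map_mul, h'.val ht hq]
    calc v (t⁻¹ - 1) * v t ^ e ≤ 1 * v t ^ e := by gcongr
      _ = v t ^ e := one_mul _
      _ ≤ v t ^ d := zpow_le_zpow_right₀ ht.le hle
      _ < _ := hlt

end Lead

section Growth
variable {V : Type} [Fintype V] [DecidableEq V] (Γ : SimpleGraph V) [DecidableRel Γ.Adj]
variable {F : Type} [Field F] {Γ₀ : Type} [LinearOrderedCommGroupWithZero Γ₀]
variable {v : Valuation F Γ₀} {t : F}

theorem eq_or_opp (x z : V × Bool) (h : z.1 = x.1) : z = x ∨ z = opp x := by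
  obtain ⟨a, b⟩ := x
  obtain ⟨c, d⟩ := z
  simp only at h
  subst h
  cases b <;> cases d <;> simp [opp]

theorem growth_inv (ht : 1 < v t) (hq : ∀ q : ℚ, q ≠ 0 → v (q : F) = 1)
    (w : List (V × Bool)) (hw : AllowedW Γ (fun _ => none) w) :
    ∃ d : V × Bool → ℤ,
      (∀ z, HasLead v t ((rhoM Γ t (t_ne_zero ht) (wordG Γ w)).mulVec (fun _ => 1) z) (d z)) ∧
      (∀ u, lockS Γ (fun _ => none) w u = none → d (u, true) = d (u, false)) ∧
      (∀ u e, lockS Γ (fun _ => none) w u = some e → d (u, !e) < d (u, e) ∧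
        ∀ z : V × Bool, z.1 ≠ u → ¬ Γ.Adj u z.1 → d (u, e) ≤ d z) ∧
      (w.length : ℤ) ≤ ∑ u, max (d (u, true)) (d (u, false)) := by
  induction w with
  | nil =>
    refine ⟨fun _ => 0, ?_, ?_, ?_, ?_⟩
    · intro z
      simp only [wordG_nil, map_one, Matrix.one_mulVec]
      exact hasLead_one
    · simp
    · simp [lockS]
    · simp
  | cons x w ih =>
    obtain ⟨hw, hx⟩ := hw
    obtain ⟨d, h1, h2, h3, h4⟩ := ih hw
    -- the letter read is not smaller than its opposite
    have hox : d (opp x) ≤ d x := by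
      obtain ⟨u, e⟩ := x
      simp only [opp] at hx ⊢
      rcases hl : lockS Γ (fun _ => none) w u with _ | e'
      · have := h2 u hl
        cases e <;> simp [this]
      · have he : e' = e := by
          rw [hl] at hx
          cases e <;> cases e' <;> simp at hx ⊢
        subst he
        exact (h3 u _ hl).1.le
    set f := (rhoM Γ t (t_ne_zero ht) (wordG Γ w)).mulVec (fun _ => (1 : F)) with hf
    have hstep : (rhoM Γ t (t_ne_zero ht) (wordG Γ (x :: w))).mulVec (fun _ => (1 : F)) =
        (letM Γ t x).mulVec f := by
      rw [wordG_cons, map_mul, rhoM_letter, hf, Matrix.mulVec_mulVec]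
    rw [hstep]
    let d' : V × Bool → ℤ := fun z => if z.1 = x.1 then (if z.2 = x.2 then d z + 1 else d z - 1)
      else if Γ.Adj x.1 z.1 then d z else max (d z) (d x + 1)
    have hd1 : d' x = d x + 1 := by simp [d']
    have hd2 : d' (opp x) = d (opp x) - 1 := by simp [d', opp]
    have hd3 : ∀ z : V × Bool, Γ.Adj x.1 z.1 → d' z = d z := by
      intro z hz; simp [d', hz, hz.ne.symm]
    have hd4 : ∀ z : V × Bool, ¬ Γ.Adj x.1 z.1 → z.1 ≠ x.1 → d' z = max (d z) (d x + 1) := by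
      intro z hz hz'; simp [d', hz, hz']
    refine ⟨d', ?_, ?_, ?_, ?_⟩
    · intro z
      by_cases hz : z.1 = x.1
      · rcases eq_or_opp x z hz with rfl | rfl
        · rw [hd1, letM_mulVec_self]; exact (h1 _).mul_t ht
        · rw [hd2, letM_mulVec_opp]; exact (h1 _).mul_t_inv ht
      · by_cases ha : Γ.Adj x.1 z.1
        · rw [hd3 z ha, letM_mulVec_adj Γ t x z ha]; exact h1 z
        · rw [hd4 z ha hz, letM_mulVec_other Γ t x z ha hz]
          exact (h1 z).add ht hq ((h1 x).step ht hq (h1 (opp x)) hox)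
    · intro u hu
      simp only [lockS] at hu
      split_ifs at hu with c1 c2
      · rw [hd3 (u, true) c2, hd3 (u, false) c2]; exact h2 u hu
      · rw [hd4 (u, true) c2 c1, hd4 (u, false) c2 c1]
        rcases hl : lockS Γ (fun _ => none) w u with _ | e
        · rw [h2 u hl]
        · obtain ⟨h5, h6⟩ := h3 u e hl
          have h7 := h6 x (fun h => c1 h.symm) (fun h => c2 h.symm)
          cases e
          · simp only [Bool.not_false] at h5
            rw [max_eq_right (by omega), max_eq_right (by omega)]
          · simp only [Bool.not_true] at h5
            rw [max_eq_right (by omega), max_eq_right (by omega)]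
    · intro u e hu
      simp only [lockS] at hu
      split_ifs at hu with c1 c2
      · simp only [Option.some.injEq] at hu
        subst c1 hu
        have h5 : d' (x.1, !x.2) = d (opp x) - 1 := hd2
        have h6 : d' (x.1, x.2) = d x + 1 := hd1
        rw [h5, h6]
        refine ⟨by omega, ?_⟩
        intro z hz hz'
        rw [hd4 z hz' hz]
        exact le_max_right _ _
      · rw [hd3 (u, !e) c2, hd3 (u, e) c2]
        obtain ⟨h5, h6⟩ := h3 u e hu
        refine ⟨h5, ?_⟩
        intro z hz hz'
        have h7 := h6 z hz hz'
        by_cases hzx : z.1 = x.1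
        · exact absurd (hzx ▸ c2.symm) hz'
        · by_cases ha : Γ.Adj x.1 z.1
          · rw [hd3 z ha]; exact h7
          · rw [hd4 z ha hzx]; exact h7.trans (le_max_left _ _)
    · have key : ∀ u, max (d (u, true)) (d (u, false)) + (if u = x.1 then 1 else 0) ≤
          max (d' (u, true)) (d' (u, false)) := by
        intro u
        split_ifs with hu
        · subst hu
          have h5 : max (d (x.1, true)) (d (x.1, false)) = d x := by
            obtain ⟨u, e⟩ := x
            simp only [opp] at hox
            cases e
            · exact max_eq_right hox
            · exact max_eq_left hox
          rw [h5, ← hd1]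
          obtain ⟨u, e⟩ := x
          cases e
          · exact le_max_right _ _
          · exact le_max_left _ _
        · by_cases ha : Γ.Adj x.1 u
          · rw [hd3 (u, true) ha, hd3 (u, false) ha, add_zero]
          · rw [hd4 (u, true) ha hu, hd4 (u, false) ha hu, add_zero]
            exact max_le_max (le_max_left _ _) (le_max_left _ _)
      have h5 := Finset.sum_le_sum (s := Finset.univ) fun u _ => key u
      rw [Finset.sum_add_distrib] at h5
      simp only [Finset.sum_ite_eq', Finset.mem_univ, if_true] at h5
      simp only [List.length_cons]
      push_cast
      omega

/-- Powers of a nontrivial conjugacy-minimal word have entries of unbounded degree. -/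
theorem growth_pow (ht : 1 < v t) (hq : ∀ q : ℚ, q ≠ 0 → v (q : F) = 1)
    (w : List (V × Bool)) (hw : ConjMin Γ w) (hne : w ≠ []) (c : ℕ) :
    ∃ (m : ℕ) (z : V × Bool),
      v t ^ c < v (((rhoM Γ t (t_ne_zero ht) (wordG Γ w)) ^ m).mulVec (fun _ => 1) z) := by
  obtain ⟨d, h1, -, -, h4⟩ := growth_inv Γ ht hq (wpow w (Fintype.card V * c + 1))
    (allowed_wpow Γ hw _)
  have hl : (Fintype.card V * c + 1 : ℤ) ≤ ((wpow w (Fintype.card V * c + 1)).length : ℤ) := by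
    rw [wpow_length]
    have : 1 ≤ w.length := List.length_pos_iff.2 hne
    have := Nat.mul_le_mul_left (Fintype.card V * c + 1) this
    rw [mul_one] at this
    exact_mod_cast this
  have hex : ∃ z, (c : ℤ) < d z := by
    by_contra hcon
    push Not at hcon
    have : ∑ u, max (d (u, true)) (d (u, false)) ≤ ∑ u : V, (c : ℤ) :=
      Finset.sum_le_sum fun u _ => max_le (hcon _) (hcon _)
    simp at this
    omega
  obtain ⟨z, hz⟩ := hex
  refine ⟨Fintype.card V * c + 1, z, ?_⟩
  rw [← map_pow (rhoM Γ t (t_ne_zero ht)), ← wordG_wpow, (h1 z).val ht hq, ← zpow_natCast]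
  exact zpow_lt_zpow_right₀ ht hz

end Growth

/-! ## Part 5: Laurent entries and large eigenvalues -/

section Laur
open Polynomial
variable {F : Type} [Field F] [CharZero F] {Γ₀ : Type} [LinearOrderedCommGroupWithZero Γ₀]
variable {v : Valuation F Γ₀} {t : F}

/-- The subring of Laurent polynomials in `t`. -/
def laurS (t : F) : Subring F := (Algebra.adjoin ℚ ({t, t⁻¹} : Set F)).toSubring

theorem t_mem_laurS : t ∈ laurS t := Algebra.subset_adjoin (by simp)
theorem t_inv_mem_laurS : t⁻¹ ∈ laurS t := Algebra.subset_adjoin (by simp)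

theorem laurS_poly (ht : t ≠ 0) {x : F} (hx : x ∈ laurS t) :
    ∃ (N : ℕ) (p : ℚ[X]), x * t ^ N = aeval t p := by
  change x ∈ Algebra.adjoin ℚ ({t, t⁻¹} : Set F) at hx
  induction hx using Algebra.adjoin_induction with
  | mem x hx =>
    rcases hx with rfl | hx
    · exact ⟨0, X, by simp⟩
    · rw [Set.mem_singleton_iff] at hx
      subst hx
      exact ⟨1, 1, by simp [ht]⟩
  | algebraMap r => exact ⟨0, C r, by simp⟩
  | add x y _ _ hx hy =>
    obtain ⟨N, p, hp⟩ := hx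
    obtain ⟨M, q, hq⟩ := hy
    refine ⟨N + M, p * X ^ M + q * X ^ N, ?_⟩
    simp only [map_add, map_mul, map_pow, aeval_X, ← hp, ← hq]
    ring
  | mul x y _ _ hx hy =>
    obtain ⟨N, p, hp⟩ := hx
    obtain ⟨M, q, hq⟩ := hy
    refine ⟨N + M, p * q, ?_⟩
    simp only [map_mul, ← hp, ← hq]
    ring

theorem v_aeval (ht : 1 < v t) (hq : ∀ q : ℚ, q ≠ 0 → v (q : F) = 1) {p : ℚ[X]} (hp : p ≠ 0) :
    v (aeval t p) = v t ^ p.natDegree := by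
  rw [aeval_eq_sum_range]
  have hv : ∀ i, p.coeff i ≠ 0 → v (p.coeff i • t ^ i) = v t ^ i := by
    intro i hi
    rw [Rat.smul_def, map_mul, hq _ hi, one_mul, map_pow]
  have hl : p.coeff p.natDegree ≠ 0 := by simpa using hp
  rw [Valuation.map_sum_eq_of_lt v (j := p.natDegree) (by simp), hv _ hl]
  intro i hi
  rw [hv _ hl]
  simp only [Finset.mem_sdiff, Finset.mem_range, Finset.mem_singleton] at hi
  by_cases h0 : p.coeff i = 0
  · rw [h0, zero_smul, map_zero]
    exact pow_pos (lt_trans zero_lt_one ht) _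
  · rw [hv _ h0]
    exact pow_lt_pow_right₀ ht (by omega)

theorem laurS_val (ht : 1 < v t) (hq : ∀ q : ℚ, q ≠ 0 → v (q : F) = 1) {x : F}
    (hx : x ∈ laurS t) (hx0 : x ≠ 0) : ∃ k : ℤ, v x = v t ^ k := by
  have h0 := t_ne_zero ht
  have h2 : v t ≠ 0 := (Valuation.ne_zero_iff _).2 h0
  obtain ⟨N, p, hp⟩ := laurS_poly h0 hx
  have hp0 : p ≠ 0 := by
    rintro rfl
    simp [h0, hx0] at hp
  have := v_aeval ht hq hp0
  rw [← hp, map_mul, map_pow] at this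
  refine ⟨p.natDegree - N, ?_⟩
  rw [zpow_sub₀ h2, zpow_natCast, zpow_natCast, ← this]
  field_simp

theorem laurS_val_le (ht : 1 < v t) (hq : ∀ q : ℚ, q ≠ 0 → v (q : F) = 1) {x : F}
    (hx : x ∈ laurS t) : ∃ k : ℕ, v x ≤ v t ^ k := by
  by_cases hx0 : x = 0
  · exact ⟨0, by simp [hx0]⟩
  obtain ⟨k, hk⟩ := laurS_val ht hq hx hx0
  refine ⟨k.toNat, ?_⟩
  rw [hk, ← zpow_natCast]
  exact zpow_le_zpow_right₀ ht.le (Int.self_le_toNat k)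

variable {V : Type} [Fintype V] [DecidableEq V] (Γ : SimpleGraph V) [DecidableRel Γ.Adj]

theorem letM_laurS (x i j : V × Bool) : letM Γ t x i j ∈ laurS t := by
  have h1 : ∀ i j, (1 : Matrix (V × Bool) (V × Bool) F) i j ∈ laurS t := by
    intro i j
    rw [Matrix.one_apply]; split_ifs
    · exact one_mem _
    · exact zero_mem _
  have h2 : ∀ x i j, (idemM Γ x : Matrix (V × Bool) (V × Bool) F) i j ∈ laurS t := by
    intro x i j
    simp only [idemM, pairF, Matrix.of_apply]
    split_ifs <;> first | exact one_mem _ | exact zero_mem _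
  simp only [letM, Matrix.add_apply, Matrix.smul_apply, smul_eq_mul]
  exact add_mem (add_mem (h1 _ _) (mul_mem (sub_mem t_mem_laurS (one_mem _)) (h2 _ _ _)))
    (mul_mem (sub_mem t_inv_mem_laurS (one_mem _)) (h2 _ _ _))

theorem rhoM_laurS (ht : t ≠ 0) (g : Raag Γ) (i j : V × Bool) :
    rhoM Γ t ht g i j ∈ laurS t := by
  obtain ⟨w, rfl⟩ := exists_word Γ g
  induction w generalizing i j with
  | nil =>
    rw [wordG_nil, map_one, Matrix.one_apply]; split_ifs
    · exact one_mem _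
    · exact zero_mem _
  | cons x w ih =>
    rw [wordG_cons, map_mul, rhoM_letter, Matrix.mul_apply]
    exact sum_mem fun k _ => mul_mem (letM_laurS Γ _ _ _) (ih _ _)

theorem charpoly_laurS (ht : t ≠ 0) (g : Raag Γ) (i : ℕ) :
    (rhoM Γ t ht g).charpoly.coeff i ∈ laurS t := by
  have : rhoM Γ t ht g = (Matrix.of fun i j => (⟨rhoM Γ t ht g i j, rhoM_laurS Γ ht g i j⟩ :
      laurS t)).map (laurS t).subtype := by
    ext i j; simp
  rw [this, Matrix.charpoly_map, coeff_map]
  exact Subtype.property _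

/-- If all roots of a monic polynomial are integral, then so are the remainders of `X ^ m`. -/
theorem modByMonic_integer [IsAlgClosed F] {p : F[X]} (hp : p.Monic)
    (h : ∀ x ∈ p.roots, v x ≤ 1) (m i : ℕ) : v ((X ^ m %ₘ p).coeff i) ≤ 1 := by
  have hl : p ∈ lifts v.integer.subtype := by
    rw [(IsAlgClosed.splits p).eq_prod_roots_of_monic hp]
    refine Subsemiring.multiset_prod_mem _ _ ?_
    intro q hq
    obtain ⟨x, hx, rfl⟩ := Multiset.mem_map.1 hq
    rw [mem_lifts]
    exact ⟨X - C ⟨x, h x hx⟩, by simp⟩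
  obtain ⟨q, hq, -, hqm⟩ := lifts_and_natDegree_eq_and_monic hl hp
  have : X ^ m %ₘ p = (X ^ m %ₘ q).map v.integer.subtype := by
    rw [map_modByMonic _ hqm, hq]; simp
  rw [this, coeff_map]
  exact Subtype.property ((X ^ m %ₘ q).coeff i)

theorem exists_big_root [IsAlgClosed F] (ht : 1 < v t) (hq : ∀ q : ℚ, q ≠ 0 → v (q : F) = 1)
    (g : Raag Γ) (hg : g ≠ 1) :
    ∃ x, (rhoM Γ t (t_ne_zero ht) g).charpoly.IsRoot x ∧ 1 < v x := by
  have h0 := t_ne_zero ht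
  obtain ⟨w, hw, hc⟩ := exists_conjMin Γ g
  have hne : w ≠ [] := by
    rintro rfl
    rw [wordG_nil, isConj_comm, isConj_one_right] at hc
    exact hg hc
  obtain ⟨c, hc⟩ := isConj_iff.1 hc
  have hch : (rhoM Γ t h0 g).charpoly = (rhoM Γ t h0 (wordG Γ w)).charpoly := by
    rw [← hc]
    have := Matrix.charpoly_units_conj (rhoU Γ t h0 c) (rhoM Γ t h0 g)
    rw [← this]
    congr 1
    simp [rhoM]
  rw [hch]
  by_contra hcon
  push Not at hcon
  set M := rhoM Γ t h0 (wordG Γ w) with hM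
  have hroots : ∀ x ∈ M.charpoly.roots, v x ≤ 1 := fun x hx =>
    hcon x (isRoot_of_mem_roots hx)
  have hb : ∀ (i : ℕ) (z : V × Bool), ∃ k : ℕ, v ((M ^ i).mulVec (fun _ => 1) z) ≤ v t ^ k := by
    intro i z
    apply laurS_val_le ht hq
    simp only [Matrix.mulVec, dotProduct, mul_one]
    refine sum_mem fun j _ => ?_
    rw [hM, ← map_pow (rhoM Γ t h0)]
    exact rhoM_laurS Γ h0 _ _ _
  choose k hk using hb
  let n := M.charpoly.natDegree + 1
  let B := ∑ i ∈ Finset.range n, ∑ z, k i z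
  have hB : ∀ i < n, ∀ z, k i z ≤ B := by
    intro i hi z
    calc k i z ≤ ∑ z, k i z := Finset.single_le_sum (f := k i) (by simp) (Finset.mem_univ z)
      _ ≤ B := Finset.single_le_sum (f := fun i => ∑ z, k i z) (by simp) (Finset.mem_range.2 hi)
  obtain ⟨m, z, hmz⟩ := growth_pow Γ ht hq w hw hne B
  refine absurd hmz (not_lt.2 ?_)
  rw [← hM, Matrix.pow_eq_aeval_mod_charpoly, aeval_eq_sum_range' (n := n)]
  · rw [Matrix.sum_mulVec, Finset.sum_apply]
    refine Valuation.map_sum_le _ ?_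
    intro i hi
    rw [Matrix.smul_mulVec, Pi.smul_apply, smul_eq_mul, map_mul]
    have h1 := modByMonic_integer (Matrix.charpoly_monic M) hroots m i
    calc _ ≤ 1 * v t ^ (k i z) := mul_le_mul' h1 (hk i z)
      _ = v t ^ k i z := one_mul _
      _ ≤ _ := pow_le_pow_right₀ ht.le (hB i (Finset.mem_range.1 hi) z)
  · have := natDegree_modByMonic_le (X ^ m) (Matrix.charpoly_monic M)
    omega

end Laur

/-! ## Part 6: characters of commutative matrix groups -/

section Chars
open Polynomial
variable {F : Type} [Field F] [IsAlgClosed F]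

theorem exists_char_of_not_isUnit {R : Type} [CommRing R] [Algebra F R] [Module.Finite F R]
    (b : R) (x : F) (h : ¬ IsUnit (b - algebraMap F R x)) : ∃ ψ : R →ₐ[F] F, ψ b = x := by
  obtain ⟨I, hI, hb⟩ := exists_max_ideal_of_mem_nonunits h
  have hbij := IsAlgClosed.algebraMap_bijective_of_isIntegral (k := F) (K := R ⧸ I)
  let e : F ≃ₐ[F] (R ⧸ I) := AlgEquiv.ofBijective (Algebra.ofId F (R ⧸ I)) hbij
  refine ⟨(e.symm : (R ⧸ I) →ₐ[F] F).comp (Ideal.Quotient.mkₐ F I), ?_⟩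
  have h1 : (Ideal.Quotient.mkₐ F I) b = algebraMap F (R ⧸ I) x := by
    have : Ideal.Quotient.mkₐ F I (b - algebraMap F R x) = 0 := by
      simpa using Ideal.Quotient.eq_zero_iff_mem.2 hb
    rw [map_sub, sub_eq_zero] at this
    rw [this]
    exact AlgHom.commutes _ _
  simp only [AlgHom.comp_apply, h1]
  exact AlgHom.commutes _ _

theorem exists_chars {n : Type} [Fintype n] [DecidableEq n] {A : Type} [CommGroup A]
    (ρ : A →* Matrix n n F) :
    ∃ (J : Type) (_ : Fintype J), Fintype.card J ≤ Fintype.card n ^ 2 ∧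
      ∃ χ : J → (A →* F), (∀ j a, (ρ a).charpoly.IsRoot (χ j a)) ∧
        ∀ a x, (ρ a).charpoly.IsRoot x → ∃ j, χ j a = x := by
  let S := Algebra.adjoin F (Set.range ρ)
  have hS : IsMulCommutative S := Algebra.isMulCommutative_adjoin F (by
    rintro _ ⟨a, rfl⟩ _ ⟨b, rfl⟩
    rw [← map_mul, ← map_mul, mul_comm])
  letI : CommRing S := { (inferInstance : Ring S) with mul_comm := hS.1.1 }
  have hfin : Module.Finite F S :=
    inferInstanceAs (Module.Finite F (Subalgebra.toSubmodule S))
  have hfin2 : Finite (S →ₐ[F] F) := inferInstance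
  letI : Fintype (S →ₐ[F] F) := Fintype.ofFinite _
  have hmem : ∀ a, ρ a ∈ S := fun a => Algebra.subset_adjoin ⟨a, rfl⟩
  let ρ' : A →* S := ρ.codRestrict S hmem
  refine ⟨S →ₐ[F] F, inferInstance, ?_, fun ψ => (ψ : S →* F).comp ρ', ?_, ?_⟩
  · rw [← Nat.card_eq_fintype_card]
    refine (card_algHom_le_finrank F S F).trans ?_
    refine (Submodule.finrank_le (Subalgebra.toSubmodule S)).trans ?_
    rw [Module.finrank_matrix]
    simp [sq]
  · intro ψ a
    have h1 : aeval (ρ' a) (ρ a).charpoly = 0 := by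
      apply Subtype.val_injective
      have := Polynomial.aeval_algHom_apply S.val (ρ' a) (ρ a).charpoly
      have h2 : S.val (ρ' a) = ρ a := rfl
      rw [h2, Matrix.aeval_self_charpoly] at this
      exact this.symm
    have h3 := Polynomial.aeval_algHom_apply ψ (ρ' a) (ρ a).charpoly
    rw [h1, map_zero] at h3
    rw [IsRoot.def, ← Polynomial.coe_aeval_eq_eval]
    exact h3
  · intro a x hx
    refine exists_char_of_not_isUnit (ρ' a) x ?_
    intro hu
    rw [← Matrix.mem_spectrum_iff_isRoot_charpoly, spectrum.mem_iff] at hx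
    apply hx
    have h2 := (hu.map S.val).neg
    have h3 : -(S.val (ρ' a - algebraMap F S x)) = algebraMap F (Matrix n n F) x - ρ a := by
      rw [map_sub, neg_sub]; rfl
    rwa [h3] at h2

end Chars

/-! ## Part 7: homomorphisms to the integers -/

section Newton
open Polynomial
variable {F : Type} [Field F] {Γ₀ : Type} [LinearOrderedCommGroupWithZero Γ₀]
variable {v : Valuation F Γ₀} {t : F}

theorem root_val_eq {p : F[X]} (hp : p.Monic) {x : F} (hx : x ≠ 0) (hr : p.IsRoot x) :
    ∃ i j, i < j ∧ j ≤ p.natDegree ∧ p.coeff i ≠ 0 ∧ p.coeff j ≠ 0 ∧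
      v x ^ (j - i) * v (p.coeff j) = v (p.coeff i) := by
  classical
  have hvx : v x ≠ 0 := (Valuation.ne_zero_iff _).2 hx
  have hsum : ∑ i ∈ Finset.range (p.natDegree + 1), p.coeff i * x ^ i = 0 := by
    rw [← eval_eq_sum_range]; exact hr
  obtain ⟨j, hj, hmax⟩ := Finset.exists_max_image (Finset.range (p.natDegree + 1))
    (fun i => v (p.coeff i * x ^ i)) ⟨0, by simp⟩
  have hpos : 0 < v (p.coeff j * x ^ j) := by
    refine lt_of_lt_of_le ?_ (hmax p.natDegree (by simp))
    rw [hp.coeff_natDegree, one_mul, map_pow]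
    exact zero_lt_iff.2 (pow_ne_zero _ hvx)
  have hex : ∃ i ∈ Finset.range (p.natDegree + 1), i ≠ j ∧
      v (p.coeff i * x ^ i) = v (p.coeff j * x ^ j) := by
    by_contra hcon
    push Not at hcon
    have := Valuation.map_sum_eq_of_lt v hj (f := fun i => p.coeff i * x ^ i) (by
      intro i hi
      simp only [Finset.mem_sdiff, Finset.mem_singleton] at hi
      exact lt_of_le_of_ne (hmax i hi.1) (hcon i hi.1 hi.2))
    rw [hsum, map_zero] at this
    exact hpos.ne this
  obtain ⟨i, hi, hij, heq⟩ := hex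
  have key : ∀ i j : ℕ, i < j → v (p.coeff i * x ^ i) = v (p.coeff j * x ^ j) →
      v x ^ (j - i) * v (p.coeff j) = v (p.coeff i) := by
    intro i j hij h
    obtain ⟨k, rfl⟩ := Nat.exists_eq_add_of_lt hij
    rw [map_mul, map_mul, map_pow, map_pow] at h
    have h3 : i + k + 1 - i = k + 1 := by omega
    rw [h3]
    have h4 : v x ^ i ≠ 0 := pow_ne_zero _ hvx
    apply mul_right_cancel₀ h4
    rw [h, mul_comm (v x ^ (k + 1)), mul_assoc, ← pow_add, show k + 1 + i = i + k + 1 by omega]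
  have hj0 : p.coeff j ≠ 0 := by
    intro h; simp [h] at hpos
  have hi0 : p.coeff i ≠ 0 := by
    rw [← heq] at hpos
    intro h; simp [h] at hpos
  rw [Finset.mem_range] at hi hj
  rcases lt_or_gt_of_ne hij with h | h
  · exact ⟨i, j, h, by omega, hi0, hj0, key i j h heq⟩
  · exact ⟨j, i, h, by omega, hj0, hi0, key j i h heq.symm⟩

variable [CharZero F]
variable {V : Type} [Fintype V] [DecidableEq V] (Γ : SimpleGraph V) [DecidableRel Γ.Adj]

theorem root_pow_factorial (ht : 1 < v t) (hq : ∀ q : ℚ, q ≠ 0 → v (q : F) = 1)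
    (g : Raag Γ) {x : F} (hx : x ≠ 0) (hr : (rhoM Γ t (t_ne_zero ht) g).charpoly.IsRoot x) :
    ∃ e : ℤ, v x ^ (Fintype.card (V × Bool)).factorial = v t ^ e := by
  have h2 : v t ≠ 0 := (Valuation.ne_zero_iff _).2 (t_ne_zero ht)
  obtain ⟨i, j, hij, hj, hi0, hj0, h⟩ := root_val_eq (v := v) (Matrix.charpoly_monic _) hx hr
  rw [Matrix.charpoly_natDegree_eq_dim] at hj
  obtain ⟨a, ha⟩ := laurS_val ht hq (charpoly_laurS Γ _ g i) hi0
  obtain ⟨b, hb⟩ := laurS_val ht hq (charpoly_laurS Γ _ g j) hj0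
  rw [ha, hb] at h
  have h3 : v x ^ (j - i) = v t ^ (a - b) := by
    rw [zpow_sub₀ h2, ← h, mul_div_assoc, div_self (zpow_ne_zero _ h2), mul_one]
  obtain ⟨m, hm⟩ : j - i ∣ (Fintype.card (V × Bool)).factorial :=
    Nat.dvd_factorial (by omega) (by omega)
  refine ⟨(a - b) * m, ?_⟩
  rw [hm, pow_mul, h3, zpow_mul, zpow_natCast]

theorem exists_hom_int_aux [IsAlgClosed F] (ht : 1 < v t)
    (hq : ∀ q : ℚ, q ≠ 0 → v (q : F) = 1)
    {A : Type} [CommGroup A] (β : A →* Raag Γ) (a : A) (ha : β a ≠ 1) :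
    ∃ f : A →* Multiplicative ℤ, f a ≠ 1 := by
  obtain ⟨J, _, -, χ, h1, h2⟩ := exists_chars ((rhoM Γ t (t_ne_zero ht)).comp β)
  obtain ⟨x, hx, hx1⟩ := exists_big_root Γ ht hq (β a) ha
  obtain ⟨j, hj⟩ := h2 a x hx
  have hne : ∀ a, χ j a ≠ 0 := fun a => ((Group.isUnit a).map (χ j)).ne_zero
  have hex := fun a => root_pow_factorial Γ ht hq (β a) (hne a) (h1 j a)
  choose e he using hex
  have hinj : Function.Injective fun k : ℤ => v t ^ k :=
    zpow_right_injective₀ (lt_trans zero_lt_one ht) ht.ne'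
  have hadd : ∀ a b, e (a * b) = e a + e b := by
    intro a b
    apply hinj
    simp only
    rw [← he, map_mul, map_mul, mul_pow, he, he,
      zpow_add₀ ((Valuation.ne_zero_iff _).2 (t_ne_zero ht))]
  refine ⟨MonoidHom.mk' (fun a => Multiplicative.ofAdd (e a)) ?_, ?_⟩
  · intro a b
    rw [hadd]; rfl
  · intro h
    have h0 : e a = 0 := h
    have := he a
    rw [h0, zpow_zero, hj] at this
    exact absurd this (one_lt_pow₀ hx1 (Nat.factorial_ne_zero _)).ne'

end Newton

theorem exists_hom_int {V : Type} [Fintype V] (Γ : SimpleGraph V)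
    {A : Type} [CommGroup A] (β : A →* Raag Γ) (a : A) (ha : β a ≠ 1) :
    ∃ f : A →* Multiplicative ℤ, f a ≠ 1 := by
  classical
  obtain ⟨F, _, _, _, Γ₀, _, v, t, ht, hq⟩ := exists_valued_field
  exact exists_hom_int_aux Γ ht hq β a ha

/-! ## Part 8: counting valuations -/

section Count
open Polynomial
variable {F : Type} [Field F] [CharZero F] {ι : Type} [Fintype ι]

/-- The rational span of the monomials of degree at most `l` in each variable. -/
def Qsp (u : ι → F) (l : ℕ) : Submodule ℚ F :=
  Submodule.span ℚ (Set.range fun e : ι → Fin (l + 1) => ∏ i, u i ^ (e i : ℕ))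

theorem Qsp_finrank (u : ι → F) (l : ℕ) :
    Module.finrank ℚ (Qsp u l) ≤ (l + 1) ^ Fintype.card ι := by
  classical
  refine (finrank_range_le_card _).trans ?_
  simp

instance Qsp_finite (u : ι → F) (l : ℕ) : Module.Finite ℚ (Qsp u l) :=
  Module.Finite.span_of_finite ℚ (Set.finite_range _)

theorem Qsp_mem (u : ι → F) (l : ℕ) (e : ι → ℕ) (he : ∀ i, e i ≤ l) :
    ∏ i, u i ^ e i ∈ Qsp u l :=
  Submodule.subset_span ⟨fun i => ⟨e i, Nat.lt_succ_of_le (he i)⟩, rfl⟩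

theorem Qsp_one (u : ι → F) (l : ℕ) : (1 : F) ∈ Qsp u l := by
  have := Qsp_mem u l (fun _ => 0) (fun _ => Nat.zero_le _)
  simpa using this

theorem Qsp_var (u : ι → F) (i : ι) : u i ∈ Qsp u 1 := by
  classical
  have := Qsp_mem u 1 (fun j => if j = i then 1 else 0) (fun j => by split_ifs <;> omega)
  simpa [pow_ite, Finset.prod_ite_eq'] using this

theorem Qsp_mono (u : ι → F) {l m : ℕ} (h : l ≤ m) : Qsp u l ≤ Qsp u m := by
  rw [Qsp, Submodule.span_le]
  rintro _ ⟨e, rfl⟩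
  exact Qsp_mem u m (fun i => e i) (fun i => by have := (e i).2; omega)

theorem Qsp_mul (u : ι → F) {l m : ℕ} {x y : F} (hx : x ∈ Qsp u l) (hy : y ∈ Qsp u m) :
    x * y ∈ Qsp u (l + m) := by
  have h : Qsp u l * Qsp u m ≤ Qsp u (l + m) := by
    rw [Qsp, Qsp, Submodule.span_mul_span, Submodule.span_le]
    rintro _ ⟨_, ⟨e, rfl⟩, _, ⟨f, rfl⟩, rfl⟩
    have := Qsp_mem u (l + m) (fun i => e i + f i)
      (fun i => by have := (e i).2; have := (f i).2; omega)
    simpa [pow_add, Finset.prod_mul_distrib] using this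
  exact h (Submodule.mul_mem_mul hx hy)

theorem Qsp_poly_mul (u : ι → F) {l m : ℕ} {p q : F[X]} (hp : ∀ k, p.coeff k ∈ Qsp u l)
    (hq : ∀ k, q.coeff k ∈ Qsp u m) (k : ℕ) : (p * q).coeff k ∈ Qsp u (l + m) := by
  rw [coeff_mul]
  exact sum_mem fun _ _ => Qsp_mul u (hp _) (hq _)

theorem Qsp_poly_prod (u : ι → F) {l : ℕ} {κ : Type} (s : Finset κ) (p : κ → F[X])
    (hp : ∀ i k, (p i).coeff k ∈ Qsp u l) (k : ℕ) :
    (∏ i ∈ s, p i).coeff k ∈ Qsp u (s.card * l) := by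
  classical
  induction s using Finset.induction_on generalizing k with
  | empty =>
    rw [Finset.prod_empty, coeff_one]
    split_ifs
    · exact Qsp_one _ _
    · exact zero_mem _
  | insert a s ha ih =>
    rw [Finset.prod_insert ha, Finset.card_insert_of_notMem ha, add_mul, one_mul, add_comm]
    exact Qsp_poly_mul u (hp a) ih k

theorem Qsp_charpoly (u : ι → F) {l : ℕ} {n : Type} [Fintype n] [DecidableEq n]
    (M : Matrix n n F) (hM : ∀ i j, M i j ∈ Qsp u l) (k : ℕ) :
    M.charpoly.coeff k ∈ Qsp u (Fintype.card n * l) := by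
  rw [Matrix.charpoly, Matrix.det_apply, finsetSum_coeff]
  refine sum_mem fun σ _ => ?_
  have h : (∏ i, M.charmatrix (σ i) i).coeff k ∈ Qsp u (Fintype.card n * l) := by
    refine Qsp_poly_prod u Finset.univ (fun i => M.charmatrix (σ i) i) ?_ k
    intro i k
    rw [Matrix.charmatrix_apply, coeff_sub, coeff_C]
    refine sub_mem ?_ ?_
    · rw [Matrix.diagonal_apply]
      split_ifs
      · rw [coeff_X]
        split_ifs
        · exact Qsp_one _ _
        · exact zero_mem _
      · rw [coeff_zero]; exact zero_mem _
    · split_ifs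
      · exact hM _ _
      · exact zero_mem _
  rw [Units.smul_def, coeff_smul]
  exact zsmul_mem h _

variable {Γ₀ : Type} [LinearOrderedCommGroupWithZero Γ₀] {v : Valuation F Γ₀}

theorem linInd_of_val (hq : ∀ q : ℚ, q ≠ 0 → v (q : F) = 1) {κ : Type} (x : κ → F)
    (h0 : ∀ i, x i ≠ 0) (hinj : Function.Injective fun i => v (x i)) :
    LinearIndependent ℚ x := by
  classical
  rw [linearIndependent_iff']
  intro s g hs
  by_contra hcon
  push Not at hcon
  obtain ⟨i0, hi0, hg0⟩ := hcon
  obtain ⟨j, hj, hmax⟩ := Finset.exists_max_image (s.filter fun i => g i ≠ 0)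
    (fun i => v (x i)) ⟨i0, by simp [hi0, hg0]⟩
  rw [Finset.mem_filter] at hj
  have hv : ∀ i, g i ≠ 0 → v (g i • x i) = v (x i) := by
    intro i hi
    rw [Rat.smul_def, map_mul, hq _ hi, one_mul]
  have h1 := Valuation.map_sum_eq_of_lt v hj.1 (f := fun i => g i • x i) (by
    intro i hi
    simp only [Finset.mem_sdiff, Finset.mem_singleton] at hi
    rw [hv j hj.2]
    by_cases hgi : g i = 0
    · rw [hgi, zero_smul, map_zero]
      exact zero_lt_iff.2 ((Valuation.ne_zero_iff _).2 (h0 j))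
    · rw [hv i hgi]
      exact lt_of_le_of_ne (hmax i (Finset.mem_filter.2 ⟨hi.1, hgi⟩)) fun h => hi.2 (hinj h))
  rw [hs, map_zero, hv j hj.2] at h1
  exact (Valuation.ne_zero_iff _).2 (h0 j) h1.symm

theorem card_val_le (hq : ∀ q : ℚ, q ≠ 0 → v (q : F) = 1) (u : ι → F) (l : ℕ) (T : Finset Γ₀)
    (hT : ∀ γ ∈ T, ∃ x ∈ Qsp u l, x ≠ 0 ∧ v x = γ) : T.card ≤ (l + 1) ^ Fintype.card ι := by
  choose! x hx using hT
  let y : T → Qsp u l := fun γ => ⟨x γ, (hx γ γ.2).1⟩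
  have hli : LinearIndependent ℚ y := by
    apply LinearIndependent.of_comp (Qsp u l).subtype
    refine linInd_of_val hq _ (fun γ => (hx γ γ.2).2.1) ?_
    intro γ γ' h
    have h' : v (x γ) = v (x γ') := h
    rw [(hx γ γ.2).2.2, (hx γ' γ'.2).2.2] at h'
    exact Subtype.ext h'
  have := hli.fintype_card_le_finrank
  rw [Fintype.card_coe] at this
  exact this.trans (Qsp_finrank u l)

end Count

/-! ## Part 9: the rank bound -/

section Rank
open Polynomial
variable {F : Type} [Field F] [CharZero F] [IsAlgClosed F]
variable {Γ₀ : Type} [LinearOrderedCommGroupWithZero Γ₀] {v : Valuation F Γ₀} {t : F}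
variable {V : Type} [Fintype V] [DecidableEq V] (Γ : SimpleGraph V) [DecidableRel Γ.Adj]

theorem count_box (ht : 1 < v t) (hq : ∀ q : ℚ, q ≠ 0 → v (q : F) = 1)
    {ι : Type} [Fintype ι] (u : ι → F) (l : ℕ)
    {A : Type} [CommGroup A] (β : A →* Raag Γ) (B : Finset A)
    (hB : ∀ a ∈ B, ∀ b ∈ B, a ≠ b → β (a * b⁻¹) ≠ 1)
    (hu : ∀ a ∈ B, ∀ i j, rhoM Γ t (t_ne_zero ht) (β a) i j ∈ Qsp u l) :
    B.card ≤ ((Fintype.card (V × Bool) + 1) *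
      (((Fintype.card (V × Bool) * l + 1) ^ Fintype.card ι) *
      ((Fintype.card (V × Bool) * l + 1) ^ Fintype.card ι))) ^ (Fintype.card (V × Bool) ^ 2) := by
  classical
  set n := Fintype.card (V × Bool) with hn
  obtain ⟨J, _, hJ, χ, h1, h2⟩ := exists_chars ((rhoM Γ t (t_ne_zero ht)).comp β)
  have hne : ∀ j a, χ j a ≠ 0 := fun j a => ((Group.isUnit a).map (χ j)).ne_zero
  have hex : ∀ (b : B) (j : J), ∃ (m : Fin (n + 1)) (y z : F), (m : ℕ) ≠ 0 ∧
      y ∈ Qsp u (n * l) ∧ z ∈ Qsp u (n * l) ∧ y ≠ 0 ∧ z ≠ 0 ∧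
      v (χ j b) ^ (m : ℕ) * v y = v z := by
    intro b j
    obtain ⟨i, k, hik, hk, hi0, hk0, h⟩ :=
      root_val_eq (v := v) (Matrix.charpoly_monic _) (hne j b) (h1 j b)
    rw [Matrix.charpoly_natDegree_eq_dim] at hk
    have hc := Qsp_charpoly u _ (hu b b.2)
    exact ⟨⟨k - i, by omega⟩, _, _, by simp only; omega, hc k, hc i, hk0, hi0, h⟩
  choose m y z hm hy hz hy0 hz0 h using hex
  let T : Finset Γ₀ := (Finset.univ.image fun p : B × J => v (y p.1 p.2)) ∪
    (Finset.univ.image fun p : B × J => v (z p.1 p.2))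
  have hT : T.card ≤ (n * l + 1) ^ Fintype.card ι := by
    apply card_val_le hq u
    intro γ hγ
    rcases Finset.mem_union.1 hγ with hγ | hγ
    · obtain ⟨p, -, rfl⟩ := Finset.mem_image.1 hγ
      exact ⟨_, hy _ _, hy0 _ _, rfl⟩
    · obtain ⟨p, -, rfl⟩ := Finset.mem_image.1 hγ
      exact ⟨_, hz _ _, hz0 _ _, rfl⟩
  have hyT : ∀ b j, v (y b j) ∈ T := fun b j =>
    Finset.mem_union_left _ (Finset.mem_image.2 ⟨(b, j), Finset.mem_univ _, rfl⟩)
  have hzT : ∀ b j, v (z b j) ∈ T := fun b j =>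
    Finset.mem_union_right _ (Finset.mem_image.2 ⟨(b, j), Finset.mem_univ _, rfl⟩)
  let f : B → (J → Fin (n + 1) × T × T) := fun b j => (m b j, ⟨_, hyT b j⟩, ⟨_, hzT b j⟩)
  have hf : Function.Injective f := by
    intro a b hab
    by_contra hne'
    have hab' : (a : A) ≠ b := fun h => hne' (Subtype.ext h)
    obtain ⟨x, hx, hx1⟩ := exists_big_root Γ ht hq _ (hB a a.2 b b.2 hab')
    obtain ⟨j, hj⟩ := h2 _ x hx
    have hj' := congrFun hab j
    simp only [f, Prod.mk.injEq, Subtype.mk.injEq] at hj'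
    obtain ⟨e1, e2, e3⟩ := hj'
    have ha := h a j
    rw [e1, e2, e3, ← h b j] at ha
    have hvy : v (y b j) ≠ 0 := (Valuation.ne_zero_iff _).2 (hy0 b j)
    have ha' := mul_right_cancel₀ hvy ha
    have heq : v (χ j a) = v (χ j b) := (pow_left_inj₀ zero_le zero_le (hm b j)).1 ha'
    have hprod : χ j (a * (b : A)⁻¹) * χ j b = χ j a := by
      rw [← map_mul, inv_mul_cancel_right]
    rw [hj] at hprod
    have h5 := congrArg v hprod
    rw [map_mul, heq] at h5
    have hvb : v (χ j b) ≠ 0 := (Valuation.ne_zero_iff _).2 (hne j b)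
    have : v x = 1 := mul_right_cancel₀ hvb (by rw [h5, one_mul])
    exact hx1.ne' this
  have hcard := Fintype.card_le_of_injective f hf
  simp only [Fintype.card_coe, Fintype.card_fun, Fintype.card_prod, Fintype.card_fin] at hcard
  refine hcard.trans ?_
  calc ((n + 1) * (T.card * T.card)) ^ Fintype.card J
      ≤ ((n + 1) * ((n * l + 1) ^ Fintype.card ι * (n * l + 1) ^ Fintype.card ι)) ^
        Fintype.card J := by gcongr
    _ ≤ _ := Nat.pow_le_pow_right (by positivity) hJ

/-- Uniform bound on matrix entries. -/
theorem entries_bound (ht : t ≠ 0) {G : Type} [Group G] (S : Finset G)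
    (hS : Subgroup.closure (S : Set G) = ⊤) (g : G) :
    ∃ c : ℕ, ∀ φ : G →* Raag Γ, ∀ i j, rhoM Γ t ht (φ g) i j ∈
      Qsp (fun p : (S × Bool) × ((V × Bool) × (V × Bool)) =>
        rhoM Γ t ht (φ (if p.1.2 then (p.1.1 : G) else (p.1.1 : G)⁻¹)) p.2.1 p.2.2) c := by
  have hmul : ∀ g h : G, ∀ (φ : G →* Raag Γ) (c d : ℕ) (u : (S × Bool) × ((V × Bool) × (V × Bool)) → F),
      (∀ i j, rhoM Γ t ht (φ g) i j ∈ Qsp u c) → (∀ i j, rhoM Γ t ht (φ h) i j ∈ Qsp u d) →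
      ∀ i j, rhoM Γ t ht (φ (g * h)) i j ∈ Qsp u (c + d) := by
    intro g h φ c d u h1 h2 i j
    rw [map_mul, map_mul, Matrix.mul_apply]
    exact sum_mem fun k _ => Qsp_mul u (h1 _ _) (h2 _ _)
  suffices H : ∃ c : ℕ, ∀ φ : G →* Raag Γ, ∀ i j,
      rhoM Γ t ht (φ g) i j ∈ Qsp (fun p : (S × Bool) × ((V × Bool) × (V × Bool)) =>
        rhoM Γ t ht (φ (if p.1.2 then (p.1.1 : G) else (p.1.1 : G)⁻¹)) p.2.1 p.2.2) c ∧
      rhoM Γ t ht (φ g⁻¹) i j ∈ Qsp (fun p : (S × Bool) × ((V × Bool) × (V × Bool)) =>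
        rhoM Γ t ht (φ (if p.1.2 then (p.1.1 : G) else (p.1.1 : G)⁻¹)) p.2.1 p.2.2) c by
    obtain ⟨c, hc⟩ := H
    exact ⟨c, fun φ i j => (hc φ i j).1⟩
  have hg : g ∈ Subgroup.closure (S : Set G) := hS ▸ Subgroup.mem_top g
  induction hg using Subgroup.closure_induction with
  | mem x hx =>
    refine ⟨1, fun φ i j => ⟨?_, ?_⟩⟩
    · exact Qsp_var (fun p : (S × Bool) × ((V × Bool) × (V × Bool)) =>
        rhoM Γ t ht (φ (if p.1.2 then (p.1.1 : G) else (p.1.1 : G)⁻¹)) p.2.1 p.2.2)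
        ((⟨x, hx⟩, true), (i, j))
    · exact Qsp_var (fun p : (S × Bool) × ((V × Bool) × (V × Bool)) =>
        rhoM Γ t ht (φ (if p.1.2 then (p.1.1 : G) else (p.1.1 : G)⁻¹)) p.2.1 p.2.2)
        ((⟨x, hx⟩, false), (i, j))
  | one =>
    refine ⟨0, fun φ i j => ?_⟩
    rw [inv_one, map_one, map_one, Matrix.one_apply]
    split_ifs
    · exact ⟨Qsp_one _ _, Qsp_one _ _⟩
    · exact ⟨zero_mem _, zero_mem _⟩
  | mul x y _ _ hx hy =>
    obtain ⟨c, hc⟩ := hx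
    obtain ⟨d, hd⟩ := hy
    refine ⟨c + d, fun φ i j => ⟨?_, ?_⟩⟩
    · exact hmul x y φ c d _ (fun i j => (hc φ i j).1) (fun i j => (hd φ i j).1) i j
    · rw [mul_inv_rev, add_comm c d]
      exact hmul _ _ φ d c _ (fun i j => (hd φ i j).2) (fun i j => (hc φ i j).2) i j
  | inv x _ hx =>
    obtain ⟨c, hc⟩ := hx
    refine ⟨c, fun φ i j => ⟨(hc φ i j).2, ?_⟩⟩
    rw [inv_inv]
    exact (hc φ i j).1

theorem rank_bound_aux (ht : 1 < v t) (hq : ∀ q : ℚ, q ≠ 0 → v (q : F) = 1)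
    {G : Type} [Group G] (S : Finset G) (hS : Subgroup.closure (S : Set G) = ⊤)
    (hG : FullyResidually (Raag Γ) G) {A : Type} [CommGroup A] (f : A →* G)
    (hf : Function.Injective f) (k : ℕ) (a : Fin k → A)
    (ha : ∀ e : Fin k → ℤ, ∏ i, a i ^ e i = 1 → e = 0) :
    k ≤ 2 * Fintype.card ((S × Bool) × ((V × Bool) × (V × Bool))) *
      Fintype.card (V × Bool) ^ 2 := by
  classical
  set n := Fintype.card (V × Bool) with hn
  set d := Fintype.card ((S × Bool) × ((V × Bool) × (V × Bool))) with hd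
  have h0 := t_ne_zero ht
  let u : (G →* Raag Γ) → (S × Bool) × ((V × Bool) × (V × Bool)) → F := fun φ p =>
    rhoM Γ t h0 (φ (if p.1.2 then (p.1.1 : G) else (p.1.1 : G)⁻¹)) p.2.1 p.2.2
  choose c hc using fun i => entries_bound Γ h0 S hS (f (a i))
  have hmul : ∀ (φ : G →* Raag Γ) (x y : A) (l m : ℕ),
      (∀ i j, rhoM Γ t h0 (φ (f x)) i j ∈ Qsp (u φ) l) →
      (∀ i j, rhoM Γ t h0 (φ (f y)) i j ∈ Qsp (u φ) m) →
      ∀ i j, rhoM Γ t h0 (φ (f (x * y))) i j ∈ Qsp (u φ) (l + m) := by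
    intro φ x y l m h1 h2 i j
    rw [map_mul, map_mul, map_mul, Matrix.mul_apply]
    exact sum_mem fun k _ => Qsp_mul _ (h1 _ _) (h2 _ _)
  have hone : ∀ (φ : G →* Raag Γ), ∀ i j, rhoM Γ t h0 (φ (f 1)) i j ∈ Qsp (u φ) 0 := by
    intro φ i j
    rw [map_one, map_one, map_one, Matrix.one_apply]
    split_ifs
    · exact Qsp_one _ _
    · exact zero_mem _
  have hpow : ∀ (φ : G →* Raag Γ) (i : Fin k) (e : ℕ) (x y),
      rhoM Γ t h0 (φ (f (a i ^ e))) x y ∈ Qsp (u φ) (e * c i) := by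
    intro φ i e
    induction e with
    | zero => simpa using hone φ
    | succ e ih =>
      rw [pow_succ, add_mul, one_mul]
      exact hmul φ _ _ _ _ ih (hc i φ)
  have hprod : ∀ (φ : G →* Raag Γ) (e : Fin k → ℕ) (s : Finset (Fin k)) (x y),
      rhoM Γ t h0 (φ (f (∏ i ∈ s, a i ^ e i))) x y ∈ Qsp (u φ) (∑ i ∈ s, e i * c i) := by
    intro φ e s
    induction s using Finset.induction_on with
    | empty => simpa using hone φ
    | insert i s hi ih =>
      rw [Finset.prod_insert hi, Finset.sum_insert hi]
      exact hmul φ _ _ _ _ (hpow φ i _) ih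
  let C := ∑ i, c i
  -- the counting inequality
  have key : ∀ L : ℕ, (L + 1) ^ k ≤
      ((n + 1) * (((n * (L * C) + 1) ^ d) * ((n * (L * C) + 1) ^ d))) ^ (n ^ 2) := by
    intro L
    let q : (Fin k → Fin (L + 1)) → A := fun e => ∏ i, a i ^ (e i : ℕ)
    have hqinj : Function.Injective q := by
      intro e e' h
      have h1 : ∏ i, a i ^ ((e i : ℤ) - (e' i : ℤ)) = 1 := by
        simp only [zpow_sub, Finset.prod_mul_distrib, Finset.prod_inv_distrib, zpow_natCast]
        rw [mul_inv_eq_one]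
        exact h
      have h2 := ha _ h1
      funext i
      have h3 := congrFun h2 i
      simp only [Pi.zero_apply] at h3
      apply Fin.ext
      omega
    let B : Finset A := Finset.univ.image q
    have hBc : B.card = (L + 1) ^ k := by
      rw [Finset.card_image_of_injective _ hqinj]; simp
    obtain ⟨φ, hφ⟩ := hG (((B ×ˢ B).filter fun p => p.1 ≠ p.2).image
      fun p => f (p.1 * p.2⁻¹)) (by
        intro g hg
        obtain ⟨p, hp, rfl⟩ := Finset.mem_image.1 hg
        rw [Finset.mem_filter] at hp
        intro h
        rw [← map_one f] at h
        exact hp.2 (mul_inv_eq_one.1 (hf h)))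
    rw [← hBc]
    refine count_box Γ ht hq (u φ) (L * C) (φ.comp f) B ?_ ?_
    · intro x hx y hy hxy
      exact hφ _ (Finset.mem_image.2 ⟨(x, y), by simp [hx, hy, hxy], rfl⟩)
    · intro x hx i j
      obtain ⟨e, -, rfl⟩ := Finset.mem_image.1 hx
      refine Qsp_mono (u φ) ?_ (hprod φ (fun i => e i) Finset.univ i j)
      rw [Finset.mul_sum]
      refine Finset.sum_le_sum fun i _ => Nat.mul_le_mul_right _ ?_
      have := (e i).2
      omega
  by_contra hk
  push Not at hk
  set N := 2 * d * n ^ 2 with hN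
  let K := (n + 1) ^ (n ^ 2) * (n * C + 1) ^ N
  have h1 : ∀ L : ℕ, (L + 1) ^ (N + 1) ≤ K * (L + 1) ^ N := by
    intro L
    calc (L + 1) ^ (N + 1) ≤ (L + 1) ^ k := Nat.pow_le_pow_right (by omega) hk
      _ ≤ _ := key L
      _ = (n + 1) ^ (n ^ 2) * (n * (L * C) + 1) ^ N := by
        rw [mul_pow, ← pow_add, ← pow_mul, hN]
        congr 2
        ring
      _ ≤ (n + 1) ^ (n ^ 2) * ((n * C + 1) * (L + 1)) ^ N := by
        gcongr
        nlinarith [Nat.zero_le (n * C), Nat.zero_le L]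
      _ = K * (L + 1) ^ N := by rw [mul_pow, mul_assoc]
  have h2 := h1 K
  rw [pow_succ, mul_comm] at h2
  have h3 := Nat.le_of_mul_le_mul_right h2 (by positivity)
  omega

end Rank

theorem rank_bound {V : Type} [Fintype V] (Γ : SimpleGraph V) (G : Type) [Group G]
    (hG : IsLimitGroupOver (Raag Γ) G) :
    ∃ N : ℕ, ∀ (A : Type) [CommGroup A] (f : A →* G), Function.Injective f →
      ∀ (k : ℕ) (a : Fin k → A), (∀ e : Fin k → ℤ, ∏ i, a i ^ e i = 1 → e = 0) → k ≤ N := by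
  classical
  obtain ⟨F, _, _, _, Γ₀, _, v, t, ht, hq⟩ := exists_valued_field
  obtain ⟨S, hS, hfin⟩ := Group.fg_iff.1 hG.1
  refine ⟨_, fun A _ f hf k a ha => rank_bound_aux Γ ht hq hfin.toFinset ?_ hG.2 f hf k a ha⟩
  simpa using hS

/-! ## Part 10: the algebraic conclusion -/

section Fin10

theorem triangular_indep {A : Type} [CommGroup A] {m : ℕ} (x : Fin m → A)
    (f : Fin m → (A →* Multiplicative ℤ)) (h1 : ∀ i, f i (x i) ≠ 1)
    (h2 : ∀ i j, j < i → f j (x i) = 1) (e : Fin m → ℤ) (he : ∏ i, x i ^ e i = 1) : e = 0 := by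
  have key : ∀ i, e i = 0 := by
    intro i
    induction i using WellFoundedLT.induction with
    | ind i ih =>
      have h := congrArg (f i) he
      rw [map_prod, map_one, Finset.prod_eq_single i] at h
      · rw [map_zpow] at h
        have h' : e i * Multiplicative.toAdd (f i (x i)) = 0 := by
          have := congrArg Multiplicative.toAdd h
          simpa using this
        rcases mul_eq_zero.1 h' with h3 | h3
        · exact h3
        · exact absurd (toAdd_eq_zero.1 h3) (h1 i)
      · intro j _ hj
        rcases lt_or_gt_of_ne hj with hlt | hgt
        · rw [ih j hlt, zpow_zero, map_one]
        · rw [map_zpow, h2 j i hgt, one_zpow]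
      · simp
  funext i
  exact key i

theorem free_of_sep {A : Type} [CommGroup A] (N : ℕ)
    (hsep : ∀ a : A, a ≠ 1 → ∃ f : A →* Multiplicative ℤ, f a ≠ 1)
    (hrank : ∀ (k : ℕ) (a : Fin k → A), (∀ e : Fin k → ℤ, ∏ i, a i ^ e i = 1 → e = 0) → k ≤ N) :
    ∃ k : ℕ, k ≤ N ∧ Nonempty (A ≃* Multiplicative (Fin k → ℤ)) := by
  classical
  let P : ℕ → Prop := fun m => ∃ (x : Fin m → A) (f : Fin m → (A →* Multiplicative ℤ)),
    (∀ i, f i (x i) ≠ 1) ∧ ∀ i j, j < i → f j (x i) = 1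
  have hP0 : P 0 := ⟨Fin.elim0, Fin.elim0, fun i => i.elim0, fun i => i.elim0⟩
  have hPle : ∀ m, P m → m ≤ N := by
    rintro m ⟨x, f, h1, h2⟩
    exact hrank m x (triangular_indep x f h1 h2)
  have hex : ∃ m, P m ∧ ¬ P (m + 1) := by
    by_contra hcon
    push Not at hcon
    have : ∀ m, P m := fun m => Nat.rec hP0 (fun m ih => hcon m ih) m
    have := hPle _ (this (N + 1))
    omega
  obtain ⟨m, hm, hm'⟩ := hex
  have hmN := hPle m hm
  obtain ⟨x, f, h1, h2⟩ := hm
  have hker : ∀ a : A, (∀ i, f i a = 1) → a = 1 := by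
    intro a ha
    by_contra hne
    obtain ⟨g, hg⟩ := hsep a hne
    apply hm'
    refine ⟨Fin.snoc (α := fun _ => A) x a,
      Fin.snoc (α := fun _ => A →* Multiplicative ℤ) f g, ?_, ?_⟩
    · intro i
      induction i using Fin.lastCases with
      | last => simpa using hg
      | cast i => simpa using h1 i
    · intro i j hij
      induction j using Fin.lastCases with
      | last => exact absurd hij (not_lt.2 (Fin.le_last i))
      | cast j =>
        induction i using Fin.lastCases with
        | last => simpa using ha j
        | cast i => simpa using h2 i j (by simpa using hij)
  let φ : Additive A →+ (Fin m → ℤ) :=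
    { toFun := fun a i => Multiplicative.toAdd (f i (Additive.toMul a))
      map_zero' := by funext i; simp
      map_add' := by intro a b; funext i; simp }
  have hφ : Function.Injective φ := by
    rw [injective_iff_map_eq_zero]
    intro a ha
    have : Additive.toMul a = 1 := hker _ fun i => toAdd_eq_zero.1 (congrFun ha i)
    exact this
  let ψ : Additive A →ₗ[ℤ] (Fin m → ℤ) := φ.toIntLinearMap
  have hψ : Function.Injective ψ := hφ
  let e : Additive A ≃ₗ[ℤ] LinearMap.range ψ := LinearEquiv.ofInjective ψ hψ
  let b := Module.finBasis ℤ (LinearMap.range ψ)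
  refine ⟨Module.finrank ℤ (LinearMap.range ψ), ?_, ?_⟩
  · refine le_trans ?_ hmN
    have := Submodule.finrank_le (LinearMap.range ψ)
    simpa using this
  · let e' := e.trans b.equivFun
    exact ⟨AddEquiv.toMultiplicativeRight e'.toAddEquiv⟩

end Fin10

theorem abelian_subgroups_of_limit_group_free_of_bounded_rank
    {V : Type} [Fintype V] (Γ : SimpleGraph V)
    (G : Type) [Group G] (hG : IsLimitGroupOver (Raag Γ) G) :
    ∃ N : ℕ, ∀ A : Subgroup G, (∀ a b : A, a * b = b * a) →
      ∃ k : ℕ, k ≤ N ∧ Nonempty (A ≃* Multiplicative (Fin k → ℤ)) := by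
  obtain ⟨N, hN⟩ := rank_bound Γ G hG
  refine ⟨N, fun A hA => ?_⟩
  let inst : CommGroup A := { (inferInstance : Group A) with mul_comm := hA }
  refine free_of_sep N ?_ (hN A A.subtype A.subtype_injective)
  intro a ha
  obtain ⟨φ, hφ⟩ := hG.2 {(a : G)} (by
    intro g hg
    rw [Finset.mem_singleton] at hg
    subst hg
    simpa using ha)
  exact exists_hom_int Γ (φ.comp A.subtype) a (hφ a (by simp))
end

section
/- Let H be a group and let G be a finitely generated group that is fully residually H. Then G embeds into an ultrapower of H: there exist an index set ι, an ultrafilter 𝒰 on ι, and an injective group homomorphism from G into the ultrapower H^𝒰. -/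
theorem fully_residually_embeds_in_ultrapower
    (H : Type) [Group H] (G : Type) [Group G]
    (hfg : Group.FG G) (hres : FullyResidually H G) :
    ∃ (ι : Type) (𝒰 : Ultrafilter ι) (φ : G →* Filter.Germ (𝒰 : Filter ι) H),
      Function.Injective φ := by
  classical
  -- index by finite subsets of `G`; each one gives a homomorphism nontrivial on its elements `≠ 1`
  have key : ∀ s : Finset G, ∃ φ : G →* H, ∀ g ∈ s, g ≠ 1 → φ g ≠ 1 := by
    intro s
    obtain ⟨φ, hφ⟩ := hres (s.filter (fun g => g ≠ 1))
      (fun g hg => (Finset.mem_filter.mp hg).2)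
    exact ⟨φ, fun g hg h1 => hφ g (Finset.mem_filter.mpr ⟨hg, h1⟩)⟩
  choose f hf using key
  let U : Ultrafilter (Finset G) := Ultrafilter.of Filter.atTop
  have hU : (U : Filter (Finset G)) ≤ Filter.atTop := Ultrafilter.of_le _
  let φ : G →* Filter.Germ (U : Filter (Finset G)) H :=
    { toFun := fun g => ((fun s => f s g : Finset G → H) : Filter.Germ (U : Filter (Finset G)) H)
      map_one' := by
        simp only [map_one]
        rfl
      map_mul' := by
        intro a b
        simp only [map_mul]
        rfl }
  refine ⟨Finset G, U, φ, ?_⟩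
  rw [injective_iff_map_eq_one]
  intro g hg
  by_contra h1
  have h2 : ∀ᶠ s in (U : Filter (Finset G)), f s g = 1 := Filter.Germ.coe_eq.mp hg
  have h3 : ∀ᶠ s in (U : Filter (Finset G)), g ∈ s := by
    refine hU ?_
    filter_upwards [Filter.eventually_ge_atTop ({g} : Finset G)] with s hs
    exact hs (Finset.mem_singleton_self g)
  obtain ⟨s, hs1, hs2⟩ := (h2.and h3).exists
  exact hf s g hs2 h1 hs1
end

section
/- Let H be an equationally Noetherian group and let G be a finitely generated group that embeds into an ultrapower of H, i.e., there exist an index set ι, an ultrafilter 𝒰 on ι, and an injective group homomorphism G → H^𝒰. Then G is fully residually H. -/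
/-- A group `H` is equationally Noetherian: every system of equations (with
coefficients in `H`), viewed as a subset of the free product `H ∗ Fₙ`, is
equivalent to a finite subsystem.  A "solution" of the system is a homomorphism
`H ∗ Fₙ →* H` restricting to the identity on `H` and killing the system. -/
def EqNoetherian (H : Type*) [Group H] : Prop :=
  ∀ (n : ℕ) (S : Set (Monoid.Coprod H (FreeGroup (Fin n)))),
    ∃ S₀ : Finset (Monoid.Coprod H (FreeGroup (Fin n))),
      ↑S₀ ⊆ S ∧
      ∀ φ : Monoid.Coprod H (FreeGroup (Fin n)) →* H,
        φ.comp Monoid.Coprod.inl = MonoidHom.id H →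
        (∀ s ∈ S₀, φ s = 1) → ∀ s ∈ S, φ s = 1

theorem subgroup_of_ultrapower_fully_residually
    (H : Type) [Group H] (hH : EqNoetherian H)
    (G : Type) [Group G] (hfg : Group.FG G)
    (hemb : ∃ (ι : Type) (𝒰 : Ultrafilter ι) (φ : G →* Filter.Germ (𝒰 : Filter ι) H),
      Function.Injective φ) :
    FullyResidually H G := by
  classical
  obtain ⟨ι, 𝒰, Φ, hΦ⟩ := hemb
  obtain ⟨n, π, hπ⟩ : ∃ (n : ℕ) (π : FreeGroup (Fin n) →* G), Function.Surjective π := by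
    obtain ⟨S, hS⟩ := Group.fg_def.1 hfg
    refine ⟨S.card, FreeGroup.lift (fun k => ((S.equivFin.symm k : S) : G)), ?_⟩
    rw [← MonoidHom.range_eq_top, ← top_le_iff, ← hS, Subgroup.closure_le]
    intro g hg
    exact ⟨FreeGroup.of (S.equivFin ⟨g, hg⟩), by simp⟩
  have hx : ∀ k : Fin n, ∃ x : ι → H, (x : Filter.Germ (𝒰 : Filter ι) H) =
      Φ (π (FreeGroup.of k)) := fun k => Quotient.exists_rep _
  choose x hx using hx
  let Ψ : FreeGroup (Fin n) →* (ι → H) := FreeGroup.lift x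
  have hΨ : ∀ w, ((Ψ w : ι → H) : Filter.Germ (𝒰 : Filter ι) H) = Φ (π w) := by
    intro w
    have : (Filter.Germ.coeMulHom (𝒰 : Filter ι)).comp Ψ = Φ.comp π := by
      ext k
      simpa [Ψ] using hx k
    exact DFunLike.congr_fun this w
  have hiff : ∀ w, π w = 1 ↔ ∀ᶠ i in (𝒰 : Filter ι), Ψ w i = 1 := by
    intro w
    rw [← map_eq_one_iff Φ hΦ, ← hΨ, ← Filter.Germ.coe_one, Filter.Germ.coe_eq]
    rfl
  intro s hs
  obtain ⟨S₀, hS₀, hsol⟩ := hH n (Monoid.Coprod.inr '' {w | π w = 1})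
  let E : ι → (Monoid.Coprod H (FreeGroup (Fin n)) →* H) := fun i =>
    Monoid.Coprod.lift (MonoidHom.id H) ((Pi.evalMonoidHom (fun _ : ι => H) i).comp Ψ)
  have h1 : ∀ᶠ i in (𝒰 : Filter ι), ∀ t ∈ S₀, E i t = 1 := by
    rw [Filter.eventually_all_finset]
    intro t ht
    obtain ⟨w, hw, rfl⟩ := hS₀ ht
    filter_upwards [(hiff w).1 hw] with i hi
    simpa [E] using hi
  choose r hr using hπ
  have h2 : ∀ᶠ i in (𝒰 : Filter ι), ∀ g ∈ s, Ψ (r g) i ≠ 1 := by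
    rw [Filter.eventually_all_finset]
    intro g hg
    have : ¬ ∀ᶠ i in (𝒰 : Filter ι), Ψ (r g) i = 1 := by
      rw [← hiff, hr]
      exact hs g hg
    exact Ultrafilter.eventually_not.2 this
  obtain ⟨i, hi1, hi2⟩ := (h1.and h2).exists
  have hker : ∀ w, π w = 1 → Ψ w i = 1 := by
    intro w hw
    have := hsol (E i) (by ext; simp [E]) hi1 _ ⟨w, hw, rfl⟩
    simpa [E] using this
  let ψ : FreeGroup (Fin n) →* H := (Pi.evalMonoidHom (fun _ : ι => H) i).comp Ψ
  have hle : π.ker ≤ ψ.ker := fun w hw => hker w hw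
  refine ⟨π.liftOfRightInverse r hr ⟨ψ, hle⟩, fun g hg => ?_⟩
  have := π.liftOfRightInverse_comp_apply r hr ⟨ψ, hle⟩ (r g)
  rw [hr] at this
  rw [this]
  exact hi2 g hg
end

section
/- Let Γ be a simplicial graph with countably many vertices such that the equivalence relation on V(Γ) defined by v ~ u ⟺ v^⊥ = u^⊥ has exactly n equivalence classes, where n is finite. Then the partially commutative group 𝔾(Γ) embeds into a partially commutative group on 2n generators: there exist a finite simplicial graph Δ with 2n vertices and an injective group homomorphism 𝔾(Γ) → 𝔾(Δ). (Concretely, one may take Δ to have vertex set the pairs ([v], i) with [v] a ~-class and i ∈ {1,2}, where ([v], i) and ([u], j) are adjacent in Δ if and only if representatives of [v] and [u] are adjacent in Γ.) -/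
/-- The equivalence relation `v ~ u ↔ v^⊥ = u^⊥` on the vertices of a graph. -/
def neighborSetoid {V : Type*} (Γ : SimpleGraph V) : Setoid V :=
  Setoid.ker fun v => Γ.neighborSet v

namespace RaagEmbed

/-- generator -/
def gen {V : Type*} (Γ : SimpleGraph V) (v : V) : Raag Γ := PresentedGroup.of v

lemma gen_comm {V : Type*} (Γ : SimpleGraph V) {u v : V} (h : Γ.Adj u v) :
    gen Γ u * gen Γ v = gen Γ v * gen Γ u := by
  have h1 : PresentedGroup.mk (raagRels Γ) (FreeGroup.of u * FreeGroup.of v * (FreeGroup.of u)⁻¹ *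
      (FreeGroup.of v)⁻¹) = 1 := by
    apply PresentedGroup.one_of_mem
    exact ⟨u, v, h, rfl⟩
  simp only [map_mul, map_inv] at h1
  have h2 : gen Γ u * gen Γ v * (gen Γ u)⁻¹ * (gen Γ v)⁻¹ = 1 := h1
  rw [mul_inv_eq_one, mul_inv_eq_iff_eq_mul] at h2
  exact h2

/-- universal property -/
def rlift {V : Type*} (Γ : SimpleGraph V) {H : Type*} [Group H] (f : V → H)
    (hf : ∀ u v, Γ.Adj u v → Commute (f u) (f v)) : Raag Γ →* H :=
  PresentedGroup.toGroup (f := f) (by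
    rintro r ⟨u, v, h, rfl⟩
    simp only [map_mul, map_inv, FreeGroup.lift_apply_of]
    rw [mul_inv_eq_one, mul_inv_eq_iff_eq_mul]
    exact hf u v h)

@[simp] lemma rlift_gen {V : Type*} (Γ : SimpleGraph V) {H : Type*} [Group H] (f : V → H)
    (hf : ∀ u v, Γ.Adj u v → Commute (f u) (f v)) (v : V) : rlift Γ f hf (gen Γ v) = f v :=
  PresentedGroup.toGroup.of _

lemma rext {V : Type*} {Γ : SimpleGraph V} {H : Type*} [Group H] {f g : Raag Γ →* H}
    (h : ∀ v, f (gen Γ v) = g (gen Γ v)) : f = g :=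
  PresentedGroup.ext h

/-- The endomorphism `(x,i) ↦ (x,0)^i (x,1) (x,0)^(-i)` of a free group. -/
def theta (X : Type*) : FreeGroup (X × ℕ) →* FreeGroup (X × ℕ) :=
  FreeGroup.lift fun p => FreeGroup.of (p.1, 0) ^ p.2 * FreeGroup.of (p.1, 1) *
    (FreeGroup.of (p.1, 0) ^ p.2)⁻¹

/-- Free group automorphisms induced by a group action on the basis. -/
def act (G Y : Type*) [Group G] [MulAction G Y] : G →* MulAut (FreeGroup Y) where
  toFun g := FreeGroup.freeGroupCongr (MulAction.toPerm g)
  map_one' := by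
    apply MulEquiv.toMonoidHom_injective
    ext x
    simp
  map_mul' a b := by
    apply MulEquiv.toMonoidHom_injective
    ext x
    simp [mul_smul]

@[simp] lemma act_of (G Y : Type*) [Group G] [MulAction G Y] (g : G) (y : Y) :
    act G Y g (FreeGroup.of y) = FreeGroup.of (g • y) := by
  simp [act]

/-- Action on the first coordinate only. -/
@[reducible] def fstAction (G X I : Type*) [Group G] [MulAction G X] : MulAction G (X × I) where
  smul g p := (g • p.1, p.2)
  one_smul p := by
    change ((1 : G) • p.1, p.2) = p
    simp
  mul_smul a b p := by
    change ((a * b) • p.1, p.2) = (a • b • p.1, p.2)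
    rw [mul_smul]

/-- action on the free group on `X × I` -/
def act1 (G X I : Type*) [Group G] [MulAction G X] : G →* MulAut (FreeGroup (X × I)) :=
  letI := fstAction G X I
  act G (X × I)

@[simp] lemma act1_of (G X I : Type*) [Group G] [MulAction G X] (g : G) (x : X) (i : I) :
    act1 G X I g (FreeGroup.of (x, i)) = FreeGroup.of (g • x, i) :=
  letI := fstAction G X I
  act_of G (X × I) g (x, i)

lemma theta_injective (X : Type*) : Function.Injective (theta X) := by
  classical
  let N := FreeGroup (FreeGroup X × X)
  let a : FreeGroup X →* MulAut N := act1 (FreeGroup X) (FreeGroup X) X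
  let κ : FreeGroup (X × ℕ) →* N ⋊[a] FreeGroup X :=
    FreeGroup.lift fun p => if p.2 = 0 then SemidirectProduct.inr (FreeGroup.of p.1) else
      SemidirectProduct.inl (FreeGroup.of (1, p.1))
  let j : X × ℕ → FreeGroup X × X := fun p => (FreeGroup.of p.1 ^ p.2, p.1)
  have hj : Function.Injective j := by
    rintro ⟨x, i⟩ ⟨y, k⟩ h
    simp only [j, Prod.mk.injEq] at h
    obtain ⟨h1, rfl⟩ := h
    have := congrArg (FreeGroup.lift (fun _ : X => Multiplicative.ofAdd (1 : ℤ))) h1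
    simp only [map_pow, FreeGroup.lift_apply_of, ← ofAdd_nsmul] at this
    have := Multiplicative.ofAdd.injective this
    simp at this
    simp [this]
  have hc : κ.comp (theta X) = (SemidirectProduct.inl).comp (FreeGroup.map j) := by
    ext1 ⟨x, i⟩
    simp only [theta, κ, j, MonoidHom.comp_apply, FreeGroup.lift_apply_of, map_mul, map_pow, map_inv,
      FreeGroup.map.of, if_true, one_ne_zero, if_false]
    rw [← map_pow, ← map_inv, ← SemidirectProduct.inl_aut]
    have h1 := act1_of (FreeGroup X) (FreeGroup X) X (FreeGroup.of x ^ i) 1 x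
    rw [smul_eq_mul, mul_one] at h1
    exact congrArg _ h1
  have hi : Function.Injective (κ.comp (theta X)) := by
    rw [hc]
    exact SemidirectProduct.inl_injective.comp (FreeGroup.map_injective hj)
  exact Function.Injective.of_comp (f := κ) hi

section Psi

variable {Q : Type*} [DecidableEq Q] (G : SimpleGraph Q)

/-- The blown-up graph. -/
def big : SimpleGraph (Q × ℕ) := G.comap Prod.fst

/-- images of generators under `psi` -/
def psiFun (s : Finset Q) (p : Q × ℕ) : Raag (big G) :=
  if p.1 ∈ s then gen (big G) (p.1, 0) ^ p.2 * gen (big G) (p.1, 1) *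
    (gen (big G) (p.1, 0) ^ p.2)⁻¹ else gen (big G) p

lemma gen_commute {p q : Q} (h : G.Adj p q) (i j : ℕ) :
    Commute (gen (big G) (p, i)) (gen (big G) (q, j)) :=
  gen_comm (big G) (u := (p, i)) (v := (q, j)) h

lemma psiFun_commute (s : Finset Q) (u v : Q × ℕ) (h : (big G).Adj u v) :
    Commute (psiFun G s u) (psiFun G s v) := by
  obtain ⟨p, i⟩ := u
  obtain ⟨q, j⟩ := v
  have h' : G.Adj p q := h
  have key : ∀ x : Raag (big G), (∀ k, Commute (gen (big G) (p, k)) x) →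
      Commute (psiFun G s (p, i)) x := by
    intro x hx
    unfold psiFun
    split_ifs
    · exact ((((hx 0).pow_left _).mul_left (hx 1))).mul_left ((hx 0).pow_left _).inv_left
    · exact hx i
  apply key
  intro k
  unfold psiFun
  have hx := fun l => gen_commute G h' k l
  split_ifs
  · exact ((((hx 0).pow_right _).mul_right (hx 1))).mul_right ((hx 0).pow_right _).inv_right
  · exact hx j

/-- The partial substitution endomorphism. -/
def psi (s : Finset Q) : Raag (big G) →* Raag (big G) :=
  rlift (big G) (psiFun G s) (psiFun_commute G s)

lemma psi_insert (q : Q) (s : Finset Q) (hq : q ∉ s) :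
    psi G (insert q s) = (psi G {q}).comp (psi G s) := by
  apply rext
  rintro ⟨p, i⟩
  simp only [psi, MonoidHom.comp_apply, rlift_gen]
  by_cases hp : p = q
  · subst hp
    simp [psiFun, hq]
  · by_cases hs : p ∈ s <;> simp [psiFun, hp, hs]

lemma psi_single (q : Q) : Function.Injective (psi G {q}) := by
  let R := Raag (big G)
  let A : Subgroup R := Subgroup.centralizer (Set.range fun i : ℕ => gen (big G) (q, i))
  let X := R ⧸ A
  let a : R →* MulAut (FreeGroup (X × ℕ)) := act1 R X ℕ
  let x0 : X := ((1 : R) : R ⧸ A)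
  have hfix : ∀ p i, G.Adj p q → gen (big G) (p, i) • x0 = x0 := by
    intro p i h
    change (((gen (big G) (p, i) * 1 : R)) : R ⧸ A) = ((1 : R) : R ⧸ A)
    rw [eq_comm, QuotientGroup.eq]
    simp only [inv_one, one_mul, mul_one]
    rw [Subgroup.mem_centralizer_iff]
    rintro _ ⟨k, rfl⟩
    exact (gen_commute G h i k).symm.eq
  -- the map to the semidirect product
  let αf : Q × ℕ → FreeGroup (X × ℕ) ⋊[a] R := fun p =>
    if p.1 = q then SemidirectProduct.inl (FreeGroup.of (x0, p.2)) else
      SemidirectProduct.inr (gen (big G) p)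
  have hmix : ∀ p i k, G.Adj p q → Commute
      (SemidirectProduct.inr (gen (big G) (p, i)) : FreeGroup (X × ℕ) ⋊[a] R)
      (SemidirectProduct.inl (FreeGroup.of (x0, k))) := by
    intro p i k h
    have h1 := SemidirectProduct.inl_aut (φ := a) (gen (big G) (p, i)) (FreeGroup.of (x0, k))
    simp only [a, act1_of, hfix p i h] at h1
    rw [map_inv, eq_mul_inv_iff_mul_eq] at h1
    exact h1.symm
  let α : R →* FreeGroup (X × ℕ) ⋊[a] R := rlift (big G) αf (by
    rintro ⟨p, i⟩ ⟨r, k⟩ h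
    have h' : G.Adj p r := h
    by_cases hp : p = q
    · by_cases hr : r = q
      · subst hp hr
        exact absurd h' (G.loopless.irrefl _)
      · simp only [αf, hp, hr, if_true, if_false]
        exact (hmix r k i (hp ▸ h'.symm)).symm
    · by_cases hr : r = q
      · simp only [αf, hp, hr, if_true, if_false]
        exact hmix p i k (hr ▸ h')
      · simp only [αf, hp, hr, if_false]
        exact (gen_commute G h' i k).map _)
  have hαq : ∀ i, α (gen (big G) (q, i)) = SemidirectProduct.inl (FreeGroup.of (x0, i)) := by
    intro i
    refine (rlift_gen (big G) αf _ (q, i)).trans ?_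
    exact if_pos rfl
  have hαn : ∀ p i, p ≠ q → α (gen (big G) (p, i)) = SemidirectProduct.inr (gen (big G) (p, i)) := by
    intro p i h
    refine (rlift_gen (big G) αf _ (p, i)).trans ?_
    exact if_neg h
  -- its left inverse
  let ξ : X × ℕ → R := fun y => Quotient.liftOn' y.1
    (fun b : R => b * gen (big G) (q, y.2) * b⁻¹) (by
      intro b c h
      rw [QuotientGroup.leftRel_apply, Subgroup.mem_centralizer_iff] at h
      have := h _ ⟨y.2, rfl⟩
      simp only at this ⊢
      rw [mul_inv_eq_iff_eq_mul]
      calc b * gen (big G) (q, y.2) = b * (gen (big G) (q, y.2) * (b⁻¹ * c)) * c⁻¹ * b := by group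
        _ = _ := by rw [this]; group)
  have hξ : ∀ (b : R) (i : ℕ), ξ ((b : R ⧸ A), i) = b * gen (big G) (q, i) * b⁻¹ :=
    fun b i => rfl
  let β : FreeGroup (X × ℕ) ⋊[a] R →* R :=
    SemidirectProduct.lift (FreeGroup.lift ξ) (MonoidHom.id R) (by
      intro g
      ext1 ⟨x, i⟩
      obtain ⟨b, rfl⟩ := QuotientGroup.mk_surjective x
      have hs : g • ((b : R) : R ⧸ A) = ((g * b : R) : R ⧸ A) := rfl
      simp only [a, MonoidHom.comp_apply, MulEquiv.coe_toMonoidHom, act1_of,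
        FreeGroup.lift_apply_of, MonoidHom.id_apply, MulAut.conj_apply]
      rw [hs, hξ, hξ]
      group)
  have hβα : β.comp α = MonoidHom.id R := by
    apply rext
    rintro ⟨p, i⟩
    rw [MonoidHom.comp_apply]
    by_cases h : p = q
    · subst h
      rw [hαq]
      simp only [β, SemidirectProduct.lift_inl, FreeGroup.lift_apply_of, x0, hξ]
      exact (by group : (1 : R) * gen (big G) (p, i) * 1⁻¹ = gen (big G) (p, i))
    · rw [hαn p i h]
      simp only [β, SemidirectProduct.lift_inr]
  have hα : Function.Injective α := by
    intro x y h
    have := congrArg β h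
    rw [← MonoidHom.comp_apply, ← MonoidHom.comp_apply, hβα] at this
    exact this
  let M : FreeGroup (X × ℕ) ⋊[a] R →* FreeGroup (X × ℕ) ⋊[a] R :=
    SemidirectProduct.map (theta X) (MonoidHom.id R) (by
      intro g
      ext1 ⟨x, i⟩
      simp [a, theta])
  have hM : Function.Injective M := by
    intro u v h
    have h1 := congrArg SemidirectProduct.left h
    have h2 := congrArg SemidirectProduct.right h
    simp only [M, SemidirectProduct.map_left, SemidirectProduct.map_right] at h1 h2
    exact SemidirectProduct.ext (theta_injective X h1) h2
  have hcomp : α.comp (psi G {q}) = M.comp α := by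
    apply rext
    rintro ⟨p, i⟩
    by_cases h : p = q
    · subst h
      have h1 : psi G {p} (gen (big G) (p, i)) = gen (big G) (p, 0) ^ i * gen (big G) (p, 1) *
          (gen (big G) (p, 0) ^ i)⁻¹ := by simp [psi, psiFun]
      rw [MonoidHom.comp_apply, MonoidHom.comp_apply, h1, hαq, map_mul, map_mul, map_inv, map_pow,
        hαq, hαq]
      simp [M, theta]
    · have h1 : psi G {q} (gen (big G) (p, i)) = gen (big G) (p, i) := by simp [psi, psiFun, h]
      rw [MonoidHom.comp_apply, MonoidHom.comp_apply, h1, hαn p i h]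
      simp [M]
  have : Function.Injective (α.comp (psi G {q})) := by
    rw [hcomp]
    exact hM.comp hα
  exact Function.Injective.of_comp (f := α) this

lemma psi_injective (s : Finset Q) : Function.Injective (psi G s) := by
  induction s using Finset.induction_on with
  | empty =>
    have : psi G ∅ = MonoidHom.id _ := by
      apply rext
      intro v
      simp [psi, psiFun]
    rw [this]
    exact fun _ _ h => h
  | insert q s hq ih =>
    rw [psi_insert G q s hq]
    exact (psi_single G q).comp ih

end Psi

/-- Blow-up embeds in the doubled graph. -/
lemma big_embeds {Q W : Type*} [Fintype Q] [DecidableEq Q] (G : SimpleGraph Q) (e : W ≃ Q × Bool) :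
    ∃ φ : Raag (big G) →* Raag (G.comap fun w => (e w).1), Function.Injective φ := by
  set Δ := G.comap fun w => (e w).1 with hΔ
  have hcom : ∀ p q : Q, G.Adj p q → ∀ b c,
      Commute (gen Δ (e.symm (p, b))) (gen Δ (e.symm (q, c))) := by
    intro p q h b c
    apply gen_comm
    simpa [hΔ] using h
  let φ : Raag (big G) →* Raag Δ := rlift (big G)
    (fun p => gen Δ (e.symm (p.1, false)) ^ p.2 * gen Δ (e.symm (p.1, true)) *
      (gen Δ (e.symm (p.1, false)) ^ p.2)⁻¹) (by
    rintro ⟨p, i⟩ ⟨q, j⟩ h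
    have hx := hcom p q h
    have h1 : ∀ b, Commute (gen Δ (e.symm (p, b))) (gen Δ (e.symm (q, false)) ^ j *
      gen Δ (e.symm (q, true)) * (gen Δ (e.symm (q, false)) ^ j)⁻¹) := fun b =>
      (((hx b false).pow_right _).mul_right (hx b true)).mul_right ((hx b false).pow_right _).inv_right
    exact (((h1 false).pow_left _).mul_left (h1 true)).mul_left ((h1 false).pow_left _).inv_left)
  let ι : Raag Δ →* Raag (big G) := rlift Δ
    (fun w => gen (big G) ((e w).1, if (e w).2 then 1 else 0)) (by
      intro u v h
      exact gen_commute G h _ _)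
  have hc : ι.comp φ = psi G Finset.univ := by
    apply rext
    rintro ⟨p, i⟩
    simp [ι, φ, psi, psiFun]
  refine ⟨φ, Function.Injective.of_comp (f := ι) ?_⟩
  have := psi_injective G Finset.univ
  rw [← hc] at this
  exact this

/-- The group embeds in the blow-up. -/
lemma embeds_big {V Q : Type*} [Countable V] (Γ : SimpleGraph V) (G : SimpleGraph Q) (c : V → Q)
    (hc : ∀ u v, Γ.Adj u v ↔ G.Adj (c u) (c v)) :
    ∃ φ : Raag Γ →* Raag (big G), Function.Injective φ := by
  classical
  obtain ⟨enc, henc⟩ := exists_injective_nat V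
  let φ : Raag Γ →* Raag (big G) := rlift Γ (fun v => gen (big G) (c v, enc v))
    (fun u v h => gen_commute G ((hc u v).1 h) _ _)
  let ρ : Raag (big G) →* Raag Γ := rlift (big G)
    (fun p => if h : ∃ v, c v = p.1 ∧ enc v = p.2 then gen Γ h.choose else 1) (by
      rintro ⟨p, i⟩ ⟨q, j⟩ h
      have h' : G.Adj p q := h
      simp only
      split_ifs with h1 h2
      · apply gen_comm
        rw [hc, h1.choose_spec.1, h2.choose_spec.1]
        exact h'
      all_goals simp)
  have hid : ρ.comp φ = MonoidHom.id _ := by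
    apply rext
    intro v
    have hex : ∃ u, c u = c v ∧ enc u = enc v := ⟨v, rfl, rfl⟩
    simp only [MonoidHom.comp_apply, φ, ρ, rlift_gen, MonoidHom.id_apply]
    rw [dif_pos hex, henc hex.choose_spec.2]
  refine ⟨φ, Function.Injective.of_comp (f := ρ) ?_⟩
  rw [← MonoidHom.coe_comp, hid]
  exact fun _ _ h => h

end RaagEmbed

theorem pc_group_with_n_deflation_classes_embeds_in_2n_generated
    {V : Type} [Countable V] (Γ : SimpleGraph V) (n : ℕ)
    (hclasses : Nonempty (Quotient (neighborSetoid Γ) ≃ Fin n)) :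
    ∃ (Δ : SimpleGraph (Fin (2 * n))) (φ : Raag Γ →* Raag Δ),
      Function.Injective φ := by
  obtain ⟨f⟩ := hclasses
  let c : V → Fin n := fun v => f (Quotient.mk (neighborSetoid Γ) v)
  let s : Fin n → V := fun i => (f.symm i).out
  have hs : ∀ v, Γ.neighborSet (s (c v)) = Γ.neighborSet v := by
    intro v
    have h : (neighborSetoid Γ).r (s (c v)) v := by
      apply Quotient.exact (s := neighborSetoid Γ)
      simp [s, c]
    exact h
  have hs' : ∀ v u, Γ.Adj (s (c v)) u ↔ Γ.Adj v u := fun v u => by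
    rw [← SimpleGraph.mem_neighborSet, hs, SimpleGraph.mem_neighborSet]
  let G : SimpleGraph (Fin n) := Γ.comap s
  have hc : ∀ u v, Γ.Adj u v ↔ G.Adj (c u) (c v) := by
    intro u v
    change _ ↔ Γ.Adj (s (c u)) (s (c v))
    rw [hs', Γ.adj_comm u, Γ.adj_comm u, hs']
  have e : Fin (2 * n) ≃ Fin n × Bool := Fintype.equivOfCardEq (by simp [mul_comm])
  obtain ⟨φ₁, h₁⟩ := RaagEmbed.embeds_big Γ G c hc
  obtain ⟨φ₂, h₂⟩ := RaagEmbed.big_embeds G e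
  exact ⟨_, φ₂.comp φ₁, h₂.comp h₁⟩
end

section
/- For every n ∈ ℕ there exists a finite simplicial graph Δ_n with the following universal property: for every simplicial graph Γ with countably many vertices such that the equivalence relation on V(Γ) defined by v ~ u ⟺ v^⊥ = u^⊥ has at most n equivalence classes, there is an injective group homomorphism 𝔾(Γ) → 𝔾(Δ_n). In other words, for every n there is a single finitely generated partially commutative group containing every such partially commutative group. -/
namespace RaagAux

theorem comm_of {V : Type*} {Γ : SimpleGraph V} {u v : V} (h : Γ.Adj u v) :
    Commute (PresentedGroup.of u : Raag Γ) (PresentedGroup.of v) := by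
  have h1 : PresentedGroup.mk (raagRels Γ)
      (FreeGroup.of u * FreeGroup.of v * (FreeGroup.of u)⁻¹ * (FreeGroup.of v)⁻¹) = 1 :=
    PresentedGroup.one_of_mem ⟨u, v, h, rfl⟩
  simp only [map_mul, map_inv] at h1
  have h2 : (PresentedGroup.of u : Raag Γ) * PresentedGroup.of v * (PresentedGroup.of u)⁻¹ *
    (PresentedGroup.of v)⁻¹ = 1 := h1
  rw [mul_inv_eq_one, mul_inv_eq_iff_eq_mul] at h2
  exact h2

/-- Universal property of a partially commutative group. -/
def lift {V : Type*} {Γ : SimpleGraph V} {H : Type*} [Group H] (g : V → H)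
    (hg : ∀ u v, Γ.Adj u v → Commute (g u) (g v)) : Raag Γ →* H :=
  PresentedGroup.toGroup (f := g) (by
    rintro r ⟨u, v, h, rfl⟩
    simp only [map_mul, map_inv, FreeGroup.lift_apply_of]
    rw [mul_inv_eq_one, mul_inv_eq_iff_eq_mul]
    exact hg u v h)

@[simp] theorem lift_of {V : Type*} {Γ : SimpleGraph V} {H : Type*} [Group H] (g : V → H)
    (hg : ∀ u v, Γ.Adj u v → Commute (g u) (g v)) (v : V) :
    lift g hg (PresentedGroup.of v : Raag Γ) = g v :=
  PresentedGroup.toGroup.of _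

/-- The blow-up of a graph, every vertex being replaced by a copy of `ℤ`. -/
def blow {n : ℕ} (G : SimpleGraph (Fin n)) : SimpleGraph (Fin n × ℤ) := G.comap Prod.fst

/-- Shifting the fibres of the blow-up. -/
def shiftHom {n : ℕ} (G : SimpleGraph (Fin n)) (x : Fin n → ℤ) :
    Raag (blow G) →* Raag (blow G) :=
  lift (fun p => PresentedGroup.of (p.1, p.2 + x p.1)) (fun _ _ h => comm_of (by exact h))

theorem shiftHom_of {n : ℕ} (G : SimpleGraph (Fin n)) (x : Fin n → ℤ) (p : Fin n × ℤ) :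
    shiftHom G x (PresentedGroup.of p) = PresentedGroup.of (p.1, p.2 + x p.1) :=
  lift_of _ _ _

theorem shiftHom_add {n : ℕ} (G : SimpleGraph (Fin n)) (x y : Fin n → ℤ) :
    shiftHom G (x + y) = (shiftHom G x).comp (shiftHom G y) := by
  apply PresentedGroup.ext
  intro p
  simp only [MonoidHom.comp_apply, shiftHom_of, Pi.add_apply]
  congr 2
  ring

theorem shiftHom_zero {n : ℕ} (G : SimpleGraph (Fin n)) :
    shiftHom G 0 = MonoidHom.id _ := by
  apply PresentedGroup.ext
  intro p
  simp [shiftHom_of]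

/-- The shift action as a homomorphism into the automorphism group. -/
def shift {n : ℕ} (G : SimpleGraph (Fin n)) :
    Multiplicative (Fin n → ℤ) →* MulAut (Raag (blow G)) where
  toFun x := MonoidHom.toMulEquiv (shiftHom G x.toAdd) (shiftHom G (-x.toAdd))
    (by rw [← shiftHom_add, neg_add_cancel, shiftHom_zero])
    (by rw [← shiftHom_add, add_neg_cancel, shiftHom_zero])
  map_one' := by
    ext y
    exact DFunLike.congr_fun (shiftHom_zero G) y
  map_mul' x y := by
    ext z
    exact DFunLike.congr_fun (shiftHom_add G x.toAdd y.toAdd) z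

theorem shift_of {n : ℕ} (G : SimpleGraph (Fin n)) (x : Multiplicative (Fin n → ℤ))
    (p : Fin n × ℤ) :
    shift G x (PresentedGroup.of p) = PresentedGroup.of (p.1, p.2 + x.toAdd p.1) :=
  shiftHom_of G _ p

/-- The vertices of the universal graph. -/
abbrev X (n : ℕ) := SimpleGraph (Fin n) × Fin n × Bool

/-- The universal graph: the disjoint union of the doubles of all graphs on `Fin n`. -/
def univGraph (n : ℕ) : SimpleGraph (X n) where
  Adj p q := p.1 = q.1 ∧ p.1.Adj p.2.1 q.2.1
  symm := ⟨by
    rintro ⟨G, i, b⟩ ⟨G', j, b'⟩ ⟨h, h'⟩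
    dsimp only at h h' ⊢
    subst h
    exact ⟨rfl, h'.symm⟩⟩
  loopless := ⟨fun p h => p.1.loopless.irrefl _ h.2⟩

/-- The target of the detecting homomorphism. -/
abbrev Tgt {n : ℕ} (G : SimpleGraph (Fin n)) :=
  Raag (blow G) ⋊[shift G] Multiplicative (Fin n → ℤ)

open Classical in
/-- The detecting homomorphism on generators. -/
noncomputable def det {n : ℕ} (G : SimpleGraph (Fin n)) (p : X n) : Tgt G :=
  if p.1 = G then
    (if p.2.2 then SemidirectProduct.inl (PresentedGroup.of (p.2.1, 0))
      else SemidirectProduct.inr (Multiplicative.ofAdd (Pi.single p.2.1 1)))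
  else 1

theorem comm_lr {n : ℕ} (G : SimpleGraph (Fin n)) {i j : Fin n} (h : i ≠ j) :
    Commute (SemidirectProduct.inl (PresentedGroup.of (i, 0)) : Tgt G)
      (SemidirectProduct.inr (Multiplicative.ofAdd (Pi.single j 1))) := by
  have := SemidirectProduct.inl_aut (φ := shift G) (Multiplicative.ofAdd (Pi.single j 1))
    (PresentedGroup.of (i, 0))
  rw [shift_of] at this
  simp only [toAdd_ofAdd, Pi.single_eq_of_ne h, add_zero, map_inv] at this
  exact eq_mul_inv_iff_mul_eq.mp this

theorem det_comm {n : ℕ} (G : SimpleGraph (Fin n)) (p q : X n) (h : (univGraph n).Adj p q) :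
    Commute (det G p) (det G q) := by
  obtain ⟨G1, i, b⟩ := p
  obtain ⟨G2, j, b'⟩ := q
  obtain ⟨h1, h2⟩ := h
  dsimp only at h1 h2
  subst h1
  by_cases hG : G1 = G
  · subst hG
    have hne := h2.ne
    cases b <;> cases b' <;> simp only [det, if_true, Bool.false_eq_true, if_false]
    · exact (Commute.all _ _).map SemidirectProduct.inr
    · exact (comm_lr G1 hne.symm).symm
    · exact comm_lr G1 hne
    · exact (comm_of (Γ := blow G1) (u := (i, 0)) (v := (j, 0)) h2).map SemidirectProduct.inl
  · simp [det, hG]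

theorem det_conj {n : ℕ} (G : SimpleGraph (Fin n)) (i : Fin n) (k : ℤ) :
    det G (G, i, false) ^ k * det G (G, i, true) * (det G (G, i, false) ^ k)⁻¹ =
      SemidirectProduct.inl (PresentedGroup.of (i, k)) := by
  have := SemidirectProduct.inl_aut (φ := shift G) (Multiplicative.ofAdd (Pi.single i 1) ^ k)
    (PresentedGroup.of (i, 0))
  rw [shift_of] at this
  simp only [map_inv, map_zpow, toAdd_zpow, toAdd_ofAdd, Pi.smul_apply, Pi.single_eq_same,
    smul_eq_mul, mul_one, zero_add] at this
  simp only [det, if_true, Bool.false_eq_true, if_false]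
  exact this.symm

end RaagAux

theorem universal_pc_group_for_bounded_deflation (n : ℕ) :
    ∃ (m : ℕ) (Δ : SimpleGraph (Fin m)),
      ∀ (V : Type) [Countable V] (Γ : SimpleGraph V),
        (∃ f : Quotient (neighborSetoid Γ) → Fin n, Function.Injective f) →
        ∃ φ : Raag Γ →* Raag Δ, Function.Injective φ := by
  classical
  obtain ⟨m, ⟨e⟩⟩ := Finite.exists_equiv_fin (RaagAux.X n)
  refine ⟨m, (RaagAux.univGraph n).comap e.symm, ?_⟩
  intro V _ Γ ⟨f, hf⟩
  obtain ⟨k₀, hk₀⟩ := exists_injective_nat V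
  let k : V → ℤ := fun v => (k₀ v : ℤ)
  have hk : Function.Injective k := fun a b h => hk₀ (Int.ofNat_injective h)
  let c : V → Fin n := fun v => f (Quotient.mk (neighborSetoid Γ) v)
  have hc : ∀ u v, c u = c v → Γ.neighborSet u = Γ.neighborSet v := fun u v h =>
    Quotient.exact (s := neighborSetoid Γ) (hf h)
  have key : ∀ u v u' v', c u = c u' → c v = c v' → Γ.Adj u v → Γ.Adj u' v' := by
    intro u v u' v' h1 h2 h
    have h3 : Γ.Adj u' v := by
      have : v ∈ Γ.neighborSet u := h
      rw [hc _ _ h1] at this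
      exact this
    have : u' ∈ Γ.neighborSet v := h3.symm
    rw [hc _ _ h2] at this
    exact SimpleGraph.Adj.symm this
  let G : SimpleGraph (Fin n) :=
    { Adj := fun i j => ∃ u v, c u = i ∧ c v = j ∧ Γ.Adj u v
      symm := ⟨by
        rintro i j ⟨u, v, h1, h2, h⟩
        exact ⟨v, u, h2, h1, h.symm⟩⟩
      loopless := ⟨by
        rintro i ⟨u, v, h1, h2, h⟩
        exact Γ.loopless.irrefl v (key u v v v (h1.trans h2.symm) rfl h)⟩ }
  have hG : ∀ u v, Γ.Adj u v ↔ G.Adj (c u) (c v) := by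
    intro u v
    constructor
    · intro h
      exact ⟨u, v, rfl, rfl, h⟩
    · rintro ⟨u', v', h1, h2, h⟩
      exact key _ _ _ _ h1 h2 h
  -- the inclusion into the group of the blow-up
  let ι : Raag Γ →* Raag (RaagAux.blow G) :=
    RaagAux.lift (fun v => PresentedGroup.of (c v, k v))
      (fun u v h => RaagAux.comm_of (by exact (hG u v).1 h))
  -- its retraction
  let r : Raag (RaagAux.blow G) →* Raag Γ :=
    RaagAux.lift (fun p => if h : ∃ v, (c v, k v) = p then PresentedGroup.of h.choose else 1)
      (by
        intro p q hpq
        by_cases hp : ∃ v, (c v, k v) = p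
        · by_cases hq : ∃ v, (c v, k v) = q
          · rw [dif_pos hp, dif_pos hq]
            apply RaagAux.comm_of
            rw [hG]
            have h1 := congrArg Prod.fst hp.choose_spec
            have h2 := congrArg Prod.fst hq.choose_spec
            dsimp only at h1 h2
            rw [h1, h2]
            exact hpq
          · rw [dif_neg hq]
            exact Commute.one_right _
        · rw [dif_neg hp]
          exact Commute.one_left _)
  have hr : r.comp ι = MonoidHom.id _ := by
    apply PresentedGroup.ext
    intro v
    have hv : ∃ w, (c w, k w) = (c v, k v) := ⟨v, rfl⟩
    simp only [MonoidHom.comp_apply, ι, r, RaagAux.lift_of, MonoidHom.id_apply]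
    rw [dif_pos hv, hk (congrArg Prod.snd hv.choose_spec)]
  have hι : Function.Injective ι := by
    intro a b hab
    have := congrArg r hab
    rw [← MonoidHom.comp_apply, ← MonoidHom.comp_apply, hr] at this
    exact this
  let gen : Fin n → Bool → Raag ((RaagAux.univGraph n).comap e.symm) :=
    fun i b => PresentedGroup.of (e (G, i, b))
  have hgen : ∀ i j b b', G.Adj i j → Commute (gen i b) (gen j b') := by
    intro i j b b' h
    apply RaagAux.comm_of
    rw [SimpleGraph.comap_adj, e.symm_apply_apply, e.symm_apply_apply]
    exact ⟨rfl, h⟩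
  let φ : Raag Γ →* Raag ((RaagAux.univGraph n).comap e.symm) :=
    RaagAux.lift (fun v => gen (c v) false ^ k v * gen (c v) true * (gen (c v) false ^ k v)⁻¹)
      (by
        intro u v h
        have h' := fun b b' => hgen _ _ b b' ((hG u v).1 h)
        have hA : ∀ b', Commute
            (gen (c u) false ^ k u * gen (c u) true * (gen (c u) false ^ k u)⁻¹)
            (gen (c v) b') := fun b' =>
          (((h' false b').zpow_left _).mul_left (h' true b')).mul_left
            ((h' false b').zpow_left _).inv_left
        exact (((hA false).zpow_right _).mul_right (hA true)).mul_right
            ((hA false).zpow_right _).inv_right)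
  let ρ : Raag ((RaagAux.univGraph n).comap e.symm) →* RaagAux.Tgt G :=
    RaagAux.lift (fun p => RaagAux.det G (e.symm p))
      (fun p q h => RaagAux.det_comm G _ _ h)
  have hρ : ρ.comp φ = SemidirectProduct.inl.comp ι := by
    apply PresentedGroup.ext
    intro v
    simp only [MonoidHom.comp_apply, ι, φ, ρ, gen, RaagAux.lift_of, map_mul, map_inv, map_zpow,
      Equiv.symm_apply_apply]
    exact RaagAux.det_conj G (c v) (k v)
  refine ⟨φ, ?_⟩
  intro a b hab
  apply hι
  apply SemidirectProduct.inl_injective (φ := RaagAux.shift G)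
  have := congrArg ρ hab
  rw [← MonoidHom.comp_apply, ← MonoidHom.comp_apply, hρ] at this
  exact this
end

section
/- There exists a finitely generated partially commutative group 𝔾₂ that is 2-universal: for every simplicial graph Γ and every subgroup K of 𝔾(Γ) generated by at most two elements, there is an injective group homomorphism K → 𝔾₂. (This follows since every 2-generated subgroup of any partially commutative group is free or free abelian.) -/
open scoped Pointwise

/-- The Klein combination criterion for two elements. -/
theorem pc_klein {G X : Type*} [Group G] [MulAction G X] [Nonempty X] (x y : G) (S : Set X)
    (hx : ∀ k : ℤ, k ≠ 0 → ∀ p ∈ S, x ^ k • p ∉ S)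
    (hy : ∀ k : ℤ, k ≠ 0 → ∀ p, p ∉ S → y ^ k • p ∈ S) :
    Function.Injective (FreeGroup.lift ![x, y]) := by
  have h0 : FreeGroup.lift ![x, y] =
      (Monoid.CoprodI.lift fun i => FreeGroup.lift fun _ : Unit => (![x, y] : Fin 2 → G) i).comp
        (@freeGroupEquivCoprodI (Fin 2)).toMonoidHom := by
    ext i
    simp
  rw [h0, MonoidHom.coe_comp]
  refine Function.Injective.comp ?_ (MulEquiv.injective freeGroupEquivCoprodI)
  have hne : S.Nonempty := by
    obtain ⟨p⟩ := ‹Nonempty X›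
    by_cases hp : p ∈ S
    · exact ⟨p, hp⟩
    · exact ⟨_, hy 1 one_ne_zero p hp⟩
  have hne' : Sᶜ.Nonempty := by
    obtain ⟨p, hp⟩ := hne
    exact ⟨_, hx 1 one_ne_zero p hp⟩
  refine Monoid.CoprodI.lift_injective_of_ping_pong _ ?_ (![Sᶜ, S] : Fin 2 → Set X) ?_ ?_ ?_
  · right
    refine ⟨0, ?_⟩
    rw [Cardinal.mk_eq_aleph0]
    exact_mod_cast (Cardinal.natCast_lt_aleph0 (n := 3)).le
  · intro i
    fin_cases i
    · exact hne'
    · exact hne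
  · intro i j hij
    fin_cases i <;> fin_cases j
    · exact absurd rfl hij
    · exact disjoint_compl_left
    · exact disjoint_compl_right
    · exact absurd rfl hij
  · intro i j hij
    refine FreeGroup.freeGroupUnitEquivInt.forall_congr_left.mpr ?_
    intro n hne1
    have hn : n ≠ 0 := by
      rintro rfl
      apply hne1
      simp [FreeGroup.freeGroupUnitEquivInt]
    change FreeGroup.lift (fun _ => (![x, y] : Fin 2 → G) i) (FreeGroup.of () ^ n) •
      (![Sᶜ, S] : Fin 2 → Set X) j ⊆ (![Sᶜ, S] : Fin 2 → Set X) i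
    simp only [map_zpow, FreeGroup.lift_apply_of]
    rw [Set.smul_set_subset_iff]
    fin_cases i <;> fin_cases j
    · exact absurd rfl hij
    · intro p hp
      exact hx n hn p hp
    · intro p hp
      exact hy n hn p hp
    · exact absurd rfl hij

/-- One-sided version: `y` acts like a hyperbolic element with half-space `A`. -/
theorem pc_klein_hyp {G X : Type*} [Group G] [MulAction G X] [Nonempty X] (x y : G) (A : Set X)
    (hA : ∀ p ∈ A, y • p ∈ A)
    (hx : ∀ k : ℤ, k ≠ 0 → ∀ p, (p ∈ A ∨ y • p ∉ A) → ¬ (x ^ k • p ∈ A ∨ y • x ^ k • p ∉ A)) :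
    Function.Injective (FreeGroup.lift ![x, y]) := by
  have hpos : ∀ n : ℕ, ∀ p ∈ A, y ^ n • p ∈ A := by
    intro n
    induction n with
    | zero => intro p hp; simpa using hp
    | succ n ih =>
      intro p hp
      rw [pow_succ, mul_smul]
      exact ih _ (hA p hp)
  refine pc_klein x y {p | p ∈ A ∨ y • p ∉ A} hx ?_
  intro k hk p hp
  simp only [Set.mem_ofPred_eq, not_or, not_not] at hp ⊢
  obtain ⟨h1, h2⟩ := hp
  rcases lt_or_gt_of_ne hk with h | h
  · right
    intro h3
    apply h1
    obtain ⟨n, hn⟩ : ∃ n : ℕ, k = -((n : ℤ) + 1) := ⟨(-k - 1).toNat, by omega⟩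
    have := hpos n _ h3
    rw [smul_smul, smul_smul, hn] at this
    have h4 : y ^ n * (y * y ^ (-((n : ℤ) + 1))) = 1 := by
      rw [zpow_neg]
      norm_cast
      rw [← mul_assoc, ← pow_succ]
      simp
    rw [← mul_assoc] at h4
    rw [h4, one_smul] at this
    exact this
  · left
    obtain ⟨n, hn⟩ : ∃ n : ℕ, k = (n : ℤ) + 1 := ⟨(k - 1).toNat, by omega⟩
    have := hpos n _ h2
    rw [smul_smul, ← pow_succ] at this
    rw [hn]
    exact_mod_cast this

/-- The second pair is obtained from the first by a surjective endomorphism of the free group. -/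
def PCGP {G : Type*} [Group G] (x y x' y' : G) : Prop :=
  ∃ θ : FreeGroup (Fin 2) →* FreeGroup (Fin 2), Function.Surjective θ ∧
    (FreeGroup.lift ![x, y]).comp θ = FreeGroup.lift ![x', y']

namespace PCGP

variable {G : Type*} [Group G] {x y x' y' x'' y'' : G}

theorem rfl' : PCGP x y x y := ⟨MonoidHom.id _, Function.surjective_id, by simp⟩

theorem trans' (h : PCGP x y x' y') (h' : PCGP x' y' x'' y'') : PCGP x y x'' y'' := by
  obtain ⟨θ, hs, he⟩ := h
  obtain ⟨θ', hs', he'⟩ := h'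
  refine ⟨θ.comp θ', ?_, ?_⟩
  · rw [MonoidHom.coe_comp]; exact hs.comp hs'
  · rw [← MonoidHom.comp_assoc, he, he']

theorem surj_of {θ : FreeGroup (Fin 2) →* FreeGroup (Fin 2)}
    (h0 : FreeGroup.of 0 ∈ θ.range) (h1 : FreeGroup.of 1 ∈ θ.range) : Function.Surjective θ := by
  rw [← MonoidHom.range_eq_top, eq_top_iff, ← FreeGroup.closure_range_of, Subgroup.closure_le]
  rintro _ ⟨i, rfl⟩
  fin_cases i
  · exact h0
  · exact h1

/-- Build a step from words. -/
theorem step (u w : FreeGroup (Fin 2))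
    (h0 : FreeGroup.of 0 ∈ (FreeGroup.lift ![u, w]).range)
    (h1 : FreeGroup.of 1 ∈ (FreeGroup.lift ![u, w]).range)
    (hu : FreeGroup.lift ![x, y] u = x') (hw : FreeGroup.lift ![x, y] w = y') :
    PCGP x y x' y' := by
  refine ⟨FreeGroup.lift ![u, w], surj_of h0 h1, ?_⟩
  ext i
  fin_cases i
  · simpa using hu
  · simpa using hw

theorem swap (h : PCGP x y x' y') : PCGP x y y' x' := by
  refine h.trans' (step (FreeGroup.of 1) (FreeGroup.of 0) ⟨FreeGroup.of 1, by simp⟩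
    ⟨FreeGroup.of 0, by simp⟩ (by simp) (by simp))

theorem inv_left (h : PCGP x y x' y') : PCGP x y x'⁻¹ y' := by
  refine h.trans' (step (FreeGroup.of 0)⁻¹ (FreeGroup.of 1) ⟨(FreeGroup.of 0)⁻¹, by simp⟩
    ⟨FreeGroup.of 1, by simp⟩ (by simp) (by simp))

theorem inv_right (h : PCGP x y x' y') : PCGP x y x' y'⁻¹ := h.swap.inv_left.swap

theorem mul_zpow (h : PCGP x y x' y') (k : ℤ) : PCGP x y x' (y' * x' ^ k) := by
  refine h.trans' (step (FreeGroup.of 0) (FreeGroup.of 1 * FreeGroup.of 0 ^ k)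
    ⟨FreeGroup.of 0, by simp⟩
    ⟨FreeGroup.of 1 * FreeGroup.of 0 ^ (-k), by simp⟩ (by simp) (by simp))

theorem zpow_mul (h : PCGP x y x' y') (k : ℤ) : PCGP x y x' (x' ^ k * y') := by
  have := (h.inv_right.mul_zpow (-k)).inv_right
  simpa using this

theorem inj (h : PCGP x y x' y') (hi : Function.Injective (FreeGroup.lift ![x', y'])) :
    Function.Injective (FreeGroup.lift ![x, y]) := by
  obtain ⟨θ, hs, he⟩ := h
  rw [← he, MonoidHom.coe_comp] at hi
  exact Function.Injective.of_comp_right hi hs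

theorem comm (h : PCGP x y x' y') (hc : Commute x' y') : Commute x y := by
  obtain ⟨θ, hs, he⟩ := h
  have key : ∀ a b : FreeGroup (Fin 2),
      Commute (FreeGroup.lift ![x', y'] a) (FreeGroup.lift ![x', y'] b) := by
    have key1 : ∀ i j : Fin 2, Commute (![x', y'] i) (![x', y'] j) := by
      intro i j
      fin_cases i <;> fin_cases j
      · exact Commute.refl _
      · exact hc
      · exact hc.symm
      · exact Commute.refl _
    have key2 : ∀ (g : G), (∀ i, Commute g (![x', y'] i)) → ∀ b,
        Commute g (FreeGroup.lift ![x', y'] b) := by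
      intro g hg b
      induction b using FreeGroup.induction_on with
      | C1 => simp
      | of i => simpa using hg i
      | inv_of i _ => simpa using (hg i).inv_right
      | mul a b ha hb => rw [map_mul]; exact ha.mul_right hb
    intro a b
    exact key2 _ (fun i => (key2 _ (fun j => key1 i j) a).symm) b
  obtain ⟨a, ha⟩ := hs (FreeGroup.of 0)
  obtain ⟨b, hb⟩ := hs (FreeGroup.of 1)
  have := key a b
  rw [← he] at this
  simpa [ha, hb] using this

end PCGP

/-- A discrete tree, as an integral 0-hyperbolic geodesic metric space. -/
structure PCTree (X : Type*) where
  d : X → X → ℕ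
  self : ∀ p, d p p = 0
  eq_of : ∀ p q, d p q = 0 → p = q
  symm : ∀ p q, d p q = d q p
  four : ∀ a b c e, d a b + d c e ≤ d a c + d b e ∨ d a b + d c e ≤ d a e + d b c
  interval : ∀ p q i, i ≤ d p q → ∃ m, d p m = i ∧ d m q + i = d p q
  parity : ∀ a b c, (d a b + d b c + d a c) % 2 = 0

/-- The kind of actions on trees we consider. -/
structure PCAct (G : Type*) {X : Type*} [Group G] [MulAction G X] (T : PCTree X) : Prop where
  iso : ∀ (g : G) (p q : X), T.d (g • p) (g • q) = T.d p q
  noinv : ∀ (g : G) (p : X), T.d p (g • p) = 1 → g • g • p ≠ p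
  root : ∀ (g : G) (o p : X) (k : ℤ), k ≠ 0 → g • o = o → g ^ k • p = p → g • p = p
  stab : ∀ (g h : G) (p : X), g • p = p → (h * g * h⁻¹) • p = p → Commute g h

namespace PCAct

variable {G X : Type*} [Group G] [MulAction G X] {T : PCTree X}

theorem tri (T : PCTree X) (a b c : X) : T.d a b ≤ T.d a c + T.d c b := by
  have := T.four a b c c
  have := T.self c
  have := T.symm c b
  omega

theorem iso' (h : PCAct G T) (g : G) (p q : X) : T.d (g • p) q = T.d p (g⁻¹ • q) := by
  rw [← h.iso g p (g⁻¹ • q), smul_inv_smul]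

theorem elliptic_of (h : PCAct G T) (g : G) (o : X)
    (hle : T.d (g • o) (g⁻¹ • o) ≤ T.d o (g • o)) : ∃ q : X, g • q = q := by
  have hn : T.d o (g⁻¹ • o) = T.d o (g • o) := by
    rw [← h.iso' g o o, T.symm]
  have hpar := T.parity o (g • o) (g⁻¹ • o)
  obtain ⟨q, hq1, hq2⟩ := T.interval o (g • o) (T.d o (g • o) / 2) (Nat.div_le_self _ _)
  have e1 : T.d (g • q) o = T.d q (g⁻¹ • o) := h.iso' g q o
  have e2 : T.d (g • q) (g • o) = T.d q o := h.iso g q o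
  have e3 : T.d (g⁻¹ • q) o = T.d q (g • o) := by rw [h.iso', inv_inv]
  have e4 : T.d (g⁻¹ • q) (g⁻¹ • o) = T.d q o := h.iso _ _ _
  have s1 := T.symm o q
  have s2 := T.symm (g • o) (g⁻¹ • o)
  have s3 := T.symm o (g⁻¹ • o)
  have s4 := T.symm o (g • o)
  have f1 := T.four q (g⁻¹ • o) o (g • o)
  have f2 := T.four q (g • q) o (g • o)
  have f3 := T.four (g • q) (g⁻¹ • o) o (g • o)
  have f4 := T.four (g⁻¹ • q) (g • q) o (g⁻¹ • o)
  rcases Nat.eq_zero_or_pos (T.d q (g • q)) with h0 | h0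
  · exact ⟨q, (T.eq_of _ _ h0).symm⟩
  · exfalso
    have h1 : T.d q (g • q) = 1 := by omega
    have h2 : T.d (g⁻¹ • q) (g • q) = 0 := by omega
    have h3 := T.eq_of _ _ h2
    refine h.noinv g q h1 ?_
    rw [← h3, smul_inv_smul]

theorem halfspace (h : PCAct G T) (g : G) (o q p : X) (ho : g • o = o) (hq : g • q ≠ q)
    (hd : T.d o q = 1) (h1 : T.d p q < T.d p o) (h2 : T.d (g • p) q < T.d (g • p) o) : False := by
  have ho' : g⁻¹ • o = o := by rw [inv_smul_eq_iff, ho]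
  rw [h.iso', h.iso', ho'] at h2
  have e1 : T.d (g⁻¹ • q) o = T.d q o := by
    rw [h.iso', inv_inv, ho]
  have f := T.four q (g⁻¹ • q) p o
  have s1 := T.symm p q
  have s2 := T.symm p (g⁻¹ • q)
  have s3 := T.symm o q
  have h0 : T.d q (g⁻¹ • q) = 0 := by omega
  have := T.eq_of _ _ h0
  apply hq
  rw [eq_comm, inv_smul_eq_iff] at this
  exact this.symm

theorem fix_zpow {g : G} {o : X} (ho : g • o = o) (k : ℤ) : g ^ k • o = o := by
  have : g ∈ MulAction.stabilizer G o := ho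
  exact (MulAction.stabilizer G o).zpow_mem this k

theorem case_ell_ell (h : PCAct G T) (x y : G) (o o' : X) (hx : x • o = o) (hy : y • o' = o')
    (hn : ∀ p : X, ¬ (x • p = p ∧ y • p = p)) : Function.Injective (FreeGroup.lift ![x, y]) := by
  classical
  have hex : ∃ n, ∃ o o' : X, x • o = o ∧ y • o' = o' ∧ T.d o o' = n := ⟨_, o, o', hx, hy, rfl⟩
  obtain ⟨a, b, ha, hb, hab⟩ := Nat.find_spec hex
  have hmin : ∀ c e : X, x • c = c → y • e = e → T.d a b ≤ T.d c e := by
    intro c e hc he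
    rw [hab]
    exact Nat.find_min' hex ⟨c, e, hc, he, rfl⟩
  clear hab hex
  have hpos : 0 < T.d a b := by
    rcases Nat.eq_zero_or_pos (T.d a b) with h0 | h0
    · have := T.eq_of _ _ h0
      subst this
      exact absurd ⟨ha, hb⟩ (hn a)
    · exact h0
  obtain ⟨q, hq1, hq2⟩ := T.interval a b 1 hpos
  obtain ⟨r, hr1, hr2⟩ := T.interval b a 1 (by rw [T.symm]; exact hpos)
  have sab := T.symm a b
  have saq := T.symm a q
  have sbq := T.symm b q
  have sbr := T.symm b r
  have sar := T.symm a r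
  have hxq : x • q ≠ q := by
    intro hc
    have := hmin q b hc hb
    omega
  have hyr : y • r ≠ r := by
    intro hc
    have := hmin a r ha hc
    omega
  have hxk : ∀ k : ℤ, k ≠ 0 → x ^ k • q ≠ q := fun k hk hc => hxq (h.root x a q k hk ha hc)
  have hyk : ∀ k : ℤ, k ≠ 0 → y ^ k • r ≠ r := fun k hk hc => hyr (h.root y b r k hk hb hc)
  have : Nonempty X := ⟨a⟩
  have cover : ∀ p : X, ¬ T.d p r < T.d p b → T.d p q < T.d p a := by
    intro p h1
    by_contra h2
    have p1 := T.parity p q a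
    have p2 := T.parity p r b
    have f1 := T.four p q a b
    have f2 := T.four p r b a
    omega
  refine pc_klein x y {p | ¬ T.d p r < T.d p b} ?_ ?_
  · intro k hk p hp hp'
    exact h.halfspace (x ^ k) a q p (fix_zpow ha k) (hxk k hk) hq1 (cover _ hp) (cover _ hp')
  · intro k hk p hp hp'
    simp only [Set.mem_ofPred_eq, not_not] at hp
    exact h.halfspace (y ^ k) b r p (fix_zpow hb k) (hyk k hk) hr1 hp hp'

theorem case_ell_hyp_one (h : PCAct G T) (x y : G) (o q : X) (ho : x • o = o) (hq : x • q ≠ q)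
    (hoq : T.d o q = 1) (hqy : T.d q (y • o) + 1 = T.d o (y • o))
    (hxy : x • y⁻¹ • o ≠ y⁻¹ • o)
    (hk : ∀ k : ℤ, T.d o (y • o) ≤ T.d q (x ^ k • y⁻¹ • o)) :
    Function.Injective (FreeGroup.lift ![x, y]) := by
  have : Nonempty X := ⟨o⟩
  have hroot : ∀ p : X, x • p ≠ p → ∀ k : ℤ, k ≠ 0 → x ^ k • p ≠ p :=
    fun p hp k hk hc => hp (h.root x o p k hk ho hc)
  have hn : T.d o (y⁻¹ • o) = T.d o (y • o) := by
    rw [← h.iso' y o o, T.symm]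
  have soq := T.symm o q
  have F : ∀ p : X, ¬ T.d (y • p) q < T.d (y • p) o →
      T.d p (y⁻¹ • o) + T.d o (y • o) ≤ T.d p o := by
    intro p hp
    have e1 : T.d (y • p) o = T.d p (y⁻¹ • o) := h.iso' _ _ _
    have e2 : T.d (y • p) (y • o) = T.d p o := h.iso _ _ _
    have f := T.four (y • p) q o (y • o)
    have p1 := T.parity (y • p) q o
    omega
  have hxo : ∀ k : ℤ, x ^ k • o = o := fun k => fix_zpow ho k
  have hxi : ∀ k : ℤ, (x ^ k)⁻¹ = x ^ (-k) := fun k => (zpow_neg x k).symm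
  have F' : ∀ (k : ℤ) (p : X), ¬ T.d (y • x ^ k • p) q < T.d (y • x ^ k • p) o →
      T.d p (x ^ (-k) • y⁻¹ • o) + T.d o (y • o) ≤ T.d p o := by
    intro k p hp
    have := F _ hp
    rw [h.iso' (x ^ k) p, h.iso' (x ^ k) p, hxi, hxo] at this
    exact this
  have hd : ∀ k : ℤ, T.d (x ^ k • y⁻¹ • o) o = T.d o (y • o) := by
    intro k
    rw [h.iso', hxi, hxo, T.symm, hn]
  have C : ∀ (k : ℤ) (p : X), T.d p q < T.d p o →
      ¬ T.d (y • x ^ k • p) q < T.d (y • x ^ k • p) o → False := by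
    intro k p h1 h2
    have h3 := F' k p h2
    have f := T.four q (x ^ (-k) • y⁻¹ • o) p o
    have h4 := hd (-k)
    have h5 := hk (-k)
    have s1 := T.symm p q
    have s2 := T.symm p (x ^ (-k) • y⁻¹ • o)
    omega
  refine pc_klein_hyp x y {p | T.d p q < T.d p o} ?_ ?_
  · intro p hp
    by_contra hc
    exact C 0 p hp (by simpa using hc)
  · intro k hk0 p h1 h2
    rcases h1 with h1 | h1 <;> rcases h2 with h2 | h2
    · exact h.halfspace (x ^ k) o q p (hxo k) (hroot q hq k hk0) hoq h1 h2
    · exact C k p h1 h2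
    · refine C (-k) (x ^ k • p) h2 ?_
      simpa using h1
    · have h3 := F p h1
      have h4 := F' k p h2
      have h5 := hd (-k)
      have f := T.four (y⁻¹ • o) (x ^ (-k) • y⁻¹ • o) p o
      have s1 := T.symm p (y⁻¹ • o)
      have s2 := T.symm p (x ^ (-k) • y⁻¹ • o)
      have s3 := T.symm o (y⁻¹ • o)
      have h6 : T.d (y⁻¹ • o) (x ^ (-k) • y⁻¹ • o) = 0 := by omega
      exact hroot _ hxy (-k) (by simpa using hk0) (T.eq_of _ _ h6).symm

theorem case_ell_hyp_two (h : PCAct G T) (x y : G) (o q : X) (ho : x • o = o) (hq : x • q ≠ q)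
    (hoq : T.d o q = 1) (hqy : T.d q (y • o) + 1 = T.d o (y • o))
    (hqy' : T.d q (y⁻¹ • o) + 1 ≤ T.d o (y • o)) (hy : ∀ p : X, y • p ≠ p) :
    Function.Injective (FreeGroup.lift ![x, y]) := by
  have : Nonempty X := ⟨o⟩
  have hroot : ∀ p : X, x • p ≠ p → ∀ k : ℤ, k ≠ 0 → x ^ k • p ≠ p :=
    fun p hp k hk hc => hp (h.root x o p k hk ho hc)
  have hn : T.d o (y⁻¹ • o) = T.d o (y • o) := by
    rw [← h.iso' y o o, T.symm]
  have hhyp : T.d o (y • o) < T.d (y • o) (y⁻¹ • o) := by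
    by_contra hc
    obtain ⟨p, hp⟩ := h.elliptic_of y o (by omega)
    exact hy p hp
  have t1 := tri T (y • o) (y⁻¹ • o) q
  have s1 := T.symm (y • o) q
  have soq := T.symm o q
  have sub1 : ∀ p : X, T.d p (y • o) ≤ T.d p o → T.d p q < T.d p o := by
    intro p hp
    have f := T.four p q o (y • o)
    omega
  have sub2 : ∀ p : X, ¬ T.d (y • p) (y • o) ≤ T.d (y • p) o → T.d p q < T.d p o := by
    intro p hp
    rw [h.iso, h.iso'] at hp
    have f := T.four p q o (y⁻¹ • o)
    omega
  refine pc_klein_hyp x y {p | T.d p (y • o) ≤ T.d p o} ?_ ?_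
  · intro p hp
    simp only [Set.mem_ofPred_eq] at hp ⊢
    rw [h.iso, h.iso']
    have f := T.four (y • o) (y⁻¹ • o) p o
    have s2 := T.symm p (y • o)
    have s3 := T.symm p (y⁻¹ • o)
    have s4 := T.symm o (y • o)
    have s5 := T.symm o (y⁻¹ • o)
    omega
  · intro k hk p h1 h2
    exact h.halfspace (x ^ k) o q p (fix_zpow ho k) (hroot q hq k hk) hoq
      (h1.elim (sub1 _) (sub2 _)) (h2.elim (sub1 _) (sub2 _))

theorem case_ell (h : PCAct G T) (x y : G) (o : X) (ho : x • o = o) (hc : ¬ Commute x y)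
    (hy : ∀ (k : ℤ) (p : X), (y * x ^ k) • p ≠ p) :
    Function.Injective (FreeGroup.lift ![x, y]) := by
  classical
  have hex : ∃ n, ∃ o : X, x • o = o ∧ T.d o (y • o) = n := ⟨_, o, ho, rfl⟩
  obtain ⟨a, ha, han⟩ := Nat.find_spec hex
  have hmin : ∀ c : X, x • c = c → T.d a (y • a) ≤ T.d c (y • c) := by
    intro c hc
    rw [han]
    exact Nat.find_min' hex ⟨c, hc, rfl⟩
  clear han hex ho o
  have hfix : ∀ p : X, x • p = p → x • y • p ≠ y • p := by
    intro p hp hq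
    have := h.stab x y⁻¹ p hp (by rw [inv_inv, mul_smul, mul_smul, hq, inv_smul_smul])
    exact hc (by simpa using this.inv_right)
  have hfix' : ∀ p : X, x • p = p → x • y⁻¹ • p ≠ y⁻¹ • p := by
    intro p hp hq
    exact hc (h.stab x y p hp (by rw [mul_smul, mul_smul, hq, smul_inv_smul]))
  -- find the last fixed point on the path
  have hex2 : ∃ j, ¬ (j ≤ T.d a (y • a) ∧ ∃ m : X, T.d a m = j ∧ T.d m (y • a) + j = T.d a (y • a) ∧
      x • m = m) := ⟨T.d a (y • a) + 1, fun hh => by omega⟩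
  have hspec := Nat.find_spec hex2
  have hbefore := fun m => Nat.find_min hex2 (m := m)
  generalize Nat.find hex2 = j at hspec hbefore
  rcases j with _ | j
  · exact absurd ⟨Nat.zero_le _, a, T.self a, rfl, ha⟩ hspec
  have hj := hbefore j (Nat.lt_succ_self j)
  rw [not_not] at hj
  obtain ⟨hjle, m, hm1, hm2, hm3⟩ := hj
  have hjlt : j < T.d a (y • a) := by
    rcases Nat.lt_or_ge j (T.d a (y • a)) with hl | hl
    · exact hl
    · have : T.d m (y • a) = 0 := by omega
      have := T.eq_of _ _ this
      subst this
      exact absurd hm3 (hfix a ha)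
  obtain ⟨q, hq1, hq2⟩ := T.interval m (y • a) 1 (by omega)
  have t1 := tri T a q m
  have t2 := tri T a (y • a) q
  have hxq : x • q ≠ q := by
    intro hxq
    exact hspec ⟨hjlt, q, by omega, by omega, hxq⟩
  have e1 : T.d (y • a) (y • m) = T.d a m := h.iso _ _ _
  have t3 := tri T m (y • m) (y • a)
  have t4 := tri T q (y • m) (y • a)
  have t5 := tri T m (y • m) q
  have hmm := hmin m hm3
  have key : T.d q (y • m) + 1 = T.d m (y • m) := by omega
  by_cases hk : ∀ k : ℤ, T.d m (y • m) ≤ T.d q (x ^ k • y⁻¹ • m)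
  · exact h.case_ell_hyp_one x y m q hm3 hxq hq1 key (hfix' m hm3) hk
  · push Not at hk
    obtain ⟨k, hk⟩ := hk
    have e2 : (y * x ^ (-k)) • m = y • m := by rw [mul_smul, fix_zpow hm3]
    have e3 : (y * x ^ (-k))⁻¹ • m = x ^ k • y⁻¹ • m := by
      rw [mul_inv_rev, mul_smul, zpow_neg, inv_inv]
    have := h.case_ell_hyp_two x (y * x ^ (-k)) m q hm3 hxq hq1 (by rw [e2]; exact key)
      (by rw [e2, e3]; exact hk) (hy (-k))
    exact (PCGP.rfl'.mul_zpow (-k)).inj this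

end PCAct

namespace PCAct

variable {G : Type} {X : Type*} [Group G] [MulAction G X] {T : PCTree X}

theorem case_pp (h : PCAct G T) (x y : G) (o : X)
    (hx : T.d o (x • o) < T.d (x • o) (x⁻¹ • o))
    (hy : T.d o (y • o) < T.d (y • o) (y⁻¹ • o))
    (hxy : T.d o (x • o) ≤ T.d o (y • o)) (hpos : 0 < T.d o (x • o))
    (h1 : T.d o (y • o) ≤ T.d (x • o) (y • o)) (h2 : T.d o (y • o) ≤ T.d (x • o) (y⁻¹ • o))
    (h3 : T.d o (y • o) < T.d (x⁻¹ • o) (y • o)) (h4 : T.d o (y • o) < T.d (x⁻¹ • o) (y⁻¹ • o))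
    (h5 : T.d o (x • o) = T.d o (y • o) → T.d o (y • o) < T.d (x • o) (y⁻¹ • o)) :
    Function.Injective (FreeGroup.lift ![x, y]) := by
  have nx : T.d o (x⁻¹ • o) = T.d o (x • o) := by rw [← h.iso' x o o, T.symm]
  have ny : T.d o (y⁻¹ • o) = T.d o (y • o) := by rw [← h.iso' y o o, T.symm]
  have D : ∀ a b p : X, (T.d a b + T.d p o ≤ T.d p a + T.d o b ∨
      T.d a b + T.d p o ≤ T.d o a + T.d p b) := by
    intro a b p
    have := T.four a b p o
    rw [T.symm a p, T.symm b o, T.symm a o, T.symm b p] at this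
    exact this
  have M : ∀ (g : G) (p : X), ¬ T.d p (g⁻¹ • o) ≤ T.d p o →
      T.d (g • p) (g • o) < T.d (g • p) o := by
    intro g p hp
    rw [h.iso, h.iso']; omega
  have M' : ∀ (g : G) (p : X), ¬ T.d p (g • o) < T.d p o →
      T.d (g⁻¹ • p) (g⁻¹ • o) ≤ T.d (g⁻¹ • p) o := by
    intro g p hp
    rw [h.iso, h.iso', inv_inv]; omega
  refine FreeGroup.injective_lift_of_ping_pong ![x, y]
    (fun i => {p | T.d p ((![x, y] : Fin 2 → G) i • o) < T.d p o})
    (fun i => {p | T.d p (((![x, y] : Fin 2 → G) i)⁻¹ • o) ≤ T.d p o}) ?_ ?_ ?_ ?_ ?_ ?_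
  · intro i
    fin_cases i
    · refine ⟨x • o, ?_⟩
      change T.d (x • o) (x • o) < T.d (x • o) o
      rw [T.self, T.symm]; exact hpos
    · refine ⟨y • o, ?_⟩
      change T.d (y • o) (y • o) < T.d (y • o) o
      rw [T.self, T.symm]; omega
  · have key : ∀ p : X, T.d p (x • o) < T.d p o → T.d p (y • o) < T.d p o → False := by
      intro p a b
      have := D (x • o) (y • o) p
      omega
    intro i j hij
    rw [Function.onFun, Set.disjoint_left]
    intro p a b
    fin_cases i <;> fin_cases j
    · exact hij rfl
    · exact key p a b
    · exact key p b a
    · exact hij rfl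
  · have key : ∀ p : X, T.d p (x⁻¹ • o) ≤ T.d p o → T.d p (y⁻¹ • o) ≤ T.d p o → False := by
      intro p a b
      have := D (x⁻¹ • o) (y⁻¹ • o) p
      omega
    intro i j hij
    rw [Function.onFun, Set.disjoint_left]
    intro p a b
    fin_cases i <;> fin_cases j
    · exact hij rfl
    · exact key p a b
    · exact key p b a
    · exact hij rfl
  · intro i j
    rw [Set.disjoint_left]
    intro p a b
    fin_cases i <;> fin_cases j
    · change T.d p (x • o) < T.d p o at a
      change T.d p (x⁻¹ • o) ≤ T.d p o at b
      have := D (x • o) (x⁻¹ • o) p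
      omega
    · change T.d p (x • o) < T.d p o at a
      change T.d p (y⁻¹ • o) ≤ T.d p o at b
      have := D (x • o) (y⁻¹ • o) p
      omega
    · change T.d p (y • o) < T.d p o at a
      change T.d p (x⁻¹ • o) ≤ T.d p o at b
      have := D (x⁻¹ • o) (y • o) p
      omega
    · change T.d p (y • o) < T.d p o at a
      change T.d p (y⁻¹ • o) ≤ T.d p o at b
      have := D (y • o) (y⁻¹ • o) p
      omega
  · intro i
    rw [Set.smul_set_subset_iff]
    intro p hp
    exact M _ p hp
  · intro i
    rw [Set.smul_set_subset_iff]
    intro p hp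
    exact M' _ p hp

/-- The two ties `(x, y)` and `(x⁻¹, y⁻¹)` cannot both occur at a minimal configuration. -/
theorem tie_cross (h : PCAct G T) (x y : G) (o : X)
    (hxy : T.d o (x • o) ≤ T.d o (y • o)) (hpos : 0 < T.d o (x • o))
    (h1 : T.d (x • o) (y • o) = T.d o (y • o))
    (h2 : T.d (x⁻¹ • o) (y⁻¹ • o) ≤ T.d o (y • o)) :
    ∃ q : X, T.d q (x • q) + T.d q ((x⁻¹ * y) • q) < T.d o (x • o) + T.d o (y • o) := by
  have nx : T.d o (x⁻¹ • o) = T.d o (x • o) := by rw [← h.iso' x o o, T.symm]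
  have ny : T.d o (y⁻¹ • o) = T.d o (y • o) := by rw [← h.iso' y o o, T.symm]
  have p1 := T.parity o (x • o) (y • o)
  obtain ⟨q, hq1, hq2⟩ := T.interval o (x⁻¹ • o) (T.d o (x • o) / 2)
    (by rw [nx]; exact Nat.div_le_self _ _)
  refine ⟨q, ?_⟩
  have e1 : T.d (x • q) (x • o) = T.d q o := h.iso _ _ _
  have e2 : T.d (x • q) o = T.d q (x⁻¹ • o) := h.iso' _ _ _
  have e3 : T.d (y • q) (y • o) = T.d q o := h.iso _ _ _
  have e4 : T.d (y • q) o = T.d q (y⁻¹ • o) := h.iso' _ _ _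
  have e5 : T.d (x • q) (y • q) = T.d q ((x⁻¹ * y) • q) := by rw [h.iso', mul_smul]
  have s1 := T.symm o q
  have s2 := T.symm (x⁻¹ • o) (y⁻¹ • o)
  have s3 := T.symm o (x • q)
  have s4 := T.symm o (y⁻¹ • o)
  have s5 := T.symm (x • o) (y • o)
  have s6 := T.symm o (y • o)
  have f1 := T.four q (y⁻¹ • o) o (x⁻¹ • o)
  have f2 := T.four (x • q) (y • o) o (x • o)
  have f3 := T.four (x • q) (y • q) o (y • o)
  have t := tri T q (x • q) o
  omega

/-- Case of no elliptic elements in generating pairs. -/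
theorem case_hyp (h : PCAct G T) (x0 y0 : G) (o0 : X)
    (hne : ∀ x y, PCGP x0 y0 x y → ∀ p : X, x • p ≠ p) :
    Function.Injective (FreeGroup.lift ![x0, y0]) := by
  classical
  have hex : ∃ n, ∃ (x y : G) (o : X), PCGP x0 y0 x y ∧ T.d o (x • o) + T.d o (y • o) = n :=
    ⟨_, x0, y0, o0, PCGP.rfl', rfl⟩
  have hspec := Nat.find_spec hex
  have hfm := fun m => Nat.find_min' hex (m := m)
  generalize Nat.find hex = N at hspec hfm
  clear hex
  have hmin : ∀ (x y : G) (o : X), PCGP x0 y0 x y → N ≤ T.d o (x • o) + T.d o (y • o) :=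
    fun x y o hg => hfm _ ⟨x, y, o, hg, rfl⟩
  clear hfm
  obtain ⟨x, y, o, hg, hN⟩ := hspec
  -- general facts about norms
  have ninv : ∀ g : G, T.d o (g⁻¹ • o) = T.d o (g • o) := by
    intro g; rw [← h.iso' g o o, T.symm]
  have npos : ∀ x y : G, PCGP x0 y0 x y → 0 < T.d o (x • o) := by
    intro x y hg
    rcases Nat.eq_zero_or_pos (T.d o (x • o)) with h0 | h0
    · exact absurd (T.eq_of _ _ h0).symm (hne x y hg o)
    · exact h0
  have nhyp : ∀ x y : G, PCGP x0 y0 x y → T.d o (x • o) < T.d (x • o) (x⁻¹ • o) := by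
    intro x y hg
    by_contra hc
    obtain ⟨q, hq⟩ := h.elliptic_of x o (by omega)
    exact hne x y hg q hq
  have nmin : ∀ x y : G, PCGP x0 y0 x y → T.d o (x • o) + T.d o (y • o) = N →
      T.d o (y • o) ≤ T.d (x • o) (y • o) := by
    intro x y hg hN
    have h1 := hmin x (x ^ (-1 : ℤ) * y) o (hg.zpow_mul (-1))
    have h2 : T.d (x • o) (y • o) = T.d o ((x ^ (-1 : ℤ) * y) • o) := by
      rw [h.iso', mul_smul]; simp
    omega
  -- same-letter ties
  have tie_same : ∀ x b : G, PCGP x0 y0 x b → T.d o (x • o) ≤ T.d o (b • o) →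
      T.d (x • o) (b • o) ≤ T.d o (b • o) → T.d (x⁻¹ • o) (b • o) ≤ T.d o (b • o) → False := by
    intro x b hg hle h1 h2
    have h3 := nhyp x b hg
    have h4 := T.four (x • o) (x⁻¹ • o) o (b • o)
    have h5 := ninv x
    have s1 := T.symm o (x • o)
    have s2 := T.symm o (x⁻¹ • o)
    omega
  have main : ∀ x y : G, PCGP x0 y0 x y → T.d o (x • o) + T.d o (y • o) = N →
      T.d o (x • o) ≤ T.d o (y • o) → 
      T.d o (y • o) < T.d (x⁻¹ • o) (y • o) → T.d o (y • o) < T.d (x⁻¹ • o) (y⁻¹ • o) →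
      Function.Injective (FreeGroup.lift ![x0, y0]) := by
    intro x y hg hN hle h3 h4
    have iy := ninv y
    by_cases h5 : T.d o (x • o) = T.d o (y • o) → T.d o (y • o) < T.d (x • o) (y⁻¹ • o)
    · refine hg.inj (h.case_pp x y o (nhyp x y hg) (nhyp y x hg.swap) hle (npos x y hg)
        (nmin x y hg hN) ?_ h3 h4 h5)
      have := nmin x y⁻¹ hg.inv_right (by omega)
      omega
    · push Not at h5
      obtain ⟨h5, h6⟩ := h5
      refine hg.inv_right.inj (h.case_pp x y⁻¹ o (nhyp x y hg) (nhyp y⁻¹ x hg.inv_right.swap)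
        (by omega) (npos x y hg)
        (nmin x y⁻¹ hg.inv_right (by omega)) ?_ (by omega) (by rw [inv_inv]; omega) ?_)
      · rw [inv_inv, iy]; exact nmin x y hg hN
      · intro _
        rw [inv_inv, iy]
        by_contra h7
        refine tie_same y x hg.swap (by omega) ?_ ?_
        · rw [T.symm]; omega
        · rw [T.symm]; omega
  have main2 : ∀ x y : G, PCGP x0 y0 x y → T.d o (x • o) + T.d o (y • o) = N →
      T.d o (x • o) ≤ T.d o (y • o) → 
      Function.Injective (FreeGroup.lift ![x0, y0]) := by
    have cross : ∀ x y : G, PCGP x0 y0 x y → T.d o (x • o) + T.d o (y • o) = N →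
      T.d o (x • o) ≤ T.d o (y • o) → T.d (x • o) (y • o) ≤ T.d o (y • o) →
      T.d (x⁻¹ • o) (y⁻¹ • o) ≤ T.d o (y • o) → False := by
      intro x y hg hN hle h1 h2
      obtain ⟨q, hq⟩ := h.tie_cross x y o hle (npos x y hg)
        (le_antisymm h1 (nmin x y hg hN)) h2
      have := hmin x (x ^ (-1 : ℤ) * y) q (hg.zpow_mul (-1))
      rw [zpow_neg_one] at this
      omega
    intro x y hg hN hle
    have ix := ninv x
    have iy := ninv y
    by_cases ht : T.d o (y • o) < T.d (x⁻¹ • o) (y • o) ∧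
        T.d o (y • o) < T.d (x⁻¹ • o) (y⁻¹ • o)
    · exact main x y hg hN hle ht.1 ht.2
    · refine main x⁻¹ y hg.inv_left (by omega) (by omega) ?_ ?_
      · rw [inv_inv]
        by_contra hc
        apply ht
        constructor
        · by_contra hc'
          exact tie_same x y hg hle (by omega) (by omega)
        · by_contra hc'
          exact cross x y hg hN hle (by omega) (by omega)
      · rw [inv_inv]
        by_contra hc
        apply ht
        constructor
        · by_contra hc'
          exact cross x y⁻¹ hg.inv_right (by omega) (by omega) (by omega)
            (by rw [inv_inv]; omega)
        · by_contra hc'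
          exact tie_same x y⁻¹ hg.inv_right (by omega) (by omega) (by omega)
  rcases le_total (T.d o (x • o)) (T.d o (y • o)) with hl | hl
  · exact main2 x y hg hN hl
  · exact main2 y x hg.swap (by omega) hl

theorem main (h : PCAct G T) (o : X) (x y : G) :
    Commute x y ∨ Function.Injective (FreeGroup.lift ![x, y]) := by
  by_cases hc : Commute x y
  · exact Or.inl hc
  right
  by_cases h1 : ∃ x' y', PCGP x y x' y' ∧ ∃ p : X, x' • p = p
  · by_cases h2 : ∃ x' y', PCGP x y x' y' ∧ (∃ p : X, x' • p = p) ∧ ∃ p : X, y' • p = p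
    · obtain ⟨x', y', hg, ⟨p, hp⟩, q, hq⟩ := h2
      refine hg.inj (h.case_ell_ell x' y' p q hp hq ?_)
      rintro r ⟨hr1, hr2⟩
      refine hc (hg.comm (h.stab x' y' r hr1 ?_))
      rw [mul_smul, mul_smul]
      have : y'⁻¹ • r = r := by rw [inv_smul_eq_iff, hr2]
      rw [this, hr1, hr2]
    · obtain ⟨x', y', hg, p, hp⟩ := h1
      refine hg.inj (h.case_ell x' y' p hp (fun hh => hc (hg.comm hh)) ?_)
      intro k q hq
      exact h2 ⟨x', _, hg.mul_zpow k, ⟨p, hp⟩, q, hq⟩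
  · exact h.case_hyp x y o fun x' y' hg p hp => h1 ⟨x', y', hg, p, hp⟩

end PCAct

namespace PCFree

variable {S : Type*}

/-- Exponent sum. -/
def expo (S : Type*) : FreeGroup S →* Multiplicative ℤ :=
  FreeGroup.lift fun _ => Multiplicative.ofAdd 1

/-- Exponent sum as an integer. -/
def ex (w : FreeGroup S) : ℤ := Multiplicative.toAdd (expo S w)

theorem ex_mul (u v : FreeGroup S) : ex (u * v) = ex u + ex v := by simp [ex]
theorem ex_inv (u : FreeGroup S) : ex (u⁻¹) = - ex u := by simp [ex]

theorem ex_mk (l : List (S × Bool)) : ((l.length : ℤ) - ex (FreeGroup.mk l)) % 2 = 0 := by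
  induction l with
  | nil => rw [← FreeGroup.one_eq_mk]; simp [ex]
  | cons a l ih =>
    have : FreeGroup.mk (a :: l) = FreeGroup.mk [a] * FreeGroup.mk l := by
      rw [FreeGroup.mul_mk]; rfl
    rw [this, ex_mul]
    have : ex (FreeGroup.mk [a]) = 1 ∨ ex (FreeGroup.mk [a]) = -1 := by
      obtain ⟨s, b⟩ := a
      cases b
      · right; simp [ex, expo]
      · left; simp [ex, expo]
    push_cast [List.length_cons]
    omega

variable [DecidableEq S]

/-- Length of the longest common prefix. -/
def cpl : List (S × Bool) → List (S × Bool) → ℕ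
  | [], _ => 0
  | _ :: _, [] => 0
  | a :: l, b :: m => if a = b then cpl l m + 1 else 0

theorem cpl_comm (l m : List (S × Bool)) : cpl l m = cpl m l := by
  induction l generalizing m with
  | nil => cases m <;> simp [cpl]
  | cons a l ih =>
    cases m with
    | nil => simp [cpl]
    | cons b m =>
      simp only [cpl]
      by_cases h : a = b
      · simp [h, ih]
      · simp [h, Ne.symm h]

theorem cpl_ultra (l m n : List (S × Bool)) : cpl l m ≤ cpl l n ∨ cpl m n ≤ cpl l n := by
  induction l generalizing m n with
  | nil => simp [cpl]
  | cons a l ih =>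
    cases m with
    | nil => simp [cpl]
    | cons b m =>
      cases n with
      | nil => simp [cpl]
      | cons c n =>
        have := ih m n
        simp only [cpl]
        by_cases h1 : a = b <;> by_cases h2 : b = c
        · subst h1 h2; simpa using this
        · simp [h2]
        · simp [h1]
        · simp [h1]

theorem norm_cpl (l m : List (S × Bool)) (hl : FreeGroup.IsReduced l)
    (hm : FreeGroup.IsReduced m) :
    ((FreeGroup.mk l)⁻¹ * FreeGroup.mk m).norm + 2 * cpl l m = l.length + m.length := by
  induction l generalizing m with
  | nil =>
    have : (FreeGroup.mk ([] : List (S × Bool)))⁻¹ = 1 := by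
      rw [← FreeGroup.one_eq_mk, inv_one]
    rw [this, one_mul]
    simp [cpl, FreeGroup.norm, FreeGroup.toWord_mk, hm.reduce_eq]
  | cons a l ih =>
    cases m with
    | nil =>
      rw [← FreeGroup.one_eq_mk, mul_one, FreeGroup.norm_inv_eq]
      simp [cpl, FreeGroup.norm, FreeGroup.toWord_mk, (FreeGroup.IsReduced.reduce_eq hl)]
    | cons b m =>
      by_cases h : a = b
      · subst h
        have h1 : FreeGroup.IsReduced l := (List.isChain_cons.1 hl).2
        have h2 : FreeGroup.IsReduced m := (List.isChain_cons.1 hm).2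
        have h3 := ih m h1 h2
        have e : (FreeGroup.mk (a :: l))⁻¹ * FreeGroup.mk (a :: m) =
            (FreeGroup.mk l)⁻¹ * FreeGroup.mk m := by
          have : ∀ t : List (S × Bool), FreeGroup.mk (a :: t) = FreeGroup.mk [a] * FreeGroup.mk t :=
            fun t => by rw [FreeGroup.mul_mk]; rfl
          rw [this l, this m]; group
        rw [e]
        simp only [cpl, if_true, List.length_cons]
        omega
      · have h1 : FreeGroup.IsReduced (FreeGroup.invRev (a :: l)) := by
          rw [FreeGroup.isReduced_iff_reduce_eq, FreeGroup.reduce_invRev, (FreeGroup.IsReduced.reduce_eq hl)]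
        have h2 : FreeGroup.IsReduced (FreeGroup.invRev (a :: l) ++ b :: m) := by
          refine List.IsChain.append h1 hm ?_
          intro u hu v hv
          simp only [FreeGroup.invRev, List.map_cons, List.reverse_cons, List.getLast?_append,
            List.getLast?_singleton, Option.some_or, Option.mem_def, Option.some.injEq,
            List.head?_cons] at hu hv
          subst hu hv
          intro h3
          by_contra h4
          apply h
          refine Prod.ext h3 ?_
          revert h4
          cases a.2 <;> cases b.2 <;> simp
        rw [FreeGroup.inv_mk, FreeGroup.mul_mk, FreeGroup.norm, FreeGroup.toWord_mk, h2.reduce_eq]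
        simp [cpl, h]

theorem norm_eq (u v : FreeGroup S) :
    (u⁻¹ * v).norm + 2 * cpl u.toWord v.toWord = u.norm + v.norm := by
  have := norm_cpl u.toWord v.toWord FreeGroup.isReduced_toWord FreeGroup.isReduced_toWord
  rwa [FreeGroup.mk_toWord, FreeGroup.mk_toWord] at this

theorem norm_ex (u : FreeGroup S) : ((u.norm : ℤ) - ex u) % 2 = 0 := by
  have := ex_mk u.toWord
  rwa [FreeGroup.mk_toWord] at this

/-- The Cayley tree. -/
def tree (S : Type*) [DecidableEq S] : PCTree (FreeGroup S) where
  d u v := (u⁻¹ * v).norm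
  self p := by simp
  eq_of p q h := by
    rw [FreeGroup.norm_eq_zero] at h
    exact (inv_mul_eq_one.1 h)
  symm p q := by
    rw [← FreeGroup.norm_inv_eq]; simp
  four a b c e := by
    have tr : ∀ u v : FreeGroup S, u⁻¹ * v = (e⁻¹ * u)⁻¹ * (e⁻¹ * v) := by
      intro u v; group
    have key : ∀ a b c : FreeGroup S, (a⁻¹ * b).norm + c.norm ≤ (a⁻¹ * c).norm + b.norm ∨
        (a⁻¹ * b).norm + c.norm ≤ a.norm + (b⁻¹ * c).norm := by
      intro a b c
      have h1 := norm_eq a b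
      have h2 := norm_eq a c
      have h3 := norm_eq b c
      have h4 := cpl_ultra a.toWord c.toWord b.toWord
      have h5 := cpl_comm c.toWord b.toWord
      omega
    have := key (e⁻¹ * a) (e⁻¹ * b) (e⁻¹ * c)
    rw [← tr, ← tr, ← tr] at this
    have inv : ∀ u : FreeGroup S, (e⁻¹ * u).norm = (u⁻¹ * e).norm := by
      intro u; rw [← FreeGroup.norm_inv_eq]; simp
    rw [inv, inv, inv] at this
    exact this
  interval p q i hi := by
    set w := p⁻¹ * q with hw
    have hr : FreeGroup.IsReduced (w.toWord.take i ++ w.toWord.drop i) := by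
      rw [List.take_append_drop]; exact FreeGroup.isReduced_toWord
    have hm : FreeGroup.mk (w.toWord.take i) * FreeGroup.mk (w.toWord.drop i) = w := by
      rw [FreeGroup.mul_mk, List.take_append_drop, FreeGroup.mk_toWord]
    have hl : (FreeGroup.mk (w.toWord.take i)).norm = i := by
      rw [FreeGroup.norm, FreeGroup.toWord_mk,
        (FreeGroup.IsReduced.reduce_eq (List.IsChain.left_of_append hr)), List.length_take]
      exact min_eq_left hi
    have hd : (FreeGroup.mk (w.toWord.drop i)).norm + i = w.norm := by
      rw [FreeGroup.norm, FreeGroup.toWord_mk,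
        (FreeGroup.IsReduced.reduce_eq (List.IsChain.right_of_append hr)), List.length_drop]
      exact Nat.sub_add_cancel hi
    refine ⟨p * FreeGroup.mk (w.toWord.take i), ?_, ?_⟩
    · rw [inv_mul_cancel_left, hl]
    · rw [mul_inv_rev, mul_assoc, ← hw]
      nth_rewrite 2 [← hm]
      rw [inv_mul_cancel_left, hd]
  parity a b c := by
    have h1 := norm_ex (a⁻¹ * b)
    have h2 := norm_ex (b⁻¹ * c)
    have h3 := norm_ex (a⁻¹ * c)
    simp only [ex_mul, ex_inv] at h1 h2 h3
    omega

end PCFree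

namespace PCSemi

/-- The permutation action on a free group. -/
def phi (B S : Type*) [Group B] [MulAction B S] : B →* MulAut (FreeGroup S) where
  toFun b := FreeGroup.freeGroupCongr (MulAction.toPerm b)
  map_one' := by
    apply MulEquiv.toMonoidHom_injective
    ext s
    simp
  map_mul' a b := by
    apply MulEquiv.toMonoidHom_injective
    ext s
    simp [mul_smul]

variable {B S : Type*} [Group B] [MulAction B S]

theorem phi_of (b : B) (s : S) : phi B S b (FreeGroup.of s) = FreeGroup.of (b • s) := by
  simp [phi]

theorem phi_mk (b : B) (l : List (S × Bool)) :
    phi B S b (FreeGroup.mk l) = FreeGroup.mk (l.map fun p => (b • p.1, p.2)) := by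
  simp [phi]

theorem phi_ex (b : B) (w : FreeGroup S) : PCFree.ex (phi B S b w) = PCFree.ex w := by
  have : (PCFree.expo S).comp (phi B S b).toMonoidHom = PCFree.expo S := by
    ext s
    simp [PCFree.expo, phi_of]
  exact congrArg Multiplicative.toAdd (DFunLike.congr_fun this w)

theorem phi_toWord [DecidableEq S] (b : B) (w : FreeGroup S) :
    (phi B S b w).toWord = w.toWord.map fun p => (b • p.1, p.2) := by
  conv_lhs => rw [← FreeGroup.mk_toWord (x := w)]
  rw [phi_mk, FreeGroup.toWord_mk]
  apply FreeGroup.IsReduced.reduce_eq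
  have := FreeGroup.isReduced_toWord (x := w)
  unfold FreeGroup.IsReduced at this ⊢
  rw [List.isChain_map]
  simpa using this

theorem phi_norm [DecidableEq S] (b : B) (w : FreeGroup S) : (phi B S b w).norm = w.norm := by
  simp [FreeGroup.norm, phi_toWord]

theorem phi_root [DecidableEq S]
    (hr : ∀ (b : B) (s : S) (k : ℤ), k ≠ 0 → b ^ k • s = s → b • s = s)
    (b : B) (w : FreeGroup S) (k : ℤ) (hk : k ≠ 0) (h : phi B S (b ^ k) w = w) :
    phi B S b w = w := by
  apply FreeGroup.toWord_injective
  have h1 := congrArg FreeGroup.toWord h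
  rw [phi_toWord] at h1 ⊢
  have h2 : ∀ p ∈ w.toWord, ((b ^ k) • p.1, p.2) = p := by
    rw [← List.map_id w.toWord, List.map_map] at h1
    have := List.map_inj_left.1 h1
    simpa using this
  conv_rhs => rw [← List.map_id w.toWord]
  apply List.map_inj_left.2
  intro p hp
  have := congrArg Prod.fst (h2 p hp)
  exact Prod.ext (hr b p.1 k hk this) rfl

/-- The group. -/
abbrev SD (B S : Type*) [Group B] [MulAction B S] := FreeGroup S ⋊[phi B S] B

/-- Affine action on the tree. -/
@[reducible]
def act (B S : Type*) [Group B] [MulAction B S] : MulAction (SD B S) (FreeGroup S) where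
  smul g p := g.left * phi B S g.right p
  one_smul p := by
    change (1 : SD B S).left * phi B S (1 : SD B S).right p = p
    simp
  mul_smul g h p := by
    change (g * h).left * phi B S (g * h).right p =
      g.left * phi B S g.right (h.left * phi B S h.right p)
    simp [mul_assoc]

theorem commute_of_mem {G : Type*} [Group G] {H : Type*} [Group H] (f : G →* H) (x y : G)
    (hc : Commute (f x) (f y)) (g h : G) (hg : g ∈ Subgroup.closure {x, y})
    (hh : h ∈ Subgroup.closure {x, y}) : Commute (f g) (f h) := by
  have key : ∀ z : G, Commute (f z) (f x) → Commute (f z) (f y) →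
      ∀ h ∈ Subgroup.closure {x, y}, Commute (f z) (f h) := by
    intro z h1 h2 h hh
    induction hh using Subgroup.closure_induction with
    | mem w hw =>
      rcases hw with rfl | rfl
      · exact h1
      · exact h2
    | one => simp
    | mul a b _ _ ha hb => rw [map_mul]; exact ha.mul_right hb
    | inv a _ ha => rw [map_inv]; exact ha.inv_right
  exact key g (key x (Commute.refl _) hc g hg).symm (key y hc.symm (Commute.refl _) g hg).symm h hh

theorem dichotomy {B S : Type} [Group B] [MulAction B S]
    (hr : ∀ (b : B) (s : S) (k : ℤ), k ≠ 0 → b ^ k • s = s → b • s = s)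
    (x y : SD B S) (hc : Commute x.right y.right) :
    Commute x y ∨ Function.Injective (FreeGroup.lift ![x, y]) := by
  classical
  let _ := act B S
  have smul_def : ∀ (g : SD B S) (p : FreeGroup S), g • p = g.left * phi B S g.right p :=
    fun _ _ => rfl
  have zr : ∀ (g : SD B S) (k : ℤ), (g ^ k).right = g.right ^ k := fun g k =>
    map_zpow (SemidirectProduct.rightHom) g k
  let K : Subgroup (SD B S) := Subgroup.closure {x, y}
  have hcK : ∀ g h : K, Commute (g : SD B S).right (h : SD B S).right := fun g h =>
    commute_of_mem (SemidirectProduct.rightHom) x y hc g h g.2 h.2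
  have kdef : ∀ (g : K) (p : FreeGroup S), g • p = (g : SD B S) • p := fun _ _ => rfl
  have hact : PCAct K (PCFree.tree S) := by
    refine ⟨?_, ?_, ?_, ?_⟩
    · intro g p q
      change ((g • p)⁻¹ * (g • q)).norm = (p⁻¹ * q).norm
      rw [kdef, kdef, smul_def, smul_def, ← phi_norm (g : SD B S).right (p⁻¹ * q)]
      congr 1
      simp only [map_mul, map_inv]
      group
    · intro g p h1 h2
      change (p⁻¹ * (g • p)).norm = 1 at h1
      rw [kdef, smul_def] at h1
      have h3 := PCFree.norm_ex (p⁻¹ * ((g : SD B S).left * phi B S (g : SD B S).right p))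
      rw [h1] at h3
      have h4 := congrArg PCFree.ex h2
      rw [kdef, kdef, smul_def, smul_def] at h4
      simp only [PCFree.ex_mul, PCFree.ex_inv, phi_ex] at h3 h4
      omega
    · intro g o p k hk ho hp
      have ho' : g ^ k • o = o := PCAct.fix_zpow ho k
      rw [kdef, smul_def] at ho' hp ho ⊢
      rw [Subgroup.coe_zpow, zr] at ho' hp
      have h1 : phi B S ((g : SD B S).right ^ k) (o⁻¹ * p) = o⁻¹ * p := by
        rw [map_mul, map_inv]
        nth_rewrite 2 [← ho', ← hp]
        group
      have h2 := phi_root hr _ _ k hk h1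
      have h3 : p = o * (o⁻¹ * p) := by group
      rw [h3, map_mul, h2, ← mul_assoc, ho]
    · intro g h p hg hh
      have e : (h * g * h⁻¹ : K) = g := by
        have hr' : ((h * g * h⁻¹ : K) : SD B S).right = (g : SD B S).right := by
          have := (hcK h g).eq
          simp [this]
        apply Subtype.ext
        refine SemidirectProduct.ext ?_ hr'
        rw [kdef, smul_def] at hg hh
        rw [hr'] at hh
        exact mul_right_cancel (hh.trans hg.symm)
      rw [mul_inv_eq_iff_eq_mul] at e
      exact e.symm
  have hx : x ∈ K := Subgroup.subset_closure (by simp)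
  have hy : y ∈ K := Subgroup.subset_closure (by simp)
  rcases hact.main 1 ⟨x, hx⟩ ⟨y, hy⟩ with h | h
  · left
    exact congrArg Subtype.val h.eq
  · right
    have e : FreeGroup.lift ![x, y] =
        K.subtype.comp (FreeGroup.lift ![(⟨x, hx⟩ : K), ⟨y, hy⟩]) := by
      refine FreeGroup.ext_hom _ _ fun i => ?_
      fin_cases i <;> simp
    rw [e, MonoidHom.coe_comp]
    exact Function.Injective.comp K.subtype_injective h

end PCSemi

namespace PCR

/-- Generator. -/
def gen {V : Type*} (Γ : SimpleGraph V) (v : V) : Raag Γ := PresentedGroup.of v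

theorem gen_comm {V : Type*} {Γ : SimpleGraph V} {u v : V} (h : Γ.Adj u v) :
    Commute (gen Γ u) (gen Γ v) := by
  have : (PresentedGroup.mk (raagRels Γ)) (FreeGroup.of u * FreeGroup.of v * (FreeGroup.of u)⁻¹ *
      (FreeGroup.of v)⁻¹) = 1 := PresentedGroup.one_of_mem ⟨u, v, h, rfl⟩
  simp only [map_mul, map_inv] at this
  rw [mul_inv_eq_one, mul_inv_eq_iff_eq_mul] at this
  exact this

/-- Homs out of a partially commutative group. -/
def rhom {V G : Type*} [Group G] {Γ : SimpleGraph V} (f : V → G)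
    (hf : ∀ u v, Γ.Adj u v → Commute (f u) (f v)) : Raag Γ →* G :=
  PresentedGroup.toGroup (f := f) (by
    rintro r ⟨u, v, h, rfl⟩
    simp only [map_mul, map_inv, FreeGroup.lift_apply_of]
    rw [mul_inv_eq_one, mul_inv_eq_iff_eq_mul]
    exact hf u v h)

theorem rhom_gen {V G : Type*} [Group G] {Γ : SimpleGraph V} (f : V → G)
    (hf : ∀ u v, Γ.Adj u v → Commute (f u) (f v)) (v : V) : rhom f hf (gen Γ v) = f v :=
  PresentedGroup.toGroup.of _

theorem rext {V G : Type*} [Group G] {Γ : SimpleGraph V} {f g : Raag Γ →* G}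
    (h : ∀ v, f (gen Γ v) = g (gen Γ v)) : f = g := PresentedGroup.ext h

theorem gen_closure {V : Type*} (Γ : SimpleGraph V) :
    Subgroup.closure (Set.range (gen Γ)) = ⊤ := PresentedGroup.closure_range_of _

/-- Inclusion. -/
def incl {V W : Type*} (Γ : SimpleGraph V) (j : W → V) : Raag (Γ.comap j) →* Raag Γ :=
  rhom (fun w => gen Γ (j w)) fun _ _ h => gen_comm h

theorem incl_gen {V W : Type*} (Γ : SimpleGraph V) (j : W → V) (w : W) :
    incl Γ j (gen _ w) = gen Γ (j w) := rhom_gen _ _ _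

theorem incl_inj {V W : Type*} (Γ : SimpleGraph V) (j : W → V) (hj : Function.Injective j) :
    Function.Injective (incl Γ j) := by
  classical
  let r : Raag Γ →* Raag (Γ.comap j) :=
    rhom (fun v => if h : ∃ w, j w = v then gen _ h.choose else 1) (by
      intro u v h
      by_cases hu : ∃ w, j w = u
      · by_cases hv : ∃ w, j w = v
        · simp only [hu, hv, dif_pos]
          apply gen_comm
          rw [SimpleGraph.comap_adj, hu.choose_spec, hv.choose_spec]
          exact h
        · simp [hv]
      · simp [hu])
  have : r.comp (incl Γ j) = MonoidHom.id _ := by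
    apply rext
    intro w
    have hw : ∃ w', j w' = j w := ⟨w, rfl⟩
    rw [MonoidHom.comp_apply, incl_gen, rhom_gen, dif_pos hw, hj hw.choose_spec]
    rfl
  exact Function.LeftInverse.injective (g := r) fun x => DFunLike.congr_fun this x

/-- The properties shown by induction. -/
def Good (G : Type) [Group G] : Prop :=
  (∀ x y : G, Commute x y ∨ Function.Injective (FreeGroup.lift ![x, y])) ∧
    ∀ (x : G) (k : ℤ), k ≠ 0 → x ^ k = 1 → x = 1

theorem lift_map {G H : Type*} [Group G] [Group H] (f : G →* H) (x y : G) :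
    FreeGroup.lift ![f x, f y] = f.comp (FreeGroup.lift ![x, y]) := by
  refine FreeGroup.ext_hom _ _ fun i => ?_
  fin_cases i <;> simp

theorem Good.of_inj {G H : Type} [Group G] [Group H] (f : G →* H) (hf : Function.Injective f)
    (h : Good H) : Good G := by
  refine ⟨fun x y => ?_, fun x k hk hx => ?_⟩
  · rcases h.1 (f x) (f y) with h1 | h1
    · left
      apply hf
      rw [map_mul, map_mul]
      exact h1
    · right
      rw [lift_map, MonoidHom.coe_comp] at h1
      exact Function.Injective.of_comp h1
  · apply hf
    rw [map_one]
    exact h.2 _ k hk (by rw [← map_zpow, hx, map_one])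

theorem Good.roots {G : Type} [Group G] (h : Good G) (a b : G) (k : ℤ) (hk : k ≠ 0)
    (hab : a ^ k = b ^ k) : a = b := by
  rcases h.1 a b with h1 | h1
  · rw [← mul_inv_eq_one]
    apply h.2 _ k hk
    rw [h1.inv_right.mul_zpow, hab, inv_zpow, mul_inv_cancel]
  · exfalso
    have h2 : (FreeGroup.of (0 : Fin 2)) ^ k = FreeGroup.of 1 ^ k := by
      apply h1
      simpa using hab
    have h3 := zpow_left_injective hk h2
    exact absurd (FreeGroup.of_injective h3) (by decide)

theorem good_semi {B S : Type} [Group B] [MulAction B S] (hB : Good B)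
    (hr : ∀ (b : B) (s : S) (k : ℤ), k ≠ 0 → b ^ k • s = s → b • s = s) :
    Good (PCSemi.SD B S) := by
  refine ⟨fun x y => ?_, fun x k hk hx => ?_⟩
  · rcases hB.1 x.right y.right with h1 | h1
    · exact PCSemi.dichotomy hr x y h1
    · right
      have := lift_map (SemidirectProduct.rightHom : PCSemi.SD B S →* B) x y
      rw [SemidirectProduct.rightHom_eq_right] at this
      rw [this, MonoidHom.coe_comp] at h1
      exact Function.Injective.of_comp h1
  · have h1 : x.right = 1 := by
      apply hB.2 _ k hk
      have := congrArg (SemidirectProduct.rightHom : PCSemi.SD B S →* B) hx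
      rw [map_zpow, map_one] at this
      exact this
    have h2 : x = SemidirectProduct.inl x.left := by
      ext <;> simp [h1]
    rw [h2, ← map_zpow] at hx
    have h3 : x.left ^ k = 1 := SemidirectProduct.inl_injective (by rw [hx, map_one])
    have h4 : x.left = 1 := zpow_left_injective hk (by simpa using h3)
    rw [h2, h4, map_one]

theorem good_option {W : Type} (Γ : SimpleGraph (Option W)) (hB : Good (Raag (Γ.comap some))) :
    Good (Raag Γ) := by
  classical
  let C : Subgroup (Raag (Γ.comap some)) :=
    Subgroup.closure {g | ∃ u : W, Γ.Adj none (some u) ∧ g = gen _ u}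
  have hC : ∀ u, Γ.Adj none (some u) → gen (Γ.comap some) u ∈ C := fun u hu =>
    Subgroup.subset_closure ⟨u, hu, rfl⟩
  -- retraction
  let r : Raag (Γ.comap some) →* Raag (Γ.comap some) :=
    rhom (fun u => if Γ.Adj none (some u) then gen _ u else 1) (by
      intro u v h
      split_ifs
      · exact gen_comm h
      all_goals simp)
  have r1 : ∀ c ∈ C, r c = c := by
    intro c hc
    have : C ≤ r.eqLocus (MonoidHom.id _) := by
      rw [Subgroup.closure_le]
      rintro _ ⟨u, hu, rfl⟩
      change r (gen _ u) = gen _ u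
      rw [rhom_gen, if_pos hu]
    exact this hc
  have r2 : ∀ b, r b ∈ C := by
    intro b
    have : (⊤ : Subgroup _) ≤ C.comap r := by
      rw [← gen_closure, Subgroup.closure_le]
      rintro _ ⟨u, rfl⟩
      change r (gen _ u) ∈ C
      rw [rhom_gen]
      split_ifs with hu
      · exact hC u hu
      · exact one_mem _
    exact this (Subgroup.mem_top b)
  have hroot : ∀ (b : Raag (Γ.comap some)) (k : ℤ), k ≠ 0 → b ^ k ∈ C → b ∈ C := by
    intro b k hk hb
    have : r b = b := hB.roots _ _ k hk (by rw [← map_zpow, r1 _ hb])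
    rw [← this]
    exact r2 b
  have hr : ∀ (b : Raag (Γ.comap some)) (s : Raag (Γ.comap some) ⧸ C) (k : ℤ), k ≠ 0 →
      b ^ k • s = s → b • s = s := by
    intro b s k hk
    induction s using QuotientGroup.induction_on with
    | H a =>
      intro h
      rw [MulAction.Quotient.smul_coe, eq_comm, QuotientGroup.eq, smul_eq_mul] at h ⊢
      apply hroot _ k hk
      have : (a⁻¹ * (b * a)) ^ k = a⁻¹ * (b ^ k * a) := by
        have := conj_zpow (a := a⁻¹) (b := b) (i := k)
        simpa [mul_assoc] using this
      rw [this]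
      exact h
  let t : Raag Γ := gen Γ none
  let i := incl Γ some
  have hit : ∀ c ∈ C, Commute (i c) t := by
    intro c hc
    have : C ≤ (Subgroup.centralizer {t}).comap i := by
      rw [Subgroup.closure_le]
      rintro _ ⟨u, hu, rfl⟩
      change i (gen _ u) ∈ Subgroup.centralizer {t}
      rw [Subgroup.mem_centralizer_singleton_iff]
      change incl Γ some (gen _ u) * t = t * incl Γ some (gen _ u)
      rw [incl_gen]
      exact (gen_comm hu).symm
    have := this hc
    rw [Subgroup.mem_comap, Subgroup.mem_centralizer_singleton_iff] at this
    exact this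
  let f : Raag Γ →* PCSemi.SD (Raag (Γ.comap some)) (Raag (Γ.comap some) ⧸ C) :=
    rhom (fun o => o.elim (SemidirectProduct.inl (FreeGroup.of ((1 : Raag (Γ.comap some)) :
      Raag (Γ.comap some) ⧸ C))) fun u => SemidirectProduct.inr (gen _ u)) (by
      have key : ∀ u, Γ.Adj none (some u) → Commute (SemidirectProduct.inr (gen _ u))
          (SemidirectProduct.inl (FreeGroup.of ((1 : Raag (Γ.comap some)) :
            Raag (Γ.comap some) ⧸ C)) :
            PCSemi.SD (Raag (Γ.comap some)) (Raag (Γ.comap some) ⧸ C)) := by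
        intro u hu
        have h1 := SemidirectProduct.inl_aut (φ := PCSemi.phi (Raag (Γ.comap some))
          (Raag (Γ.comap some) ⧸ C)) (gen _ u) (FreeGroup.of ((1 : Raag (Γ.comap some)) :
            Raag (Γ.comap some) ⧸ C))
        rw [PCSemi.phi_of, MulAction.Quotient.smul_coe, smul_eq_mul, mul_one,
          (QuotientGroup.eq (s := C) (a := gen _ u) (b := 1)).2
            (by simpa using hC u hu), map_inv, eq_mul_inv_iff_mul_eq] at h1
        exact h1.symm
      intro u v h
      rcases u with _ | u <;> rcases v with _ | v
      · exact absurd h (Γ.loopless.irrefl _)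
      · exact (key v h).symm
      · exact key u h.symm
      · exact Commute.map (gen_comm (Γ := Γ.comap some) h) SemidirectProduct.inr)
  let fn0 : Raag (Γ.comap some) ⧸ C → Raag Γ := fun s => Quotient.liftOn' s
    (fun b => i b * t * (i b)⁻¹) (by
      intro a b hab
      rw [QuotientGroup.leftRel_apply] at hab
      have h1 := (hit _ hab).eq
      have h2 : i b = i a * i (a⁻¹ * b) := by rw [← map_mul, mul_inv_cancel_left]
      rw [h2, mul_assoc (i a) (i (a⁻¹ * b)) t, h1]
      group)
  have fn0_mk : ∀ b : Raag (Γ.comap some), fn0 (b : Raag (Γ.comap some) ⧸ C) =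
    i b * t * (i b)⁻¹ := fun _ => rfl
  let g : PCSemi.SD (Raag (Γ.comap some)) (Raag (Γ.comap some) ⧸ C) →* Raag Γ :=
    SemidirectProduct.lift (FreeGroup.lift fn0) i (by
      intro b
      refine FreeGroup.ext_hom _ _ fun s => ?_
      induction s using QuotientGroup.induction_on with
      | H a =>
        simp only [MonoidHom.comp_apply, MulEquiv.coe_toMonoidHom, PCSemi.phi_of,
          FreeGroup.lift_apply_of, MulAction.Quotient.smul_coe, smul_eq_mul, MulAut.conj_apply]
        rw [fn0_mk, fn0_mk, map_mul]
        group)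
  have hgf : g.comp f = MonoidHom.id _ := by
    apply rext
    intro o
    rw [MonoidHom.comp_apply, rhom_gen]
    rcases o with _ | u
    · change g (SemidirectProduct.inl _) = _
      rw [SemidirectProduct.lift_inl, FreeGroup.lift_apply_of, fn0_mk]
      simp [t]
    · change g (SemidirectProduct.inr _) = _
      rw [SemidirectProduct.lift_inr]
      exact incl_gen _ _ _
  have hf : Function.Injective f :=
    Function.LeftInverse.injective (g := g) fun x => DFunLike.congr_fun hgf x
  exact Good.of_inj f hf (good_semi hB hr)

theorem good_finite (V : Type) [Finite V] : ∀ Γ : SimpleGraph V, Good (Raag Γ) := by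
  induction V using Finite.induction_empty_option with
  | of_equiv e h =>
    rename_i α β
    intro Γ
    have h1 := h (Γ.comap e)
    have h2 : (Γ.comap e).comap e.symm = Γ := by
      ext a b; simp
    have h3 := incl_inj (Γ.comap e) e.symm e.symm.injective
    rw [← h2]
    exact Good.of_inj _ h3 h1
  | h_empty =>
    intro Γ
    have : Subsingleton (Raag Γ) := by
      refine ⟨fun a b => ?_⟩
      have : MonoidHom.id (Raag Γ) = 1 := rext fun v => v.elim
      have h1 := DFunLike.congr_fun this a
      have h2 := DFunLike.congr_fun this b
      exact h1.trans h2.symm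
    exact ⟨fun x y => Or.inl (Subsingleton.elim _ _), fun x k _ _ => Subsingleton.elim _ _⟩
  | h_option h =>
    intro Γ
    exact good_option Γ (h _)

theorem good_all {V : Type} (Γ : SimpleGraph V) : Good (Raag Γ) := by
  classical
  -- every element lives on a finite support
  have supp : ∀ x : Raag Γ, ∃ s : Finset V,
      x ∈ Subgroup.closure (gen Γ '' (s : Set V)) := by
    intro x
    have hx : x ∈ Subgroup.closure (Set.range (gen Γ)) := by rw [gen_closure]; trivial
    induction hx using Subgroup.closure_induction with
    | mem w hw =>
      obtain ⟨v, rfl⟩ := hw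
      exact ⟨{v}, Subgroup.subset_closure ⟨v, by simp, rfl⟩⟩
    | one => exact ⟨∅, one_mem _⟩
    | mul a b _ _ ha hb =>
      obtain ⟨s, hs⟩ := ha
      obtain ⟨t, ht⟩ := hb
      refine ⟨s ∪ t, mul_mem ?_ ?_⟩
      · exact Subgroup.closure_mono (Set.image_mono (by simp)) hs
      · exact Subgroup.closure_mono (Set.image_mono (by simp)) ht
    | inv a _ ha =>
      obtain ⟨s, hs⟩ := ha
      exact ⟨s, inv_mem hs⟩
  have ran : ∀ (s : Finset V) (x : Raag Γ), x ∈ Subgroup.closure (gen Γ '' (s : Set V)) →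
      ∃ x', incl Γ (Subtype.val : s → V) x' = x := by
    intro s x hx
    have : Subgroup.closure (gen Γ '' (s : Set V)) ≤ (incl Γ (Subtype.val : s → V)).range := by
      rw [Subgroup.closure_le]
      rintro _ ⟨v, hv, rfl⟩
      exact ⟨gen _ ⟨v, hv⟩, incl_gen _ _ _⟩
    exact this hx
  refine ⟨fun x y => ?_, fun x k hk hx => ?_⟩
  · obtain ⟨s, hs⟩ := supp x
    obtain ⟨t, ht⟩ := supp y
    obtain ⟨x', rfl⟩ := ran (s ∪ t) x (Subgroup.closure_mono (Set.image_mono (by simp)) hs)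
    obtain ⟨y', rfl⟩ := ran (s ∪ t) y (Subgroup.closure_mono (Set.image_mono (by simp)) ht)
    rcases (good_finite _ (Γ.comap (Subtype.val : ↥(s ∪ t) → V))).1 x' y' with h | h
    · exact Or.inl (h.map _)
    · right
      rw [lift_map, MonoidHom.coe_comp]
      exact (incl_inj Γ _ Subtype.val_injective).comp h
  · obtain ⟨s, hs⟩ := supp x
    obtain ⟨x', rfl⟩ := ran s x hs
    have := (good_finite _ (Γ.comap (Subtype.val : s → V))).2 x' k hk
      (incl_inj Γ _ Subtype.val_injective (by rw [map_zpow, hx, map_one]))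
    rw [this, map_one]

end PCR

namespace PCR

/-- A commutative torsion-free group generated by two elements embeds in `ℤ²`. -/
theorem ab_coords (A : Type) [CommGroup A] (ht : ∀ (x : A) (k : ℤ), k ≠ 0 → x ^ k = 1 → x = 1)
    (a b : A) (hab : Subgroup.closure {a, b} = ⊤) :
    ∃ c0 c1 : A →* Multiplicative ℤ, ∀ x, c0 x = 1 → c1 x = 1 → x = 1 := by
  classical
  have hs : Submodule.span ℤ (Set.range ![Additive.ofMul a, Additive.ofMul b]) = ⊤ := by
    rw [eq_top_iff]
    rintro x -
    have hx : Additive.toMul x ∈ Subgroup.closure {a, b} := by rw [hab]; trivial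
    have : ∀ y ∈ Subgroup.closure {a, b}, Additive.ofMul y ∈
        Submodule.span ℤ (Set.range ![Additive.ofMul a, Additive.ofMul b]) := by
      intro y hy
      induction hy using Subgroup.closure_induction with
      | mem w hw =>
        apply Submodule.subset_span
        rcases hw with rfl | rfl
        · exact ⟨0, rfl⟩
        · exact ⟨1, rfl⟩
      | one => exact zero_mem _
      | mul u v _ _ hu hv => exact add_mem hu hv
      | inv u _ hu => exact neg_mem hu
    exact this _ hx
  have hfin : Module.Finite ℤ (Additive A) :=
    ⟨⟨Finset.univ.image ![Additive.ofMul a, Additive.ofMul b], by simpa using hs⟩⟩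
  have htf : Module.IsTorsionFree ℤ (Additive A) := by
    rw [Module.isTorsionFree_iff_smul_eq_zero]
    intro k m hm
    by_cases hk : k = 0
    · exact Or.inl hk
    · exact Or.inr (ht (Additive.toMul m) k hk hm)
  have hfree : Module.Free ℤ (Additive A) := inferInstance
  let bs := Module.finBasis ℤ (Additive A)
  have hn : Module.finrank ℤ (Additive A) ≤ 2 := by
    have := finrank_range_le_card (R := ℤ) ![Additive.ofMul a, Additive.ofMul b]
    rw [Set.finrank, hs, finrank_top] at this
    simpa using this
  let c : ℕ → A →* Multiplicative ℤ := fun i =>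
    if h : i < Module.finrank ℤ (Additive A) then
      AddMonoidHom.toMultiplicativeRight (bs.coord ⟨i, h⟩).toAddMonoidHom else 1
  refine ⟨c 0, c 1, fun x h0 h1 => ?_⟩
  have : bs.repr (Additive.ofMul x) = 0 := by
    ext i
    obtain ⟨i, hi⟩ := i
    have hc : c i x = 1 := by
      have : i = 0 ∨ i = 1 := by omega
      rcases this with rfl | rfl
      · exact h0
      · exact h1
    simp only [c, dif_pos hi] at hc
    exact hc
  rw [map_eq_zero_iff _ bs.repr.injective] at this
  exact this

/-- The universal graph: one edge and an isolated vertex. -/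
def Del : SimpleGraph (Fin 3) where
  Adj u v := (u = 0 ∧ v = 1) ∨ (u = 1 ∧ v = 0)
  symm := ⟨fun u v h => by tauto⟩
  loopless := ⟨fun u h => by
    rcases h with ⟨h1, h2⟩ | ⟨h1, h2⟩ <;> rw [h1] at h2 <;> exact absurd h2 (by decide)⟩

theorem free_in : ∃ f : FreeGroup (Fin 2) →* Raag Del, Function.Injective f := by
  refine ⟨FreeGroup.lift ![gen Del 0, gen Del 2], ?_⟩
  let r : Raag Del →* FreeGroup (Fin 2) := rhom ![FreeGroup.of 0, 1, FreeGroup.of 1] (by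
    rintro u v (⟨rfl, rfl⟩ | ⟨rfl, rfl⟩)
    · simp
    · simp)
  have : r.comp (FreeGroup.lift ![gen Del 0, gen Del 2]) = MonoidHom.id _ := by
    refine FreeGroup.ext_hom _ _ fun i => ?_
    fin_cases i
    · simp [r, rhom_gen]
    · simp [r, rhom_gen]
  exact Function.LeftInverse.injective (g := r) fun x => DFunLike.congr_fun this x

theorem ab_in : ∃ f : Multiplicative ℤ × Multiplicative ℤ →* Raag Del, Function.Injective f := by
  have hcom : Commute (gen Del 0) (gen Del 1) := gen_comm (Or.inl ⟨rfl, rfl⟩)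
  let f : Multiplicative ℤ × Multiplicative ℤ →* Raag Del :=
    MonoidHom.noncommCoprod (zpowersHom _ (gen Del 0)) (zpowersHom _ (gen Del 1)) (by
      intro m n
      exact hcom.zpow_zpow _ _)
  refine ⟨f, ?_⟩
  let r : Raag Del →* Multiplicative ℤ × Multiplicative ℤ :=
    rhom ![(Multiplicative.ofAdd 1, 1), (1, Multiplicative.ofAdd 1), 1] (by
      intro u v _
      exact Commute.all _ _)
  have h0 : r (gen Del 0) = (Multiplicative.ofAdd 1, 1) := rhom_gen _ _ _
  have h1 : r (gen Del 1) = (1, Multiplicative.ofAdd 1) := rhom_gen _ _ _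
  have : r.comp f = MonoidHom.id _ := by
    refine MonoidHom.ext ?_
    rintro ⟨m, n⟩
    change r (gen Del 0 ^ (Multiplicative.toAdd m) * gen Del 1 ^ (Multiplicative.toAdd n)) = (m, n)
    rw [map_mul, map_zpow, map_zpow, h0, h1]
    ext <;> simp [← ofAdd_zsmul]
  exact Function.LeftInverse.injective (g := r) fun x => DFunLike.congr_fun this x

end PCR

theorem exists_two_universal_pc_group :
    ∃ (m : ℕ) (Δ : SimpleGraph (Fin m)),
      ∀ (V : Type) (Γ : SimpleGraph V) (K : Subgroup (Raag Γ)),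
        (∃ a b : Raag Γ, K = Subgroup.closure ({a, b} : Set (Raag Γ))) →
        ∃ φ : K →* Raag Δ, Function.Injective φ := by
  refine ⟨3, PCR.Del, ?_⟩
  rintro V Γ K ⟨a, b, rfl⟩
  have ha : a ∈ Subgroup.closure {a, b} := Subgroup.subset_closure (by simp)
  have hb : b ∈ Subgroup.closure {a, b} := Subgroup.subset_closure (by simp)
  rcases (PCR.good_all Γ).1 a b with h | h
  · -- abelian case
    have hcomm : ∀ x y : Subgroup.closure {a, b}, x * y = y * x := fun x y =>
      Subtype.ext (PCSemi.commute_of_mem (MonoidHom.id _) a b h x y x.2 y.2).eq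
    let _ : CommGroup (Subgroup.closure {a, b}) :=
      { (inferInstance : Group (Subgroup.closure {a, b})) with mul_comm := hcomm }
    obtain ⟨c0, c1, hc⟩ := PCR.ab_coords (Subgroup.closure {a, b})
      (fun x k hk hx => Subtype.ext ((PCR.good_all Γ).2 x k hk (by
        have := congrArg Subtype.val hx
        simpa using this)))
      ⟨a, ha⟩ ⟨b, hb⟩ (by
        rw [eq_top_iff]
        have h1 := Subgroup.closure_closure_coe_preimage (k := {a, b})
        rw [← h1, Subgroup.closure_le]
        rintro ⟨x, hx⟩ hx'
        apply Subgroup.subset_closure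
        rcases hx' with hx' | hx'
        · left; exact Subtype.ext hx'
        · right; exact Subtype.ext hx')
    obtain ⟨f, hf⟩ := PCR.ab_in
    refine ⟨f.comp (c0.prod c1), ?_⟩
    rw [MonoidHom.coe_comp]
    refine hf.comp ?_
    rw [injective_iff_map_eq_one]
    intro x hx
    rw [MonoidHom.prod_apply, Prod.mk_eq_one] at hx
    exact hc x hx.1 hx.2
  · -- free case
    obtain ⟨f, hf⟩ := PCR.free_in
    have hrange : (FreeGroup.lift ![a, b]).range = Subgroup.closure {a, b} := by
      rw [FreeGroup.range_lift_eq_closure]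
      congr 1
      ext x
      simp [eq_comm, or_comm]
    let e := MonoidHom.ofInjective h
    let e' : Subgroup.closure {a, b} →* FreeGroup (Fin 2) :=
      e.symm.toMonoidHom.comp (MulEquiv.subgroupCongr hrange.symm).toMonoidHom
    refine ⟨f.comp e', ?_⟩
    rw [MonoidHom.coe_comp]
    exact hf.comp (e.symm.injective.comp (MulEquiv.subgroupCongr hrange.symm).injective)
end
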